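/- arXiv:2311.11956 — 5 statements merged into one kernel-verified Lean document; each statement's English description precedes it below -/
import Mathlib

section
/- Let ψ be increasing with continuous positive derivative ψ' on [θ₁,T₁]×-relevant intervals, 0 < μ₁, μ₂ < 1, and let φ, ϕ : [θ₁,T₁]×[θ₂,T₂] → ℝ be continuous. Then ∫_{θ₁}^{T₁}∫_{θ₂}^{T₂} (I_θ^{μ;ψ}φ)(ξ₁,ξ₂) ϕ(ξ₁,ξ₂) dξ₂ dξ₁ = ∫_{θ₁}^{T₁}∫_{θ₂}^{T₂} φ(ξ₁,ξ₂) ψ'(ξ₁)ψ'(ξ₂) (I_T^{μ;ψ}(ϕ/(ψ'·ψ')))(ξ₁,ξ₂) dξ₂ dξ₁, i.e. the left and right two-variable ψ-Riemann–Liouville fractional integrals are adjoint to each other (fractional integration by parts). -/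
open intervalIntegral

/-- The left two-variable `ψ`-Riemann–Liouville fractional integral of order `(μ₁, μ₂)`
with base point `(θ₁, θ₂)`:
`(I_θ^{μ;ψ} f)(ξ₁,ξ₂) = (1/(Γ(μ₁)Γ(μ₂))) ∫_{θ₁}^{ξ₁}∫_{θ₂}^{ξ₂}
  ψ'(s₁)ψ'(s₂)(ψ(ξ₁)−ψ(s₁))^{μ₁−1}(ψ(ξ₂)−ψ(s₂))^{μ₂−1} f(s₁,s₂) ds₂ ds₁`. -/
noncomputable def leftFracInt (ψ ψ' : ℝ → ℝ) (μ₁ μ₂ θ₁ θ₂ : ℝ) (f : ℝ → ℝ → ℝ)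
    (ξ₁ ξ₂ : ℝ) : ℝ :=
  (1 / (Real.Gamma μ₁ * Real.Gamma μ₂)) *
    ∫ s₁ in θ₁..ξ₁, ∫ s₂ in θ₂..ξ₂,
      ψ' s₁ * ψ' s₂ * (ψ ξ₁ - ψ s₁) ^ (μ₁ - 1) * (ψ ξ₂ - ψ s₂) ^ (μ₂ - 1) * f s₁ s₂

/-- The right two-variable `ψ`-Riemann–Liouville fractional integral of order `(μ₁, μ₂)`
with endpoint `(T₁, T₂)`:
`(I_T^{μ;ψ} f)(ξ₁,ξ₂) = (1/(Γ(μ₁)Γ(μ₂))) ∫_{ξ₁}^{T₁}∫_{ξ₂}^{T₂}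
  ψ'(s₁)ψ'(s₂)(ψ(s₁)−ψ(ξ₁))^{μ₁−1}(ψ(s₂)−ψ(ξ₂))^{μ₂−1} f(s₁,s₂) ds₂ ds₁`. -/
noncomputable def rightFracInt (ψ ψ' : ℝ → ℝ) (μ₁ μ₂ T₁ T₂ : ℝ) (f : ℝ → ℝ → ℝ)
    (ξ₁ ξ₂ : ℝ) : ℝ :=
  (1 / (Real.Gamma μ₁ * Real.Gamma μ₂)) *
    ∫ s₁ in ξ₁..T₁, ∫ s₂ in ξ₂..T₂,
      ψ' s₁ * ψ' s₂ * (ψ s₁ - ψ ξ₁) ^ (μ₁ - 1) * (ψ s₂ - ψ ξ₂) ^ (μ₂ - 1) * f s₁ s₂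

/-!
Write the left integral as integration against a kernel `K x s`, set to zero unless `s₁ < x₁` and
`s₂ < x₂`; then `ψ'(x₁) ψ'(x₂)` times the right integral of `g / (ψ' · ψ')` is integration against
the transposed kernel, and the theorem is Fubini's theorem for `g x * K x s * f s`. Since
`ψ'(s) (ψ(x) - ψ(s)) ^ (μ - 1)` is the `s`-derivative of `-(ψ(x) - ψ(s)) ^ μ / μ`, the rows of `K`
have bounded mass, which gives the absolute convergence for bounded `f` and integrable `g`.
-/

open MeasureTheory Set Function
open scoped ENNReal

section RowBoundedKernel

variable {α β α₁ α₂ β₁ β₂ 𝕜 : Type*} [MeasurableSpace α] [MeasurableSpace β]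
  [MeasurableSpace α₁] [MeasurableSpace α₂] [MeasurableSpace β₁] [MeasurableSpace β₂] [RCLike 𝕜]

/-- A measurable integral kernel `k x y` whose rows `k x` have, for almost every `x`, an `L¹` norm
below a common bound. These are the kernels of absolutely convergent integral operators from `L^∞`
to `L^∞`, and `L¹` functions can be integrated against their transposes. -/
structure IsRowBoundedKernel (k : α → β → 𝕜) (μ : Measure α) (ν : Measure β) : Prop where
  aestronglyMeasurable : AEStronglyMeasurable (uncurry k) (μ.prod ν)
  integrable_row : ∀ᵐ x ∂μ, Integrable (k x) ν
  exists_integral_norm_le : ∃ M, ∀ᵐ x ∂μ, ∫ y, ‖k x y‖ ∂ν ≤ M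

namespace IsRowBoundedKernel

theorem tensor {μ₁ : Measure α₁} {μ₂ : Measure α₂} {ν₁ : Measure β₁} {ν₂ : Measure β₂}
    [SFinite μ₁] [SFinite μ₂] [SFinite ν₁] [SFinite ν₂] {k₁ : α₁ → β₁ → 𝕜} {k₂ : α₂ → β₂ → 𝕜}
    (hk₁ : IsRowBoundedKernel k₁ μ₁ ν₁) (hk₂ : IsRowBoundedKernel k₂ μ₂ ν₂) :
    IsRowBoundedKernel (fun x y => k₁ x.1 y.1 * k₂ x.2 y.2) (μ₁.prod μ₂) (ν₁.prod ν₂) where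
  aestronglyMeasurable :=
    (hk₁.aestronglyMeasurable.comp_quasiMeasurePreserving
      (QuasiMeasurePreserving.prodMap Measure.quasiMeasurePreserving_fst
        Measure.quasiMeasurePreserving_fst)).mul
    (hk₂.aestronglyMeasurable.comp_quasiMeasurePreserving
      (QuasiMeasurePreserving.prodMap Measure.quasiMeasurePreserving_snd
        Measure.quasiMeasurePreserving_snd))
  integrable_row := by
    filter_upwards [Measure.quasiMeasurePreserving_fst.ae hk₁.integrable_row,
      Measure.quasiMeasurePreserving_snd.ae hk₂.integrable_row] with x h₁ h₂
    exact h₁.mul_prod h₂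
  exists_integral_norm_le := by
    obtain ⟨M₁, hM₁⟩ := hk₁.exists_integral_norm_le
    obtain ⟨M₂, hM₂⟩ := hk₂.exists_integral_norm_le
    refine ⟨M₁ * M₂, ?_⟩
    filter_upwards [Measure.quasiMeasurePreserving_fst.ae hM₁,
      Measure.quasiMeasurePreserving_snd.ae hM₂] with x h₁ h₂
    simp only [norm_mul]
    rw [integral_prod_mul (fun y => ‖k₁ x.1 y‖) (fun y => ‖k₂ x.2 y‖)]
    have norm_row_nonneg : 0 ≤ ∫ y, ‖k₁ x.1 y‖ ∂ν₁ := integral_nonneg fun _ => norm_nonneg _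
    exact mul_le_mul h₁ h₂ (integral_nonneg fun _ => norm_nonneg _) (norm_row_nonneg.trans h₁)

variable {μ : Measure α} {ν : Measure β} {k : α → β → 𝕜} {f : β → 𝕜} {g : α → 𝕜}

theorem integrable_row_mul (hk : IsRowBoundedKernel k μ ν) (hf : MemLp f ∞ ν) :
    ∀ᵐ x ∂μ, Integrable (fun y => k x y * f y) ν :=
  hk.integrable_row.mono fun _ hx => hx.mul_of_top_left hf

variable [SFinite ν]

theorem integrable_mul_left (hk : IsRowBoundedKernel k μ ν) (hg : Integrable g μ) :
    Integrable (fun p : α × β => k p.1 p.2 * g p.1) (μ.prod ν) := by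
  obtain ⟨M, hM⟩ := hk.exists_integral_norm_le
  have kernel_mul_aestronglyMeasurable :
      AEStronglyMeasurable (fun p : α × β => k p.1 p.2 * g p.1) (μ.prod ν) :=
    hk.aestronglyMeasurable.mul hg.1.comp_fst
  refine (integrable_prod_iff kernel_mul_aestronglyMeasurable).2 ⟨?_, ?_⟩
  · exact hk.integrable_row.mono fun x hx => hx.mul_const (g x)
  · simp only [norm_mul, MeasureTheory.integral_mul_const]
    refine hg.norm.bdd_mul hk.aestronglyMeasurable.norm.integral_prod_right' (c := M) ?_
    filter_upwards [hM] with x hx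
    rwa [Real.norm_of_nonneg (integral_nonneg fun _ => norm_nonneg _)]

theorem integrable_mul_mul (hk : IsRowBoundedKernel k μ ν) (hf : MemLp f ∞ ν)
    (hg : Integrable g μ) :
    Integrable (fun p : α × β => f p.2 * (k p.1 p.2 * g p.1)) (μ.prod ν) :=
  (hk.integrable_mul_left hg).bdd_mul hf.1.comp_snd
    (Measure.quasiMeasurePreserving_snd.ae (ae_le_lpNorm_exponent_top hf))

theorem integrable_integral_mul (hk : IsRowBoundedKernel k μ ν) (hf : MemLp f ∞ ν)
    (hg : Integrable g μ) : Integrable (fun x => (∫ y, k x y * f y ∂ν) * g x) μ := by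
  simpa only [← MeasureTheory.integral_mul_const, mul_left_comm, mul_assoc] using
    (hk.integrable_mul_mul hf hg).integral_prod_left

variable [SFinite μ]

theorem integrable_column_mul (hk : IsRowBoundedKernel k μ ν) (hg : Integrable g μ) :
    ∀ᵐ y ∂ν, Integrable (fun x => k x y * g x) μ :=
  (hk.integrable_mul_left hg).prod_left_ae

theorem integrable_mul_integral (hk : IsRowBoundedKernel k μ ν) (hf : MemLp f ∞ ν)
    (hg : Integrable g μ) : Integrable (fun y => f y * ∫ x, k x y * g x ∂μ) ν := by
  simpa only [MeasureTheory.integral_const_mul] using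
    (hk.integrable_mul_mul hf hg).integral_prod_right

theorem integral_integral_mul_eq_integral_mul_integral (hk : IsRowBoundedKernel k μ ν)
    (hf : MemLp f ∞ ν) (hg : Integrable g μ) :
    ∫ x, (∫ y, k x y * f y ∂ν) * g x ∂μ = ∫ y, f y * ∫ x, k x y * g x ∂μ ∂ν :=
  calc
    _ = ∫ x, ∫ y, f y * (k x y * g x) ∂ν ∂μ := by
      simp only [← MeasureTheory.integral_mul_const, mul_left_comm, mul_assoc]
    _ = ∫ y, ∫ x, f y * (k x y * g x) ∂μ ∂ν :=
      integral_integral_swap (hk.integrable_mul_mul hf hg)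
    _ = _ := by simp only [MeasureTheory.integral_const_mul]

end IsRowBoundedKernel

end RowBoundedKernel

theorem memLp_top_restrict_of_continuousOn_of_isCompact {X E : Type*} [TopologicalSpace X]
    [MeasurableSpace X] [OpensMeasurableSpace X] [NormedAddCommGroup E]
    [SecondCountableTopologyEither X E] {μ : Measure X} {s t : Set X} {f : X → E}
    (hf : ContinuousOn f t) (ht : IsCompact t) (hs : MeasurableSet s) (hst : s ⊆ t) :
    MemLp f ∞ (μ.restrict s) := by
  obtain ⟨C, hC⟩ := ht.exists_bound_of_continuousOn hf
  exact memLp_top_of_bound ((hf.mono hst).aestronglyMeasurable hs) C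
    (ae_restrict_of_forall_mem hs fun x hx => hC x (hst hx))

section Rectangle

variable {E : Type*} [NormedAddCommGroup E] [NormedSpace ℝ E] {a₁ b₁ a₂ b₂ : ℝ}

theorem intervalIntegral_intervalIntegral_eq_setIntegral_Ioo_prod (h₁ : a₁ ≤ b₁) (h₂ : a₂ ≤ b₂)
    {f : ℝ → ℝ → E} (hf : IntegrableOn (fun p : ℝ × ℝ => f p.1 p.2) (Ioo a₁ b₁ ×ˢ Ioo a₂ b₂)) :
    ∫ x in a₁..b₁, ∫ y in a₂..b₂, f x y = ∫ p in Ioo a₁ b₁ ×ˢ Ioo a₂ b₂, f p.1 p.2 := by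
  simp only [integral_of_le h₁, integral_of_le h₂, integral_Ioc_eq_integral_Ioo]
  exact (setIntegral_prod _ hf).symm

theorem intervalIntegral_intervalIntegral_eq_setIntegral_indicator (h₁ : a₁ ≤ b₁) (h₂ : a₂ ≤ b₂)
    {f : ℝ → ℝ → E} {s t : Set (ℝ × ℝ)} (ht : MeasurableSet t)
    (hts : t ∩ s = Ioo a₁ b₁ ×ˢ Ioo a₂ b₂)
    (hf : IntegrableOn (t.indicator fun p => f p.1 p.2) s) :
    ∫ x in a₁..b₁, ∫ y in a₂..b₂, f x y = ∫ p in s, t.indicator (fun q => f q.1 q.2) p := by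
  rw [integrableOn_indicator_iff ht, hts] at hf
  rw [intervalIntegral_intervalIntegral_eq_setIntegral_Ioo_prod h₁ h₂ hf, setIntegral_indicator ht,
    inter_comm, hts]

end Rectangle

/-- `ψ` is continuous on `[a, b]` and has derivative `ψ' > 0` in the interior: the conditions on the
scale function of a `ψ`-fractional integral. Nothing is asked of `ψ'` at the end points, so that
scales such as `x ^ ρ` on `[0, b]` are admitted. -/
structure HasPosDerivInside (ψ ψ' : ℝ → ℝ) (a b : ℝ) : Prop where
  continuousOn : ContinuousOn ψ (Icc a b)
  hasDerivAt : ∀ x ∈ Ioo a b, HasDerivAt ψ (ψ' x) x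
  pos : ∀ x ∈ Ioo a b, 0 < ψ' x

/-- The kernel of the one-variable left `ψ`-Riemann–Liouville integral without its factor
`1 / Γ(μ)`, extended by zero to `x ≤ s`. -/
noncomputable def fracKernel (ψ ψ' : ℝ → ℝ) (μ x s : ℝ) : ℝ :=
  (Iio x).indicator (fun t => ψ' t * (ψ x - ψ t) ^ (μ - 1)) s

namespace HasPosDerivInside

variable {ψ ψ' : ℝ → ℝ} {μ a b x : ℝ}

theorem of_hasDerivAt_Icc (hψ : ∀ x ∈ Icc a b, HasDerivAt ψ (ψ' x) x)
    (hpos : ∀ x ∈ Icc a b, 0 < ψ' x) : HasPosDerivInside ψ ψ' a b where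
  continuousOn x hx := (hψ x hx).continuousAt.continuousWithinAt
  hasDerivAt x hx := hψ x (Ioo_subset_Icc_self hx)
  pos x hx := hpos x (Ioo_subset_Icc_self hx)

theorem mono_right (hψ : HasPosDerivInside ψ ψ' a b) (hx : x ≤ b) :
    HasPosDerivInside ψ ψ' a x where
  continuousOn := hψ.continuousOn.mono (Icc_subset_Icc_right hx)
  hasDerivAt s hs := hψ.hasDerivAt s (Ioo_subset_Ioo_right hx hs)
  pos s hs := hψ.pos s (Ioo_subset_Ioo_right hx hs)

theorem strictMonoOn (hψ : HasPosDerivInside ψ ψ' a b) : StrictMonoOn ψ (Icc a b) := by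
  refine strictMonoOn_of_deriv_pos (convex_Icc a b) hψ.continuousOn fun x hx => ?_
  rw [interior_Icc] at hx
  exact (hψ.hasDerivAt x hx).deriv ▸ hψ.pos x hx

theorem sub_pos_of_mem_Ioo (hψ : HasPosDerivInside ψ ψ' a b) (hx : x ∈ Ioo a b) :
    0 < ψ b - ψ x :=
  sub_pos.2 (hψ.strictMonoOn (Ioo_subset_Icc_self hx) (right_mem_Icc.2 (hx.1.trans hx.2).le) hx.2)

theorem aemeasurable (hψ : HasPosDerivInside ψ ψ' a b) :
    AEMeasurable ψ (volume.restrict (Ioo a b)) :=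
  (hψ.continuousOn.mono Ioo_subset_Icc_self).aemeasurable measurableSet_Ioo

theorem aemeasurable_deriv (hψ : HasPosDerivInside ψ ψ' a b) :
    AEMeasurable ψ' (volume.restrict (Ioo a b)) :=
  (measurable_deriv ψ).aemeasurable.congr
    (ae_restrict_of_forall_mem measurableSet_Ioo fun x hx => (hψ.hasDerivAt x hx).deriv)

theorem hasDerivAt_primitive (hψ : HasPosDerivInside ψ ψ' a b) (hμ : μ ≠ 0) (hx : x ∈ Ioo a b) :
    HasDerivAt (fun s => -((ψ b - ψ s) ^ μ / μ)) (ψ' x * (ψ b - ψ x) ^ (μ - 1)) x := by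
  have rpow_deriv := ((hψ.hasDerivAt x hx).const_sub (ψ b)).rpow_const (p := μ)
    (Or.inl (hψ.sub_pos_of_mem_Ioo hx).ne')
  convert! (rpow_deriv.div_const μ).neg using 1
  field_simp

theorem continuousOn_primitive (hψ : HasPosDerivInside ψ ψ' a b) (hμ : 0 ≤ μ) :
    ContinuousOn (fun s => -((ψ b - ψ s) ^ μ / μ)) (Icc a b) :=
  (((continuousOn_const.sub hψ.continuousOn).rpow_const fun _ _ => Or.inr hμ).div_const μ).neg

theorem weight_nonneg (hψ : HasPosDerivInside ψ ψ' a b) (hx : x ∈ Ioo a b) :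
    0 ≤ ψ' x * (ψ b - ψ x) ^ (μ - 1) :=
  mul_nonneg (hψ.pos x hx).le (Real.rpow_nonneg (hψ.sub_pos_of_mem_Ioo hx).le _)

theorem integrableOn_weight (hψ : HasPosDerivInside ψ ψ' a b) (hμ : 0 < μ) :
    IntegrableOn (fun s => ψ' s * (ψ b - ψ s) ^ (μ - 1)) (Ioc a b) :=
  integrableOn_deriv_of_nonneg (hψ.continuousOn_primitive hμ.le)
    (fun _ hx => hψ.hasDerivAt_primitive hμ.ne' hx) fun _ hx => hψ.weight_nonneg hx

theorem setIntegral_weight (hψ : HasPosDerivInside ψ ψ' a b) (hab : a ≤ b) (hμ : 0 < μ) :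
    ∫ s in Ioo a b, ψ' s * (ψ b - ψ s) ^ (μ - 1) = (ψ b - ψ a) ^ μ / μ := by
  rw [← integral_Ioc_eq_integral_Ioo, ← integral_of_le hab,
    integral_eq_sub_of_hasDerivAt_of_le hab (hψ.continuousOn_primitive hμ.le)
      (fun _ hx => hψ.hasDerivAt_primitive hμ.ne' hx)
      ((intervalIntegrable_iff_integrableOn_Ioc_of_le hab).2 (hψ.integrableOn_weight hμ))]
  simp [Real.zero_rpow hμ.ne']

theorem aestronglyMeasurable_fracKernel (hψ : HasPosDerivInside ψ ψ' a b) :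
    AEStronglyMeasurable (uncurry (fracKernel ψ ψ' μ))
      ((volume.restrict (Ioo a b)).prod (volume.restrict (Ioo a b))) := by
  have weight_aemeasurable : AEMeasurable (fun p : ℝ × ℝ => ψ' p.2 * (ψ p.1 - ψ p.2) ^ (μ - 1))
      ((volume.restrict (Ioo a b)).prod (volume.restrict (Ioo a b))) :=
    hψ.aemeasurable_deriv.comp_snd.mul
      ((hψ.aemeasurable.comp_fst.sub hψ.aemeasurable.comp_snd).pow_const (μ - 1))
  exact (weight_aemeasurable.indicator
    (measurableSet_lt measurable_snd measurable_fst)).aestronglyMeasurable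

theorem isRowBoundedKernel_fracKernel (hψ : HasPosDerivInside ψ ψ' a b) (hμ : 0 < μ) :
    IsRowBoundedKernel (fracKernel ψ ψ' μ) (volume.restrict (Ioo a b))
      (volume.restrict (Ioo a b)) where
  aestronglyMeasurable := hψ.aestronglyMeasurable_fracKernel
  integrable_row := by
    refine ae_restrict_of_forall_mem measurableSet_Ioo fun x hx => ?_
    refine IntegrableOn.integrable_indicator ?_ measurableSet_Iio
    rw [IntegrableOn, Measure.restrict_restrict measurableSet_Iio, inter_comm, Ioo_inter_Iio,
      min_eq_right hx.2.le]
    exact ((hψ.mono_right hx.2.le).integrableOn_weight hμ).mono_set Ioo_subset_Ioc_self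
  exists_integral_norm_le := by
    refine ⟨(ψ b - ψ a) ^ μ / μ, ae_restrict_of_forall_mem measurableSet_Ioo fun x hx => ?_⟩
    have hψx := hψ.mono_right hx.2.le
    have hψa : ψ a ≤ ψ x := hψ.strictMonoOn.monotoneOn
      (left_mem_Icc.2 (hx.1.trans hx.2).le) (Ioo_subset_Icc_self hx) hx.1.le
    calc ∫ s in Ioo a b, ‖fracKernel ψ ψ' μ x s‖
      _ = ∫ s in Ioo a x, ‖ψ' s * (ψ x - ψ s) ^ (μ - 1)‖ := by
        simp only [fracKernel, norm_indicator_eq_indicator_norm]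
        rw [setIntegral_indicator measurableSet_Iio, Ioo_inter_Iio, min_eq_right hx.2.le]
      _ = ∫ s in Ioo a x, ψ' s * (ψ x - ψ s) ^ (μ - 1) :=
        setIntegral_congr_fun measurableSet_Ioo fun s hs =>
          Real.norm_of_nonneg (hψx.weight_nonneg hs)
      _ = (ψ x - ψ a) ^ μ / μ := hψx.setIntegral_weight hx.1.le hμ
      _ ≤ (ψ b - ψ a) ^ μ / μ := by
        have := sub_nonneg.2 hψa
        have := hψ.sub_pos_of_mem_Ioo hx
        gcongr
        linarith

end HasPosDerivInside

/-- The kernel of the two-variable left `ψ`-Riemann–Liouville integral without its factor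
`1 / (Γ(μ₁) Γ(μ₂))`. Its transpose is the kernel of the right integral, up to the weight `ψ'`. -/
noncomputable def fracKernel₂ (ψ ψ' : ℝ → ℝ) (μ₁ μ₂ : ℝ) (x s : ℝ × ℝ) : ℝ :=
  fracKernel ψ ψ' μ₁ x.1 s.1 * fracKernel ψ ψ' μ₂ x.2 s.2

section FracInt

variable {ψ ψ' : ℝ → ℝ} {μ₁ μ₂ a₁ b₁ a₂ b₂ : ℝ} {f : ℝ → ℝ → ℝ} {ξ : ℝ × ℝ}

theorem isRowBoundedKernel_fracKernel₂ (hψ₁ : HasPosDerivInside ψ ψ' a₁ b₁)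
    (hψ₂ : HasPosDerivInside ψ ψ' a₂ b₂) (hμ₁ : 0 < μ₁) (hμ₂ : 0 < μ₂) :
    IsRowBoundedKernel (fracKernel₂ ψ ψ' μ₁ μ₂) (volume.restrict (Ioo a₁ b₁ ×ˢ Ioo a₂ b₂))
      (volume.restrict (Ioo a₁ b₁ ×ˢ Ioo a₂ b₂)) := by
  rw [Measure.volume_eq_prod, ← Measure.prod_restrict]
  exact (hψ₁.isRowBoundedKernel_fracKernel hμ₁).tensor (hψ₂.isRowBoundedKernel_fracKernel hμ₂)

theorem leftFracInt_eq_setIntegral_fracKernel₂ (hξ : ξ ∈ Ioo a₁ b₁ ×ˢ Ioo a₂ b₂)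
    (hf : IntegrableOn (fun s => fracKernel₂ ψ ψ' μ₁ μ₂ ξ s * f s.1 s.2)
      (Ioo a₁ b₁ ×ˢ Ioo a₂ b₂)) :
    leftFracInt ψ ψ' μ₁ μ₂ a₁ a₂ f ξ.1 ξ.2 = 1 / (Real.Gamma μ₁ * Real.Gamma μ₂) *
      ∫ s in Ioo a₁ b₁ ×ˢ Ioo a₂ b₂, fracKernel₂ ψ ψ' μ₁ μ₂ ξ s * f s.1 s.2 := by
  have integrand_eq : (fun s : ℝ × ℝ => fracKernel₂ ψ ψ' μ₁ μ₂ ξ s * f s.1 s.2) =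
      (Iio ξ.1 ×ˢ Iio ξ.2).indicator fun s => ψ' s.1 * ψ' s.2 * (ψ ξ.1 - ψ s.1) ^ (μ₁ - 1) *
        (ψ ξ.2 - ψ s.2) ^ (μ₂ - 1) * f s.1 s.2 := by
    ext s
    simp only [fracKernel₂, fracKernel, indicator_apply, mem_prod, ite_and]
    split_ifs <;> ring
  rw [integrand_eq] at hf ⊢
  rw [leftFracInt, intervalIntegral_intervalIntegral_eq_setIntegral_indicator hξ.1.1.le hξ.2.1.le
    (measurableSet_Iio.prod measurableSet_Iio) _ hf]
  rw [prod_inter_prod, Iio_inter_Ioo, Iio_inter_Ioo, min_eq_left hξ.1.2.le, min_eq_left hξ.2.2.le]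

theorem mul_rightFracInt_div_eq_setIntegral_fracKernel₂ (hψ₁ : ∀ x ∈ Ioo a₁ b₁, ψ' x ≠ 0)
    (hψ₂ : ∀ x ∈ Ioo a₂ b₂, ψ' x ≠ 0) (hξ : ξ ∈ Ioo a₁ b₁ ×ˢ Ioo a₂ b₂)
    (hf : IntegrableOn (fun s => fracKernel₂ ψ ψ' μ₁ μ₂ s ξ * f s.1 s.2)
      (Ioo a₁ b₁ ×ˢ Ioo a₂ b₂)) :
    ψ' ξ.1 * ψ' ξ.2 *
        rightFracInt ψ ψ' μ₁ μ₂ b₁ b₂ (fun s₁ s₂ => f s₁ s₂ / (ψ' s₁ * ψ' s₂)) ξ.1 ξ.2 =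
      1 / (Real.Gamma μ₁ * Real.Gamma μ₂) *
        ∫ s in Ioo a₁ b₁ ×ˢ Ioo a₂ b₂, fracKernel₂ ψ ψ' μ₁ μ₂ s ξ * f s.1 s.2 := by
  have rectangle_measurable : MeasurableSet (Ioo a₁ b₁ ×ˢ Ioo a₂ b₂) :=
    measurableSet_Ioo.prod measurableSet_Ioo
  have weight_ne_zero : ∀ x ∈ Ioo a₁ b₁ ×ˢ Ioo a₂ b₂, ψ' x.1 * ψ' x.2 ≠ 0 := fun x hx =>
    mul_ne_zero (hψ₁ _ hx.1) (hψ₂ _ hx.2)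
  have integrand_eqOn : EqOn (fun s => fracKernel₂ ψ ψ' μ₁ μ₂ s ξ * f s.1 s.2)
      (fun s => ψ' ξ.1 * ψ' ξ.2 * (Ioi ξ.1 ×ˢ Ioi ξ.2).indicator (fun t => ψ' t.1 * ψ' t.2 *
        (ψ t.1 - ψ ξ.1) ^ (μ₁ - 1) * (ψ t.2 - ψ ξ.2) ^ (μ₂ - 1) *
          (f t.1 t.2 / (ψ' t.1 * ψ' t.2))) s) (Ioo a₁ b₁ ×ˢ Ioo a₂ b₂) := by
    intro s hs
    have hs₁ := hψ₁ _ hs.1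
    have hs₂ := hψ₂ _ hs.2
    simp only [fracKernel₂, fracKernel, indicator_apply, mem_prod, mem_Iio, mem_Ioi, ite_and]
    split_ifs
    · field_simp
    all_goals ring
  have indicator_integrableOn : IntegrableOn _ (Ioo a₁ b₁ ×ˢ Ioo a₂ b₂) :=
    (integrable_const_mul_iff (weight_ne_zero ξ hξ).isUnit _).1
      (hf.congr_fun integrand_eqOn rectangle_measurable)
  rw [setIntegral_congr_fun rectangle_measurable integrand_eqOn, MeasureTheory.integral_const_mul,
    rightFracInt, intervalIntegral_intervalIntegral_eq_setIntegral_indicator hξ.1.2.le hξ.2.2.le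
      (measurableSet_Ioi.prod measurableSet_Ioi) _ indicator_integrableOn, mul_left_comm]
  rw [prod_inter_prod, Ioi_inter_Ioo, Ioi_inter_Ioo, max_eq_left hξ.1.1.le, max_eq_left hξ.2.1.le]

end FracInt

theorem fracInt_integration_by_parts_general {θ₁ T₁ θ₂ T₂ μ₁ μ₂ : ℝ} {ψ ψ' : ℝ → ℝ}
    {φ ϕ : ℝ → ℝ → ℝ} (hT₁ : θ₁ ≤ T₁) (hT₂ : θ₂ ≤ T₂) (hμ₁ : 0 < μ₁) (hμ₂ : 0 < μ₂)
    (hψ₁ : HasPosDerivInside ψ ψ' θ₁ T₁) (hψ₂ : HasPosDerivInside ψ ψ' θ₂ T₂)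
    (hφ : MemLp (fun p : ℝ × ℝ => φ p.1 p.2) ∞ (volume.restrict (Ioo θ₁ T₁ ×ˢ Ioo θ₂ T₂)))
    (hϕ : IntegrableOn (fun p : ℝ × ℝ => ϕ p.1 p.2) (Ioo θ₁ T₁ ×ˢ Ioo θ₂ T₂)) :
    (∫ ξ₁ in θ₁..T₁, ∫ ξ₂ in θ₂..T₂,
        leftFracInt ψ ψ' μ₁ μ₂ θ₁ θ₂ φ ξ₁ ξ₂ * ϕ ξ₁ ξ₂) =
      ∫ ξ₁ in θ₁..T₁, ∫ ξ₂ in θ₂..T₂,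
        φ ξ₁ ξ₂ * (ψ' ξ₁ * ψ' ξ₂) *
          rightFracInt ψ ψ' μ₁ μ₂ T₁ T₂ (fun s₁ s₂ => ϕ s₁ s₂ / (ψ' s₁ * ψ' s₂)) ξ₁ ξ₂ := by
  set ν : Measure (ℝ × ℝ) := volume.restrict (Ioo θ₁ T₁ ×ˢ Ioo θ₂ T₂)
  set c := 1 / (Real.Gamma μ₁ * Real.Gamma μ₂)
  have hK := isRowBoundedKernel_fracKernel₂ hψ₁ hψ₂ hμ₁ hμ₂
  have mem_rectangle : ∀ᵐ ξ ∂ν, ξ ∈ Ioo θ₁ T₁ ×ˢ Ioo θ₂ T₂ :=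
    ae_restrict_mem (measurableSet_Ioo.prod measurableSet_Ioo)
  have left_ae_eq : (fun ξ : ℝ × ℝ => leftFracInt ψ ψ' μ₁ μ₂ θ₁ θ₂ φ ξ.1 ξ.2 * ϕ ξ.1 ξ.2) =ᵐ[ν]
      fun ξ => c * ((∫ s, fracKernel₂ ψ ψ' μ₁ μ₂ ξ s * φ s.1 s.2 ∂ν) * ϕ ξ.1 ξ.2) := by
    filter_upwards [mem_rectangle, hK.integrable_row_mul hφ] with ξ hξ hint
    rw [leftFracInt_eq_setIntegral_fracKernel₂ hξ hint, mul_assoc]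
  have right_ae_eq : (fun ξ : ℝ × ℝ => φ ξ.1 ξ.2 * (ψ' ξ.1 * ψ' ξ.2) *
        rightFracInt ψ ψ' μ₁ μ₂ T₁ T₂ (fun s₁ s₂ => ϕ s₁ s₂ / (ψ' s₁ * ψ' s₂)) ξ.1 ξ.2) =ᵐ[ν]
      fun ξ => c * (φ ξ.1 ξ.2 * ∫ s, fracKernel₂ ψ ψ' μ₁ μ₂ s ξ * ϕ s.1 s.2 ∂ν) := by
    filter_upwards [mem_rectangle, hK.integrable_column_mul hϕ] with ξ hξ hint
    rw [mul_assoc, mul_rightFracInt_div_eq_setIntegral_fracKernel₂ (fun x hx => (hψ₁.pos x hx).ne')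
      (fun x hx => (hψ₂.pos x hx).ne') hξ hint, mul_left_comm]
  rw [intervalIntegral_intervalIntegral_eq_setIntegral_Ioo_prod hT₁ hT₂
      (((hK.integrable_integral_mul hφ hϕ).const_mul c).congr left_ae_eq.symm),
    intervalIntegral_intervalIntegral_eq_setIntegral_Ioo_prod hT₁ hT₂
      (((hK.integrable_mul_integral hφ hϕ).const_mul c).congr right_ae_eq.symm),
    integral_congr_ae left_ae_eq, integral_congr_ae right_ae_eq, MeasureTheory.integral_const_mul,
    MeasureTheory.integral_const_mul, hK.integral_integral_mul_eq_integral_mul_integral hφ hϕ]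

/-- fractional integration by parts: the left and right two-variable
`ψ`-Riemann–Liouville fractional integrals are adjoint to each other:
`∫_{θ₁}^{T₁}∫_{θ₂}^{T₂} (I_θ^{μ;ψ}φ)(ξ₁,ξ₂) ϕ(ξ₁,ξ₂) dξ₂ dξ₁
  = ∫_{θ₁}^{T₁}∫_{θ₂}^{T₂} φ(ξ₁,ξ₂) ψ'(ξ₁)ψ'(ξ₂) (I_T^{μ;ψ}(ϕ/(ψ'·ψ')))(ξ₁,ξ₂) dξ₂ dξ₁`. -/
theorem fracInt_integration_by_parts
    (θ₁ T₁ θ₂ T₂ μ₁ μ₂ : ℝ) (ψ ψ' : ℝ → ℝ) (φ ϕ : ℝ → ℝ → ℝ)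
    (hT₁ : θ₁ < T₁) (hT₂ : θ₂ < T₂)
    (hμ₁ : 0 < μ₁) (hμ₁' : μ₁ < 1) (hμ₂ : 0 < μ₂) (hμ₂' : μ₂ < 1)
    (hψmono₁ : StrictMonoOn ψ (Set.Icc θ₁ T₁)) (hψmono₂ : StrictMonoOn ψ (Set.Icc θ₂ T₂))
    (hψderiv : ∀ x ∈ Set.Icc θ₁ T₁ ∪ Set.Icc θ₂ T₂, HasDerivAt ψ (ψ' x) x)
    (hψ'cont : ContinuousOn ψ' (Set.Icc θ₁ T₁ ∪ Set.Icc θ₂ T₂))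
    (hψ'pos : ∀ x ∈ Set.Icc θ₁ T₁ ∪ Set.Icc θ₂ T₂, 0 < ψ' x)
    (hφ : ContinuousOn (fun p : ℝ × ℝ => φ p.1 p.2) (Set.Icc θ₁ T₁ ×ˢ Set.Icc θ₂ T₂))
    (hϕ : ContinuousOn (fun p : ℝ × ℝ => ϕ p.1 p.2) (Set.Icc θ₁ T₁ ×ˢ Set.Icc θ₂ T₂)) :
    (∫ ξ₁ in θ₁..T₁, ∫ ξ₂ in θ₂..T₂,
        leftFracInt ψ ψ' μ₁ μ₂ θ₁ θ₂ φ ξ₁ ξ₂ * ϕ ξ₁ ξ₂) =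
      ∫ ξ₁ in θ₁..T₁, ∫ ξ₂ in θ₂..T₂,
        φ ξ₁ ξ₂ * (ψ' ξ₁ * ψ' ξ₂) *
          rightFracInt ψ ψ' μ₁ μ₂ T₁ T₂ (fun s₁ s₂ => ϕ s₁ s₂ / (ψ' s₁ * ψ' s₂)) ξ₁ ξ₂ := by
  have subset_closure : Ioo θ₁ T₁ ×ˢ Ioo θ₂ T₂ ⊆ Icc θ₁ T₁ ×ˢ Icc θ₂ T₂ :=
    prod_mono Ioo_subset_Icc_self Ioo_subset_Icc_self
  exact fracInt_integration_by_parts_general hT₁.le hT₂.le hμ₁ hμ₂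
    (.of_hasDerivAt_Icc (fun x hx => hψderiv x (.inl hx)) fun x hx => hψ'pos x (.inl hx))
    (.of_hasDerivAt_Icc (fun x hx => hψderiv x (.inr hx)) fun x hx => hψ'pos x (.inr hx))
    (memLp_top_restrict_of_continuousOn_of_isCompact hφ (isCompact_Icc.prod isCompact_Icc)
      (measurableSet_Ioo.prod measurableSet_Ioo) subset_closure)
    ((hϕ.integrableOn_compact (isCompact_Icc.prod isCompact_Icc)).mono_set subset_closure)
end

section
/- (Fountain Theorem) Let X be a real Banach space with a biorthogonal system (e_j, e_j*) as in the context, Y_k = span{e_1,…,e_k} and Z_k = closure(span{e_j : j ≥ k}). Let E : X → ℝ be continuously Fréchet differentiable and even (E(−u) = E(u) for all u). Suppose that for each k = 1,2,… there exist ρ_k > r_k > 0 such that (A₂) inf{E(u) : u ∈ Z_k, ‖u‖ = r_k} → +∞ as k → +∞, (A₃) max{E(u) : u ∈ Y_k, ‖u‖ = ρ_k} ≤ 0, and (A₄) E satisfies the Palais–Smale condition. Then E has a sequence of critical points (u_k) (i.e. E'(u_k) = 0) with E(u_k) → +∞. -/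
open Filter Topology

/-!
Fix a large level `M` and choose `k` with `M ≤ E` on the sphere of radius `r_k` in `Z_k`. Every odd
map of the ball of radius `ρ_k` in `Y_k` that is the identity on the boundary sphere meets that
sphere of `Z_k`: the functionals `e_j*` with `j < k` form an odd map into a space of dimension one
less than `Y_k`, so the Borsuk–Ulam theorem applies. Hence the minimax level of `E` over these odd
maps is at least `M > 0`, while `E ≤ 0` on the boundary sphere. If it were not a critical level,
the Palais–Smale condition would bound `‖E'‖` from below near it, and pushing an almost optimal map
supplied by Ekeland's principle along an odd pseudo-gradient field would lower its peak too fast.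

The Borsuk–Ulam theorem follows from Fan's combinatorial argument on Kuhn's triangulation of `ℤⁿ⁺¹`:
in an antipodal labelling of the lattice points of a symmetric set without complementary edges,
counting the simplices with alternating labels modulo two gives a contradiction.
-/

open scoped Finset

/-! ### Alternating labels -/

section Alternating

variable {V α : Type*}

theorem exists_sign_comp_eq {a : V → α} {s : V → ℤˣ} {F : Finset V}
    (hs : ∀ v ∈ F, ∀ w ∈ F, a v = a w → s v = s w) : ∃ σ : α → ℤˣ, ∀ v ∈ F, s v = σ (a v) := by
  have hfactor : Function.FactorsThrough (fun v : F => s v) fun v : F => a v :=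
    fun v w h => hs v v.2 w w.2 h
  exact ⟨Function.extend (fun v : F => a v) (fun v : F => s v) 1, fun v hv =>
    (hfactor.extend_apply 1 ⟨v, hv⟩).symm⟩

variable [LinearOrder α]

/-- Vertices `v` carry a label `a v` and a sign `s v`. A finite set `F` is alternating with first
sign `ε` if its labels are distinct and, read in increasing order, carry the signs
`ε, -ε, ε, …`. -/
def IsAlternating (a : V → α) (s : V → ℤˣ) (ε : ℤˣ) (F : Finset V) : Prop :=
  Set.InjOn a F ∧ ∀ v ∈ F, s v = ε * (-1) ^ #{w ∈ F | a w < a v}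

open Classical in
/-- The indicator, modulo `2`, that `F` is alternating with first sign `ε`; sums of it are the
parity counts of Ky Fan's lemma. -/
noncomputable def alternatingIndicator (a : V → α) (s : V → ℤˣ) (ε : ℤˣ) (F : Finset V) : ZMod 2 :=
  if IsAlternating a s ε F then 1 else 0

theorem alternatingIndicator_congr {W : Type*} {a : V → α} {b : W → α} {s : V → ℤˣ} {t : W → ℤˣ}
    {ε η : ℤˣ} {F : Finset V} {G : Finset W} (h : IsAlternating a s ε F ↔ IsAlternating b t η G) :
    alternatingIndicator a s ε F = alternatingIndicator b t η G := by
  classical exact if_congr h rfl rfl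

theorem alternatingIndicator_of_not {a : V → α} {s : V → ℤˣ} {ε : ℤˣ} {F : Finset V}
    (h : ¬ IsAlternating a s ε F) : alternatingIndicator a s ε F = 0 :=
  if_neg h

theorem isAlternating_neg_iff {a : V → α} {s : V → ℤˣ} {ε : ℤˣ} {F : Finset V} :
    IsAlternating a s (-ε) F ↔ Set.InjOn a F ∧ ∀ v ∈ F, s v ≠ ε * (-1) ^ #{w ∈ F | a w < a v} := by
  simp only [IsAlternating, Int.units_ne_iff_eq_neg, neg_mul]

theorem isAlternating_iff_image {a : V → α} {s : V → ℤˣ} {σ : α → ℤˣ} {ε : ℤˣ} {F : Finset V}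
    (hσ : ∀ v ∈ F, s v = σ (a v)) :
    IsAlternating a s ε F ↔ Set.InjOn a F ∧ IsAlternating id σ ε (F.image a) := by
  refine and_congr_right fun hinj => ?_
  simp only [IsAlternating, Set.injOn_id, true_and, Finset.forall_mem_image, id,
    Finset.filter_image]
  refine forall₂_congr fun v hv => ?_
  rw [hσ v hv, Finset.card_image_of_injOn (hinj.mono (Finset.filter_subset _ F))]

theorem isAlternating_congr {a b : V → α} {s t : V → ℤˣ} {ε : ℤˣ} {F : Finset V}
    (ha : ∀ v ∈ F, a v = b v) (hs : ∀ v ∈ F, s v = t v) :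
    IsAlternating a s ε F ↔ IsAlternating b t ε F := by
  refine and_congr (Set.EqOn.injOn_iff ha) (forall₂_congr fun v hv => ?_)
  rw [hs v hv, Finset.filter_congr fun w hw => by rw [ha w hw, ha v hv]]

theorem card_filter_lt_erase_of_le {A : Finset α} {i j : α} (h : j ≤ i) :
    #{k ∈ A.erase i | k < j} = #{k ∈ A | k < j} := by
  rw [Finset.filter_erase, Finset.erase_eq_of_notMem]
  simp [h]

theorem card_filter_lt_erase_add_one {A : Finset α} {i j : α} (hi : i ∈ A) (h : i < j) :
    #{k ∈ A.erase i | k < j} + 1 = #{k ∈ A | k < j} := by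
  rw [Finset.filter_erase, Finset.card_erase_add_one (Finset.mem_filter.2 ⟨hi, h⟩)]

/-- Expanding `∏ (x i + (1 + x i)) = 1` in order, where `x i` indicates that `i` carries the sign
prescribed by its rank in `A`: deleting `i` reverses the prescription for all larger elements. -/
theorem sum_alternatingIndicator_id_erase (s : α → ℤˣ) (A : Finset α) :
    ∑ i ∈ A, alternatingIndicator id s 1 (A.erase i) =
      alternatingIndicator id s 1 A + alternatingIndicator id s (-1) A := by
  classical
  let x : α → ZMod 2 := fun i => if s i = (-1) ^ #{j ∈ A | j < i} then 1 else 0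
  have hx : ∀ i, 1 + x i = if s i ≠ (-1) ^ #{j ∈ A | j < i} then 1 else 0 := by
    intro i
    by_cases h : s i = (-1) ^ #{j ∈ A | j < i}
    · simp [x, h, CharTwo.add_self_eq_zero]
    · simp [x, h]
  have hpos : alternatingIndicator id s 1 A = ∏ i ∈ A, x i := by
    simp only [alternatingIndicator, IsAlternating, x, Finset.prod_boole]
    simp
  have hneg : alternatingIndicator id s (-1) A = ∏ i ∈ A, (1 + x i) := by
    simp only [alternatingIndicator, isAlternating_neg_iff, hx, Finset.prod_boole]
    simp
  have herase : ∀ i ∈ A, alternatingIndicator id s 1 (A.erase i) =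
      (∏ j ∈ A with j < i, x j) * ∏ j ∈ A with i < j, (1 + x j) := by
    intro i hi
    simp only [hx, Finset.prod_boole, ite_zero_mul_ite_zero, mul_one, x]
    refine if_congr ?_ rfl rfl
    simp only [IsAlternating, Set.injOn_id, true_and, id, one_mul, Finset.mem_erase,
      Finset.mem_filter]
    refine ⟨fun h => ⟨fun j hj => ?_, fun j hj => ?_⟩, fun h j hj => ?_⟩
    · rw [h j ⟨hj.2.ne, hj.1⟩, card_filter_lt_erase_of_le hj.2.le]
    · rw [h j ⟨hj.2.ne', hj.1⟩, ← card_filter_lt_erase_add_one hi hj.2, pow_succ, mul_neg_one]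
      exact units_ne_neg_self _
    · rcases hj.1.lt_or_gt with hlt | hlt
      · rw [h.1 j ⟨hj.2, hlt⟩, card_filter_lt_erase_of_le hlt.le]
      · rw [Int.units_ne_iff_eq_neg.1 (h.2 j ⟨hj.2, hlt⟩), ← card_filter_lt_erase_add_one hi hlt,
          pow_succ, mul_neg_one, neg_neg]
  have hexp := Finset.prod_add_ordered A (fun i => 1 + x i) fun _ => 1
  have hcancel : ∀ i, 1 + x i + 1 = x i := fun i => by
    rw [add_right_comm, CharTwo.add_self_eq_zero, zero_add]
  simp only [hcancel, one_mul] at hexp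
  rw [hpos, hneg, hexp, add_right_comm, CharTwo.add_self_eq_zero, zero_add]
  exact Finset.sum_congr rfl herase

theorem alternatingIndicator_erase_comm [DecidableEq V] {a : V → α} {s : V → ℤˣ} {F : Finset V}
    {v w : V} (hv : v ∈ F) (hw : w ∈ F) (ha : a v = a w)
    (hs : ∀ v ∈ F, ∀ w ∈ F, a v = a w → s v = s w) (ε : ℤˣ) :
    alternatingIndicator a s ε (F.erase v) = alternatingIndicator a s ε (F.erase w) := by
  obtain ⟨σ, hσ⟩ := exists_sign_comp_eq hs
  have himage : (F.erase v).image a = (F.erase w).image a := by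
    ext i
    grind
  have hinj : Set.InjOn a (F.erase v) ↔ Set.InjOn a (F.erase w) := by
    rw [← Finset.card_image_iff, ← Finset.card_image_iff, himage, Finset.card_erase_of_mem hv,
      Finset.card_erase_of_mem hw]
  refine alternatingIndicator_congr ?_
  rw [isAlternating_iff_image fun u hu => hσ u (Finset.mem_of_mem_erase hu),
    isAlternating_iff_image fun u hu => hσ u (Finset.mem_of_mem_erase hu), himage, hinj]

/-- A non-injective `F` has at most two facets with injective labels, and these carry the same
labels. -/
theorem sum_alternatingIndicator_erase [DecidableEq V] {a : V → α} {s : V → ℤˣ} {F : Finset V}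
    (hs : ∀ v ∈ F, ∀ w ∈ F, a v = a w → s v = s w) :
    ∑ v ∈ F, alternatingIndicator a s 1 (F.erase v) =
      alternatingIndicator a s 1 F + alternatingIndicator a s (-1) F := by
  by_cases hinj : Set.InjOn a F
  · obtain ⟨σ, hσ⟩ := exists_sign_comp_eq hs
    have hindicator : ∀ (G) (_ : G ⊆ F) (ε),
        alternatingIndicator a s ε G = alternatingIndicator id σ ε (G.image a) := fun G hG ε =>
      alternatingIndicator_congr <| (isAlternating_iff_image fun v hv => hσ v (hG hv)).trans <|
        and_iff_right (hinj.mono hG)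
    rw [hindicator F subset_rfl, hindicator F subset_rfl, ← sum_alternatingIndicator_id_erase,
      Finset.sum_image hinj]
    refine Finset.sum_congr rfl fun v hv => ?_
    rw [hindicator _ (Finset.erase_subset v F)]
    congr 1
    ext i
    grind [Set.InjOn]
  · have hnot : ∀ ε, ¬ IsAlternating a s ε F := fun ε h => hinj h.1
    simp only [alternatingIndicator_of_not (hnot _), add_zero]
    simp only [Set.InjOn, not_forall] at hinj
    obtain ⟨v, hv, w, hw, ha, hne⟩ := hinj
    rw [Finset.sum_eq_add_of_mem v w hv hw hne, alternatingIndicator_erase_comm hv hw ha hs,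
      CharTwo.add_self_eq_zero]
    intro u _ hne'
    refine alternatingIndicator_of_not fun h => hne (h.1 ?_ ?_ ha)
    · exact Finset.mem_erase.2 ⟨hne'.1.symm, hv⟩
    · exact Finset.mem_erase.2 ⟨hne'.2.symm, hw⟩

theorem isAlternating_image_neg_iff [InvolutiveNeg V] [DecidableEq V] {a : V → α} {s : V → ℤˣ}
    {ε : ℤˣ} {F : Finset V} (ha : ∀ v ∈ F, a (-v) = a v) (hs : ∀ v ∈ F, s (-v) = -s v) :
    IsAlternating a s (-ε) (F.image Neg.neg) ↔ IsAlternating a s ε F := by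
  refine and_congr ?_ (Finset.forall_mem_image.trans (forall₂_congr fun v hv => ?_))
  · rw [← Finset.card_image_iff, ← Finset.card_image_iff, Finset.image_image,
      Finset.card_image_of_injective F neg_injective,
      Finset.image_congr (f := a ∘ Neg.neg) ha]
  · have hrank : {w ∈ F | a (-w) < a v} = {w ∈ F | a w < a v} :=
      Finset.filter_congr fun w hw => by rw [ha w hw]
    rw [hs v hv, Finset.filter_image, Finset.card_image_of_injective _ neg_injective, ha v hv,
      hrank, neg_mul, neg_inj]

end Alternating

/-! ### Leading coordinates -/

section LeadingCoordinate

variable {R : Type*} [AddCommGroup R] [LinearOrder R] {n : ℕ} {δ : R} {y z : Fin n → R}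

/-- The first index at which `y` has absolute value at least `δ`, or `n` if there is none. -/
noncomputable def leadingIndex (δ : R) (y : Fin n → R) : ℕ :=
  sInf {k | ∀ h : k < n, δ ≤ |y ⟨k, h⟩|}

open Classical in
/-- The sign of the coordinate of `y` at the index `leadingIndex δ y`, with the value `1` if that
index is `n`. -/
noncomputable def leadingSign (δ : R) (y : Fin n → R) : ℤˣ :=
  if ∀ h : leadingIndex δ y < n, 0 < y ⟨leadingIndex δ y, h⟩ then 1 else -1

theorem leadingIndex_le (δ : R) (y : Fin n → R) : leadingIndex δ y ≤ n :=
  Nat.sInf_le fun h => absurd h (lt_irrefl n)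

theorem leadingIndex_le_of_le_abs {i : Fin n} (h : δ ≤ |y i|) : leadingIndex δ y ≤ i :=
  Nat.sInf_le fun _ => h

theorem le_abs_apply_leadingIndex (h : leadingIndex δ y < n) : δ ≤ |y ⟨leadingIndex δ y, h⟩| :=
  Nat.sInf_mem (s := {k | ∀ h : k < n, δ ≤ |y ⟨k, h⟩|}) ⟨n, fun h => absurd h (lt_irrefl n)⟩ h

theorem leadingIndex_lt_iff : leadingIndex δ y < n ↔ ∃ i, δ ≤ |y i| :=
  ⟨fun h => ⟨_, le_abs_apply_leadingIndex h⟩,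
    fun ⟨i, hi⟩ => (leadingIndex_le_of_le_abs hi).trans_lt i.isLt⟩

@[simp]
theorem leadingIndex_neg (δ : R) (y : Fin n → R) : leadingIndex δ (-y) = leadingIndex δ y := by
  simp only [leadingIndex, Pi.neg_apply, abs_neg]

variable [IsOrderedAddMonoid R]

theorem apply_leadingIndex_ne_zero (hδ : 0 < δ) (h : leadingIndex δ y < n) :
    y ⟨leadingIndex δ y, h⟩ ≠ 0 :=
  abs_pos.1 (hδ.trans_le (le_abs_apply_leadingIndex h))

theorem leadingSign_neg (hδ : 0 < δ) (h : leadingIndex δ y < n) :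
    leadingSign δ (-y) = -leadingSign δ y := by
  have hne := apply_leadingIndex_ne_zero hδ h
  simp only [leadingSign, leadingIndex_neg, h, forall_true_left, Pi.neg_apply, neg_pos]
  rcases hne.lt_or_gt with hlt | hgt
  · simp [hlt, hlt.not_gt]
  · simp [hgt, hgt.not_gt]

theorem leadingSign_eq_one_of_nonneg (hδ : 0 < δ) (hy : 0 ≤ y) : leadingSign δ y = 1 :=
  if_pos fun h => (hy _).lt_of_ne' (apply_leadingIndex_ne_zero hδ h)

theorem pos_of_abs_sub_lt_add {b c : R} (hb : 0 < b) (hδb : δ ≤ |b|) (hδc : δ ≤ |c|)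
    (hbc : |b - c| < δ + δ) : 0 < c := by
  by_contra! hc
  rw [abs_of_pos hb] at hδb
  rw [abs_of_nonpos hc] at hδc
  refine (add_le_add hδb hδc).not_gt ?_
  rw [← sub_eq_add_neg]
  exact (le_abs_self _).trans_lt hbc

theorem leadingSign_congr (hyz : ∀ i, |y i - z i| < δ + δ)
    (h : leadingIndex δ y = leadingIndex δ z) : leadingSign δ y = leadingSign δ z := by
  have hyi := fun hz => le_abs_apply_leadingIndex (δ := δ) (y := y) hz
  simp only [leadingSign, h] at hyi ⊢
  refine if_congr (forall_congr' fun hz => ⟨fun hpos => ?_, fun hpos => ?_⟩) rfl rfl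
  · exact pos_of_abs_sub_lt_add hpos (hyi hz) (le_abs_apply_leadingIndex hz) (hyz _)
  · exact pos_of_abs_sub_lt_add hpos (le_abs_apply_leadingIndex hz) (hyi hz)
      (abs_sub_comm (y _) (z _) ▸ hyz _)

end LeadingCoordinate

/-! ### Kuhn's triangulation -/

/-- A simplex of Kuhn's triangulation of `ℝⁿ`: its vertices are reached from `base` by increasing
the coordinates by `1` one after the other, coordinate `i` being the one numbered `order i`. -/
@[ext]
structure KuhnSimplex (n : ℕ) where
  /-- the smallest vertex -/
  base : Fin n → ℤ
  /-- the position of each coordinate in the order of increase -/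
  order : Equiv.Perm (Fin n)

namespace KuhnSimplex

section Vertices

variable {n : ℕ} (τ : KuhnSimplex n)

/-- The `j`-th vertex of a Kuhn simplex of dimension `n`, meaningful for `j ≤ n`. -/
def vertex (j : ℕ) : Fin n → ℤ := fun i => τ.base i + if (τ.order i : ℕ) < j then 1 else 0

/-- The vertex set of a Kuhn simplex. -/
def vertices : Finset (Fin n → ℤ) := (Finset.range (n + 1)).image τ.vertex

variable {τ}

theorem mem_vertices {v : Fin n → ℤ} : v ∈ τ.vertices ↔ ∃ j ≤ n, τ.vertex j = v := by
  simp only [vertices, Finset.mem_image, Finset.mem_range, Nat.lt_succ_iff]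

theorem vertex_mem_vertices {j : ℕ} (hj : j ≤ n) : τ.vertex j ∈ τ.vertices :=
  mem_vertices.2 ⟨j, hj, rfl⟩

theorem vertex_zero : τ.vertex 0 = τ.base := by
  funext i
  simp [vertex]

theorem base_mem_vertices : τ.base ∈ τ.vertices :=
  vertex_zero (τ := τ) ▸ vertex_mem_vertices n.zero_le

theorem vertex_injOn (τ : KuhnSimplex n) : Set.InjOn τ.vertex (Finset.range (n + 1)) := by
  have hne : ∀ j k, j < k → k ≤ n → τ.vertex j ≠ τ.vertex k := fun j k hjk hk h => by
    have := congrFun h (τ.order.symm ⟨j, hjk.trans_le hk⟩)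
    simp [vertex, hjk] at this
  intro j hj k hk h
  rw [Finset.coe_range, Set.mem_Iio, Nat.lt_succ_iff] at hj hk
  rcases lt_trichotomy j k with hjk | hjk | hjk
  · exact absurd h (hne j k hjk hk)
  · exact hjk
  · exact absurd h.symm (hne k j hjk hj)

theorem card_vertices (τ : KuhnSimplex n) : #τ.vertices = n + 1 := by
  rw [vertices, Finset.card_image_of_injOn τ.vertex_injOn, Finset.card_range]

theorem dist_le_one_of_mem_vertices {v w : Fin n → ℤ} (hv : v ∈ τ.vertices)
    (hw : w ∈ τ.vertices) : dist v w ≤ 1 := by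
  obtain ⟨j, -, rfl⟩ := mem_vertices.1 hv
  obtain ⟨k, -, rfl⟩ := mem_vertices.1 hw
  refine (dist_pi_le_iff zero_le_one).2 fun i => ?_
  simp only [vertex, dist_add_left]
  split_ifs <;> simp

theorem finite_setOf_vertices_subset (U : Finset (Fin n → ℤ)) :
    {τ : KuhnSimplex n | τ.vertices ⊆ U}.Finite := by
  have hinj : Function.Injective fun τ : KuhnSimplex n => (τ.base, τ.order) := fun τ τ' h =>
    KuhnSimplex.ext (congrArg Prod.fst h) (congrArg Prod.snd h)
  refine ((U.finite_toSet.prod Set.finite_univ).preimage hinj.injOn).subset fun τ hτ => ?_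
  exact ⟨hτ base_mem_vertices, Set.mem_univ _⟩

/-- The Kuhn simplices with all vertices in `U`. -/
noncomputable def within (U : Finset (Fin n → ℤ)) : Finset (KuhnSimplex n) :=
  (finite_setOf_vertices_subset U).toFinset

theorem mem_within {U : Finset (Fin n → ℤ)} : τ ∈ within U ↔ τ.vertices ⊆ U :=
  Set.Finite.mem_toFinset _

end Vertices

section Antipode

variable {n : ℕ}

instance : InvolutiveNeg (KuhnSimplex n) where
  neg τ := ⟨fun i => -τ.base i - 1, τ.order.trans Fin.revPerm⟩
  neg_neg τ := by ext <;> simp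

theorem vertex_neg (τ : KuhnSimplex n) {j : ℕ} (hj : j ≤ n) :
    (-τ).vertex j = -τ.vertex (n - j) := by
  funext i
  have hrev : ((-τ).order i : ℕ) = n - (τ.order i + 1) := Fin.val_rev _
  have hbase : (-τ).base i = -τ.base i - 1 := rfl
  simp only [vertex, Pi.neg_apply, hrev, hbase]
  grind

theorem vertices_neg (τ : KuhnSimplex n) : (-τ).vertices = τ.vertices.image Neg.neg := by
  ext v
  simp only [Finset.mem_image, mem_vertices]
  constructor
  · rintro ⟨j, hj, rfl⟩
    exact ⟨_, ⟨n - j, n.sub_le j, rfl⟩, (τ.vertex_neg hj).symm⟩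
  · rintro ⟨_, ⟨j, hj, rfl⟩, rfl⟩
    exact ⟨n - j, n.sub_le j, by rw [vertex_neg τ (n.sub_le j), Nat.sub_sub_self hj]⟩

end Antipode

section Flip

variable {n : ℕ}

/-- The same simplex with the numbers `i` and `j` of two coordinates exchanged. -/
def swap (τ : KuhnSimplex n) (i j : Fin n) : KuhnSimplex n :=
  ⟨τ.base, τ.order.trans (Equiv.swap i j)⟩

theorem swap_swap (τ : KuhnSimplex n) (i j : Fin n) : (τ.swap i j).swap i j = τ := by
  ext <;> simp [swap]

theorem swap_ne (τ : KuhnSimplex n) {i j : Fin n} (hij : i ≠ j) : τ.swap i j ≠ τ := fun h => by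
  have := congrArg (fun τ' => τ'.order (τ.order.symm i)) h
  simp [swap, hij.symm] at this

theorem vertex_swap (τ : KuhnSimplex n) {i j : Fin n} {k : ℕ} (hk : (i : ℕ) < k ↔ (j : ℕ) < k) :
    (τ.swap i j).vertex k = τ.vertex k := by
  funext l
  simp only [vertex, swap, Equiv.trans_apply, Equiv.swap_apply_def]
  grind

/-- Delete vertex `0` and append a new last vertex. -/
def rotate : Equiv.Perm (KuhnSimplex (n + 1)) where
  toFun τ := ⟨τ.vertex 1, τ.order.trans (finRotate (n + 1)).symm⟩
  invFun τ := ⟨fun i => τ.base i - if τ.order i = Fin.last n then 1 else 0,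
    τ.order.trans (finRotate (n + 1))⟩
  left_inv τ := by
    ext i
    · simp only [vertex, Nat.lt_one_iff, Fin.val_eq_zero_iff, Equiv.trans_apply,
        Equiv.symm_apply_eq, finRotate_last, add_sub_cancel_right]
    · simp
  right_inv τ := by
    ext i
    · simp only [vertex, Nat.lt_one_iff, Fin.val_eq_zero_iff, Equiv.trans_apply,
        ← finRotate_last, (finRotate (n + 1)).apply_eq_iff_eq, sub_add_cancel]
    · simp

theorem vertex_rotate (τ : KuhnSimplex (n + 1)) {j : ℕ} (hj : j ≤ n) :
    (rotate τ).vertex j = τ.vertex (j + 1) := by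
  funext i
  obtain ⟨k, hk⟩ := (finRotate (n + 1)).surjective (τ.order i)
  simp only [vertex, rotate, Equiv.coe_fn_mk, Equiv.trans_apply, ← hk, Equiv.symm_apply_apply,
    coe_finRotate, Fin.ext_iff, Fin.val_last]
  grind

/-- The other marked simplex `(τ', k)` such that deleting the marked vertices of `(τ, j)` and
`(τ', k)` leaves the same facet. -/
def flip (p : KuhnSimplex (n + 1) × ℕ) : KuhnSimplex (n + 1) × ℕ :=
  if p.2 = 0 then (rotate p.1, n + 1)
  else if h : p.2 < n + 1 then (p.1.swap ⟨p.2 - 1, by lia⟩ ⟨p.2, h⟩, p.2)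
  else (rotate.symm p.1, 0)

theorem flip_zero (τ : KuhnSimplex (n + 1)) : flip (τ, 0) = (rotate τ, n + 1) :=
  if_pos rfl

theorem flip_last (τ : KuhnSimplex (n + 1)) : flip (τ, n + 1) = (rotate.symm τ, 0) := by
  simp [flip]

theorem flip_interior (τ : KuhnSimplex (n + 1)) {j : ℕ} (hj : j ≠ 0) (h : j < n + 1) :
    flip (τ, j) = (τ.swap ⟨j - 1, by lia⟩ ⟨j, h⟩, j) := by
  simp [flip, hj, h]

theorem flip_flip (p : KuhnSimplex (n + 1) × ℕ) (hp : p.2 ≤ n + 1) : flip (flip p) = p := by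
  obtain ⟨τ, j⟩ := p
  obtain rfl | ⟨h0, hn⟩ | rfl : j = 0 ∨ (j ≠ 0 ∧ j < n + 1) ∨ j = n + 1 := by lia
  · rw [flip_zero, flip_last, Equiv.symm_apply_apply]
  · rw [flip_interior τ h0 hn, flip_interior _ h0 hn, swap_swap]
  · rw [flip_last, flip_zero, Equiv.apply_symm_apply]

theorem flip_ne (p : KuhnSimplex (n + 1) × ℕ) (hp : p.2 ≤ n + 1) : flip p ≠ p := by
  obtain ⟨τ, j⟩ := p
  intro h
  obtain rfl | ⟨h0, hn⟩ | rfl : j = 0 ∨ (j ≠ 0 ∧ j < n + 1) ∨ j = n + 1 := by lia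
  · exact absurd (congrArg Prod.snd (flip_zero τ ▸ h)) n.succ_ne_zero
  · refine τ.swap_ne ?_ (congrArg Prod.fst (flip_interior τ h0 hn ▸ h))
    simp only [ne_eq, Fin.mk.injEq]
    lia
  · exact absurd (congrArg Prod.snd (flip_last τ ▸ h)) n.succ_ne_zero.symm

theorem flip_snd_le (p : KuhnSimplex (n + 1) × ℕ) (hp : p.2 ≤ n + 1) : (flip p).2 ≤ n + 1 := by
  obtain ⟨τ, j⟩ := p
  obtain rfl | ⟨h0, hn⟩ | rfl : j = 0 ∨ (j ≠ 0 ∧ j < n + 1) ∨ j = n + 1 := by lia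
  · rw [flip_zero]
  · rwa [flip_interior τ h0 hn]
  · rw [flip_last]
    exact Nat.zero_le _

/-- The facet of `p.1` opposite to the marked vertex. -/
def facet (p : KuhnSimplex (n + 1) × ℕ) : Finset (Fin (n + 1) → ℤ) :=
  p.1.vertices.erase (p.1.vertex p.2)

theorem card_facet (p : KuhnSimplex (n + 1) × ℕ) (hp : p.2 ≤ n + 1) : #(facet p) = n + 1 := by
  rw [facet, Finset.card_erase_of_mem (vertex_mem_vertices hp), card_vertices, Nat.add_sub_cancel]

theorem mem_facet {p : KuhnSimplex (n + 1) × ℕ} (hp : p.2 ≤ n + 1) {v : Fin (n + 1) → ℤ} :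
    v ∈ facet p ↔ ∃ k ≤ n + 1, k ≠ p.2 ∧ p.1.vertex k = v := by
  rw [facet, Finset.mem_erase, mem_vertices]
  constructor
  · rintro ⟨hne, k, hk, rfl⟩
    exact ⟨k, hk, fun h => hne (h ▸ rfl), rfl⟩
  · rintro ⟨k, hk, hne, rfl⟩
    refine ⟨fun h => hne (p.1.vertex_injOn ?_ ?_ h), k, hk, rfl⟩ <;> simpa [Nat.lt_succ_iff]

theorem facet_subset_facet_flip (p : KuhnSimplex (n + 1) × ℕ) (hp : p.2 ≤ n + 1) :
    facet p ⊆ facet (flip p) := by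
  intro v hv
  obtain ⟨k, hk, hne, rfl⟩ := (mem_facet hp).1 hv
  refine (mem_facet (flip_snd_le p hp)).2 ?_
  obtain ⟨τ, j⟩ := p
  dsimp only at hp hne ⊢
  obtain rfl | ⟨h0, hn⟩ | rfl : j = 0 ∨ (j ≠ 0 ∧ j < n + 1) ∨ j = n + 1 := by lia
  · rw [flip_zero]
    refine ⟨k - 1, by lia, by lia, ?_⟩
    rw [vertex_rotate τ (by lia), Nat.sub_add_cancel (Nat.pos_of_ne_zero hne)]
  · rw [flip_interior τ h0 hn]
    exact ⟨k, hk, hne, vertex_swap τ (by lia)⟩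
  · rw [flip_last]
    refine ⟨k + 1, by lia, k.succ_ne_zero, ?_⟩
    rw [← vertex_rotate _ (by lia), Equiv.apply_symm_apply]

theorem facet_flip (p : KuhnSimplex (n + 1) × ℕ) (hp : p.2 ≤ n + 1) :
    facet (flip p) = facet p := by
  refine (facet_subset_facet_flip p hp).antisymm' ?_
  simpa only [flip_flip p hp] using facet_subset_facet_flip (flip p) (flip_snd_le p hp)

end Flip

end KuhnSimplex

/-! ### Ky Fan's parity argument and Tucker's lemma -/

section Fan

variable {n : ℕ}

open KuhnSimplex

theorem sum_vertices_erase {M : Type*} [AddCommMonoid M] (f : Finset (Fin (n + 1) → ℤ) → M)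
    (τ : KuhnSimplex (n + 1)) :
    ∑ v ∈ τ.vertices, f (τ.vertices.erase v) = ∑ j ∈ Finset.range (n + 2), f (facet (τ, j)) :=
  Finset.sum_image τ.vertex_injOn

/-- Facets are counted once from either side, so only facets in the boundary of `U` contribute. -/
theorem sum_alternatingIndicator_within {α : Type*} [LinearOrder α]
    {U : Finset (Fin (n + 1) → ℤ)} {a : (Fin (n + 1) → ℤ) → α} {s : (Fin (n + 1) → ℤ) → ℤˣ}
    (hs : ∀ v ∈ U, ∀ w ∈ U, dist v w ≤ 1 → a v = a w → s v = s w)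
    (hbdry : ∀ F ⊆ U, #F = n + 1 → ∀ w ∉ U, (∀ v ∈ F, dist v w ≤ 1) → ¬ Set.InjOn a F) :
    ∑ τ ∈ within U, (alternatingIndicator a s 1 τ.vertices +
      alternatingIndicator a s (-1) τ.vertices) = 0 := by
  have hlocal : ∀ τ ∈ within U, alternatingIndicator a s 1 τ.vertices +
      alternatingIndicator a s (-1) τ.vertices =
        ∑ j ∈ Finset.range (n + 2), alternatingIndicator a s 1 (facet (τ, j)) := by
    intro τ hτ
    rw [← sum_vertices_erase, sum_alternatingIndicator_erase]
    exact fun v hv w hw => hs v (mem_within.1 hτ hv) w (mem_within.1 hτ hw)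
      (dist_le_one_of_mem_vertices hv hw)
  have hmark : ∀ p : KuhnSimplex (n + 1) × ℕ, p ∈ within U ×ˢ Finset.range (n + 2) ↔
      p.1.vertices ⊆ U ∧ p.2 ≤ n + 1 := fun p => by
    rw [Finset.mem_product, mem_within, Finset.mem_range, Nat.lt_succ_iff]
  have hinner : ∀ p ∈ within U ×ˢ Finset.range (n + 2),
      alternatingIndicator a s 1 (facet p) ≠ 0 → (flip p).1.vertices ⊆ U := by
    intro p hp hne w hw
    obtain ⟨hpU, hp⟩ := (hmark p).1 hp
    by_contra hwU
    refine hne (alternatingIndicator_of_not fun h => ?_)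
    refine hbdry (facet p) ((Finset.erase_subset _ _).trans hpU) (card_facet p hp) w hwU
      (fun v hv => dist_le_one_of_mem_vertices ?_ hw) h.1
    exact Finset.mem_of_mem_erase (facet_subset_facet_flip p hp hv)
  rw [Finset.sum_congr rfl hlocal, ← Finset.sum_product', ← Finset.sum_filter_of_ne hinner]
  refine Finset.sum_involution (fun p _ => flip p) ?_ ?_ ?_ ?_ <;>
    simp only [Finset.mem_filter, hmark, and_imp]
  · intro p _ hp _
    rw [facet_flip p hp, CharTwo.add_self_eq_zero]
  · exact fun p _ hp _ _ => flip_ne p hp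
  · exact fun p hpU hp hflip => ⟨⟨hflip, flip_snd_le p hp⟩, (flip_flip p hp).symm ▸ hpU⟩
  · exact fun p _ hp _ => flip_flip p hp

/-- Away from the origin, simplices with first signs `1` and `-1` are exchanged by `-1`. -/
theorem sum_alternatingIndicator_not_mem {α : Type*} [LinearOrder α] {U : Finset (Fin n → ℤ)}
    {a : (Fin n → ℤ) → α} {s : (Fin n → ℤ) → ℤˣ} (hU : ∀ v ∈ U, -v ∈ U)
    (ha : ∀ v ∈ U, a (-v) = a v) (hs : ∀ v ∈ U, v ≠ 0 → s (-v) = -s v) :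
    ∑ τ ∈ within U with 0 ∉ τ.vertices, (alternatingIndicator a s 1 τ.vertices +
      alternatingIndicator a s (-1) τ.vertices) = 0 := by
  have hneg : ∀ τ : KuhnSimplex n, τ ∈ {τ ∈ within U | 0 ∉ τ.vertices} →
      -τ ∈ {τ ∈ within U | 0 ∉ τ.vertices} := by
    simp only [Finset.mem_filter, mem_within, vertices_neg, Finset.mem_image, neg_eq_zero,
      exists_eq_right, and_imp]
    exact fun τ hτU h0 => ⟨Finset.image_subset_iff.2 fun v hv => hU v (hτU hv), h0⟩
  have hsum : ∑ τ ∈ within U with 0 ∉ τ.vertices, alternatingIndicator a s 1 τ.vertices =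
      ∑ τ ∈ within U with 0 ∉ τ.vertices, alternatingIndicator a s (-1) τ.vertices := by
    refine Finset.sum_nbij' Neg.neg Neg.neg hneg hneg (fun τ _ => neg_neg τ)
      (fun τ _ => neg_neg τ) fun τ hτ => ?_
    rw [Finset.mem_filter, mem_within] at hτ
    rw [vertices_neg]
    exact alternatingIndicator_congr (isAlternating_image_neg_iff (fun v hv => ha v (hτ.1 hv))
      fun v hv => hs v (hτ.1 hv) (ne_of_mem_of_not_mem hv hτ.2)).symm
  rw [Finset.sum_add_distrib, hsum, CharTwo.add_self_eq_zero]

theorem image_eq_range_card {V : Type*} {F : Finset V} {a : V → ℕ} (hinj : Set.InjOn a F)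
    (ha : ∀ v ∈ F, a v < #F) : F.image a = Finset.range #F := by
  refine Finset.eq_of_subset_of_card_le ?_ ?_
  · exact Finset.image_subset_iff.2 fun v hv => Finset.mem_range.2 (ha v hv)
  · rw [Finset.card_image_of_injOn hinj, Finset.card_range]

theorem card_filter_lt_eq_self {V : Type*} {F : Finset V} {a : V → ℕ} (hinj : Set.InjOn a F)
    (ha : ∀ v ∈ F, a v < #F) {v : V} (hv : v ∈ F) : #{w ∈ F | a w < a v} = a v := by
  have himage := Finset.filter_image (s := F) (f := a) (p := (· < a v))
  rw [image_eq_range_card hinj ha] at himage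
  rw [← Finset.card_image_of_injOn (hinj.mono (Finset.filter_subset _ F)), ← himage]
  have := ha v hv
  rw [show {k ∈ Finset.range #F | k < a v} = Finset.range (a v) by grind, Finset.card_range]

theorem isAlternating_leading_iff {F : Finset (Fin n → ℤ)} (hF : #F = n + 1) {ε : ℤˣ} (k : ℕ) :
    IsAlternating (fun v => k + leadingIndex 1 v)
        (fun v => leadingSign 1 v * (-1) ^ leadingIndex 1 v) ε F ↔
      Set.InjOn (leadingIndex 1) (F : Set (Fin n → ℤ)) ∧ ∀ v ∈ F, leadingSign 1 v = ε := by
  have hlt : ∀ v ∈ F, leadingIndex 1 v < #F := fun v _ =>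
    hF ▸ Nat.lt_succ_iff.2 (leadingIndex_le 1 v)
  simp only [IsAlternating, Set.InjOn, add_right_inj, add_lt_add_iff_left]
  refine and_congr_right fun hinj => forall₂_congr fun v hv => ?_
  rw [card_filter_lt_eq_self hinj hlt hv, mul_left_inj]

/-- The Kuhn simplex `0 ≤ xₙ₋₁ ≤ ⋯ ≤ x₁ ≤ x₀ ≤ 1`, the only one at the origin that is alternating
for the leading coordinate labels. -/
def KuhnSimplex.origin (n : ℕ) : KuhnSimplex n := ⟨0, Fin.revPerm⟩

theorem zero_mem_vertices_origin : 0 ∈ (origin n).vertices :=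
  base_mem_vertices (τ := origin n)

theorem leadingIndex_vertex_origin {j : ℕ} (hj : j ≤ n) :
    leadingIndex 1 ((origin n).vertex j) = n - j := by
  have hvertex : ∀ i : Fin n, (origin n).vertex j i = if n - j ≤ i then 1 else 0 := fun i => by
    simp only [vertex, origin, Pi.zero_apply, zero_add, Fin.revPerm_apply, Fin.val_rev]
    grind
  refine le_antisymm ?_ ?_
  · rcases j.eq_zero_or_pos with rfl | hj0
    · exact leadingIndex_le 1 _
    · refine leadingIndex_le_of_le_abs (i := ⟨n - j, by lia⟩) ?_
      simp [hvertex]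
  · by_contra! hlt
    have := le_abs_apply_leadingIndex (hlt.trans_le (n.sub_le j))
    simp [hvertex, hlt.not_ge] at this

theorem leadingIndex_injOn_origin :
    Set.InjOn (leadingIndex 1) ((origin n).vertices : Set (Fin n → ℤ)) := by
  intro v hv w hw h
  obtain ⟨j, hj, rfl⟩ := mem_vertices.1 hv
  obtain ⟨k, hk, rfl⟩ := mem_vertices.1 hw
  rw [leadingIndex_vertex_origin hj, leadingIndex_vertex_origin hk] at h
  rw [show j = k by lia]

theorem leadingSign_of_mem_origin {v : Fin n → ℤ} (hv : v ∈ (origin n).vertices) :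
    leadingSign 1 v = 1 := by
  obtain ⟨j, -, rfl⟩ := mem_vertices.1 hv
  refine leadingSign_eq_one_of_nonneg one_pos fun i => ?_
  simp only [vertex, origin, Pi.zero_apply, zero_add]
  exact ite_nonneg zero_le_one le_rfl

theorem base_eq_zero {τ : KuhnSimplex n} (h0 : 0 ∈ τ.vertices)
    (hsign : ∀ v ∈ τ.vertices, leadingSign 1 v = 1) : τ.base = 0 := by
  obtain ⟨j, -, hj⟩ := mem_vertices.1 h0
  have hnonneg : 0 ≤ -τ.base := fun i => by
    have := congrFun hj i
    simp only [vertex, Pi.zero_apply, Pi.neg_apply] at this ⊢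
    grind
  by_contra hne
  obtain ⟨i, hi⟩ := Function.ne_iff.1 hne
  have hlead := leadingIndex_lt_iff.2 ⟨i, Int.one_le_abs hi⟩
  have := leadingSign_neg one_pos hlead
  rw [leadingSign_eq_one_of_nonneg one_pos hnonneg, hsign _ base_mem_vertices] at this
  exact absurd this (by decide)

theorem order_strictAnti {τ : KuhnSimplex n} (hbase : τ.base = 0)
    (hinj : Set.InjOn (leadingIndex 1) (τ.vertices : Set (Fin n → ℤ))) : StrictAnti τ.order := by
  have hvertex : ∀ j i, τ.vertex j i = if (τ.order i : ℕ) < j then 1 else 0 := fun j i => by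
    rw [vertex, hbase, Pi.zero_apply, zero_add]
  have himage : τ.vertices.image (leadingIndex 1) = Finset.range (n + 1) :=
    τ.card_vertices ▸ image_eq_range_card hinj fun v _ =>
      τ.card_vertices ▸ Nat.lt_succ_iff.2 (leadingIndex_le 1 v)
  intro i' i hi
  obtain ⟨v, hv, hvi⟩ := Finset.mem_image.1 <|
    himage ▸ Finset.mem_range.2 (i.isLt.trans n.lt_succ_self)
  obtain ⟨j, -, rfl⟩ := mem_vertices.1 hv
  have hlt : (τ.order i : ℕ) < j := by
    by_contra hge
    have := le_abs_apply_leadingIndex (hvi.trans_lt i.isLt)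
    simp [hvertex, hvi, hge] at this
  have hge : j ≤ τ.order i' := by
    by_contra! hlt'
    have := leadingIndex_le_of_le_abs (δ := 1) (y := τ.vertex j) (i := i') (by simp [hvertex, hlt'])
    exact this.not_gt (hvi ▸ hi)
  exact Fin.lt_def.2 (hlt.trans_le hge)

theorem eq_origin {τ : KuhnSimplex n} (h0 : 0 ∈ τ.vertices)
    (hinj : Set.InjOn (leadingIndex 1) (τ.vertices : Set (Fin n → ℤ)))
    (hsign : ∀ v ∈ τ.vertices, leadingSign 1 v = 1) : τ = origin n := by
  have hbase := base_eq_zero h0 hsign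
  have hmono : StrictMono fun i : Fin n => τ.order i.rev :=
    (order_strictAnti hbase hinj).comp Fin.rev_strictAnti
  have hid := hmono.eq_id
  refine KuhnSimplex.ext hbase (Equiv.ext fun i => ?_)
  exact (congrArg τ.order i.rev_rev).symm.trans (congrFun hid i.rev)

theorem sum_alternatingIndicator_mem_zero {U : Finset (Fin n → ℤ)} {a : (Fin n → ℤ) → ℕ}
    {s : (Fin n → ℤ) → ℤˣ} {k : ℕ} (hU : (origin n).vertices ⊆ U)
    (ha : ∀ v, dist v 0 ≤ 1 → a v = k + leadingIndex 1 v)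
    (hs : ∀ v, dist v 0 ≤ 1 → s v = leadingSign 1 v * (-1) ^ leadingIndex 1 v) :
    ∑ τ ∈ within U with 0 ∈ τ.vertices, (alternatingIndicator a s 1 τ.vertices +
      alternatingIndicator a s (-1) τ.vertices) = 1 := by
  have halt : ∀ τ : KuhnSimplex n, 0 ∈ τ.vertices → ∀ ε, IsAlternating a s ε τ.vertices ↔
      Set.InjOn (leadingIndex 1) (τ.vertices : Set (Fin n → ℤ)) ∧
        ∀ v ∈ τ.vertices, leadingSign 1 v = ε := fun τ h0 ε =>
    (isAlternating_congr (fun v hv => ha v (dist_le_one_of_mem_vertices hv h0))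
      fun v hv => hs v (dist_le_one_of_mem_vertices hv h0)).trans
        (isAlternating_leading_iff τ.card_vertices k)
  have hneg : ∀ τ : KuhnSimplex n, 0 ∈ τ.vertices → alternatingIndicator a s (-1) τ.vertices = 0 :=
    fun τ h0 => alternatingIndicator_of_not fun h => by
      have := ((halt τ h0 _).1 h).2 0 h0
      rw [leadingSign_eq_one_of_nonneg one_pos le_rfl] at this
      exact absurd this (by decide)
  rw [Finset.sum_eq_single_of_mem (origin n)]
  · rw [hneg _ zero_mem_vertices_origin, add_zero]
    exact if_pos ((halt _ zero_mem_vertices_origin 1).2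
      ⟨leadingIndex_injOn_origin, fun v => leadingSign_of_mem_origin⟩)
  · exact Finset.mem_filter.2 ⟨mem_within.2 hU, zero_mem_vertices_origin⟩
  · intro τ hτ hne
    have h0 := (Finset.mem_filter.1 hτ).2
    rw [hneg τ h0, add_zero]
    exact alternatingIndicator_of_not fun h =>
      hne (eq_origin h0 ((halt τ h0 1).1 h).1 ((halt τ h0 1).1 h).2)

theorem abs_sub_lt_of_dist_le_one {v w : Fin n → ℤ} (h : dist v w ≤ 1) (i : Fin n) :
    |v i - w i| < 1 + 1 := by
  have := (dist_le_pi_dist v w i).trans h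
  rw [Int.dist_eq] at this
  exact Int.lt_add_one_of_le (mod_cast this)

/-- Tucker's lemma for a partial labelling of the lattice points of `U`: the points with
`n ≤ a v` count as unlabelled. -/
theorem exists_complementary_edge {U : Finset (Fin (n + 1) → ℤ)} {a : (Fin (n + 1) → ℤ) → ℕ}
    {s : (Fin (n + 1) → ℤ) → ℤˣ} (hU : ∀ v ∈ U, -v ∈ U) (ha : ∀ v ∈ U, a (-v) = a v)
    (hs : ∀ v ∈ U, a v < n → s (-v) = -s v) (horigin : ∀ v, dist v 0 ≤ 1 → v ∈ U ∧ n ≤ a v)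
    (hbdry : ∀ v ∈ U, ∀ w ∉ U, dist v w ≤ 1 → a v < n) :
    ∃ v ∈ U, ∃ w ∈ U, dist v w ≤ 1 ∧ a v < n ∧ a v = a w ∧ s v ≠ s w := by
  by_contra! hno
  let A : (Fin (n + 1) → ℤ) → ℕ := fun v => if a v < n then a v else n + leadingIndex 1 v
  let S : (Fin (n + 1) → ℤ) → ℤˣ := fun v =>
    if a v < n then s v else leadingSign 1 v * (-1) ^ leadingIndex 1 v
  have hodd : ∀ v ∈ U, v ≠ 0 → S (-v) = -S v := fun v hv hne => by
    simp only [S, ha v hv, leadingIndex_neg]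
    split_ifs with h
    · exact hs v hv h
    · rw [leadingSign_neg one_pos, neg_mul]
      exact leadingIndex_lt_iff.2 ((Function.ne_iff.1 hne).imp fun i => Int.one_le_abs)
  have hno' : ∀ v ∈ U, ∀ w ∈ U, dist v w ≤ 1 → A v = A w → S v = S w := by
    intro v hv w hw hvw hA
    by_cases hv' : a v < n <;> by_cases hw' : a w < n <;>
      simp only [A, S, hv', hw', if_true, if_false] at hA ⊢
    · exact hno v hv w hw hvw hv' hA
    · lia
    · lia
    · have hidx := Nat.add_left_cancel hA
      rw [hidx, leadingSign_congr (abs_sub_lt_of_dist_le_one hvw) hidx]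
  have htotal : ∑ τ ∈ within U, (alternatingIndicator A S 1 τ.vertices +
      alternatingIndicator A S (-1) τ.vertices) = 0 := by
    refine sum_alternatingIndicator_within hno' fun F hF hcard w hw hFw h => ?_
    have hlt : ∀ v ∈ F, A v ∈ Finset.range n := fun v hv => by
      have := hbdry v (hF hv) w hw (hFw v hv)
      simpa only [A, if_pos this, Finset.mem_range]
    have := Finset.card_le_card_of_injOn A hlt h
    rw [hcard, Finset.card_range] at this
    lia
  have haway := sum_alternatingIndicator_not_mem (a := A) (s := S) hU
    (fun v hv => by simp only [A, ha v hv, leadingIndex_neg]) hodd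
  have hnear := sum_alternatingIndicator_mem_zero (U := U) (a := A) (s := S) (k := n)
    (fun v hv => (horigin v (dist_le_one_of_mem_vertices hv zero_mem_vertices_origin)).1)
    (fun v hv => if_neg (horigin v hv).2.not_gt) fun v hv => if_neg (horigin v hv).2.not_gt
  rw [← Finset.sum_filter_add_sum_filter_not _ (fun τ => 0 ∈ τ.vertices), hnear, haway] at htotal
  exact absurd htotal (by decide)

end Fan

/-! ### The Borsuk–Ulam theorem -/

section Borsuk

open Metric

variable {n : ℕ}

theorem leadingIndex_lt_iff_le_norm {δ : ℝ} (hδ : 0 < δ) {y : Fin n → ℝ} :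
    leadingIndex δ y < n ↔ δ ≤ ‖y‖ := by
  rw [leadingIndex_lt_iff, ← not_lt, pi_norm_lt_iff hδ]
  simp

theorem dist_intCast_pi {ι : Type*} [Fintype ι] (v w : ι → ℤ) :
    dist (fun i => (v i : ℝ)) (fun i => (w i : ℝ)) = dist v w := by
  simp only [dist_pi_def, nndist_dist, Int.dist_cast_real]

theorem finite_setOf_smul_intCast_mem {ι : Type*} [Finite ι] {U : Set (ι → ℝ)}
    (hU : Bornology.IsBounded U) {ε : ℝ} (hε : 0 < ε) :
    {v : ι → ℤ | (ε • fun i => (v i : ℝ)) ∈ U}.Finite := by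
  have := Fintype.ofFinite ι
  lift ε to NNReal using hε.le
  have hanti : AntilipschitzWith ε⁻¹ fun v : ι → ℤ => (ε : ℝ) • fun i => (v i : ℝ) := by
    refine AntilipschitzWith.of_le_mul_dist fun v w => ?_
    rw [dist_smul₀, dist_intCast_pi, Real.norm_of_nonneg hε.le, NNReal.coe_inv,
      inv_mul_cancel_left₀ hε.ne']
  rw [← Set.inter_univ {v | _}]
  exact finite_isBounded_inter_isClosed DiscreteTopology.isDiscrete
    (hanti.isBounded_preimage hU) isClosed_univ

theorem half_le_norm_of_notMem {V F : Type*} [NormedAddCommGroup V] [NormedSpace ℝ V]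
    [FiniteDimensional ℝ V] [SeminormedAddCommGroup F] {U : Set V} {g : V → F} {δ ε : ℝ}
    (hdist : ∀ x ∈ closure U, ∀ y ∈ closure U, dist x y ≤ ε → dist (g x) (g y) < δ / 2)
    (hfr : ∀ x ∈ frontier U, δ ≤ ‖g x‖) {x y : V} (hx : x ∈ U) (hy : y ∉ U) (hxy : dist x y ≤ ε) :
    δ / 2 ≤ ‖g x‖ := by
  obtain ⟨z, hz, hxz⟩ :=
    exists_mem_frontier_infDist_compl_eq_dist hx ((Set.ne_univ_iff_exists_notMem U).2 ⟨y, hy⟩)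
  have hgz := hdist x (subset_closure hx) z (frontier_subset_closure hz)
    (hxz ▸ (infDist_le_dist_of_mem hy).trans hxy)
  linarith [hfr z hz, norm_le_norm_add_norm_sub' (g z) (g x), dist_eq_norm' (g x) (g z)]

theorem exists_mem_frontier_norm_lt_of_dist_lt {U : Set (Fin (n + 1) → ℝ)}
    (hUb : Bornology.IsBounded U) (hneg : ∀ x ∈ U, -x ∈ U) {g : (Fin (n + 1) → ℝ) → Fin n → ℝ}
    (hodd : ∀ x ∈ U, g (-x) = -g x) {δ ε : ℝ} (hδ : 0 < δ) (hε : 0 < ε) (hball : closedBall 0 ε ⊆ U)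
    (hdist : ∀ x ∈ closure U, ∀ y ∈ closure U, dist x y ≤ ε → dist (g x) (g y) < δ / 2) :
    ∃ x ∈ frontier U, ‖g x‖ < δ := by
  by_contra! hfr
  let x : (Fin (n + 1) → ℤ) → Fin (n + 1) → ℝ := fun v => ε • fun i => (v i : ℝ)
  have hx0 : x 0 = 0 := by ext; simp [x]
  have hxneg : ∀ v, x (-v) = -x v := fun v => by ext; simp [x]
  have hxdist : ∀ {v w}, dist v w ≤ 1 → dist (x v) (x w) ≤ ε := fun {v w} h => by
    rw [dist_smul₀, dist_intCast_pi, Real.norm_of_nonneg hε.le]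
    exact mul_le_of_le_one_right hε.le h
  have h0 : 0 ∈ U := hball (mem_closedBall_self hε.le)
  have hg0 : g 0 = 0 := self_eq_neg.1 (by simpa using hodd 0 h0)
  have horigin : ∀ v, dist v 0 ≤ 1 → x v ∈ U ∧ n ≤ leadingIndex (δ / 2) (g (x v)) := by
    intro v hv
    have hxv := hxdist hv
    rw [hx0] at hxv
    have hvU := hball hxv
    refine ⟨hvU, not_lt.1 fun h => ?_⟩
    have := hdist _ (subset_closure hvU) _ (subset_closure h0) hxv
    rw [hg0, dist_zero_right] at this
    exact this.not_ge ((leadingIndex_lt_iff_le_norm (half_pos hδ)).1 h)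
  have hbdry : ∀ v, x v ∈ U → ∀ w, x w ∉ U → dist v w ≤ 1 →
      leadingIndex (δ / 2) (g (x v)) < n := by
    intro v hv w hw hvw
    exact (leadingIndex_lt_iff_le_norm (half_pos hδ)).2
      (half_le_norm_of_notMem hdist hfr hv hw (hxdist hvw))
  have hUfin := finite_setOf_smul_intCast_mem hUb hε
  have hmem : ∀ {v}, v ∈ hUfin.toFinset ↔ x v ∈ U := hUfin.mem_toFinset
  obtain ⟨v, hv, w, hw, hvw, -, hidx, hsign⟩ := exists_complementary_edge (U := hUfin.toFinset)
    (a := fun v => leadingIndex (δ / 2) (g (x v))) (s := fun v => leadingSign (δ / 2) (g (x v)))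
    (fun v hv => hmem.2 (hxneg v ▸ hneg _ (hmem.1 hv)))
    (fun v hv => by simp only [hxneg, hodd _ (hmem.1 hv), leadingIndex_neg])
    (fun v hv h => by simp only [hxneg, hodd _ (hmem.1 hv), leadingSign_neg (half_pos hδ) h])
    (fun v hv => (horigin v hv).imp_left hmem.2)
    fun v hv w hw => hbdry v (hmem.1 hv) w fun h => hw (hmem.2 h)
  refine hsign (leadingSign_congr (fun i => ?_) hidx)
  rw [add_halves, ← Real.dist_eq]
  refine (dist_le_pi_dist _ _ i).trans_lt ((hdist _ ?_ _ ?_ (hxdist hvw)).trans (half_lt_self hδ))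
  exacts [subset_closure (hmem.1 hv), subset_closure (hmem.1 hw)]

theorem exists_mem_frontier_eq_zero_pi {U : Set (Fin (n + 1) → ℝ)} (hUo : IsOpen U)
    (hUb : Bornology.IsBounded U) (h0 : 0 ∈ U) (hneg : ∀ x ∈ U, -x ∈ U)
    {g : (Fin (n + 1) → ℝ) → Fin n → ℝ} (hg : ContinuousOn g (closure U))
    (hodd : ∀ x ∈ U, g (-x) = -g x) : ∃ x ∈ frontier U, g x = 0 := by
  have hlt : ∀ δ > 0, ∃ x ∈ frontier U, ‖g x‖ < δ := by
    intro δ hδ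
    obtain ⟨η, hη, hgη⟩ := uniformContinuousOn_iff.1
      (hUb.isCompact_closure.uniformContinuousOn_of_continuous hg) (δ / 2) (half_pos hδ)
    obtain ⟨η', hη', hball⟩ := nhds_basis_closedBall.mem_iff.1 (hUo.mem_nhds h0)
    obtain ⟨ε, hε, hεη⟩ := exists_between (lt_min hη hη')
    rw [lt_min_iff] at hεη
    exact exists_mem_frontier_norm_lt_of_dist_lt hUb hneg hodd hδ hε
      ((closedBall_subset_closedBall hεη.2.le).trans hball)
      fun x hx y hy hxy => hgη x hx y hy (hxy.trans_lt hεη.1)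
  have hcompact : IsCompact (frontier U) :=
    hUb.isCompact_closure.of_isClosed_subset isClosed_frontier frontier_subset_closure
  obtain ⟨x, hx, -⟩ := hlt 1 one_pos
  obtain ⟨z, hz, hmin⟩ := hcompact.exists_isMinOn ⟨x, hx⟩
    (hg.norm.mono frontier_subset_closure)
  refine ⟨z, hz, norm_le_zero_iff.1 (not_lt.1 fun hpos => ?_)⟩
  obtain ⟨y, hy, hyz⟩ := hlt _ hpos
  exact hyz.not_ge (hmin hy)

theorem exists_mem_frontier_eq_zero {V F : Type*} [NormedAddCommGroup V] [NormedSpace ℝ V]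
    [FiniteDimensional ℝ V] [NormedAddCommGroup F] [NormedSpace ℝ F] [FiniteDimensional ℝ F]
    (hdim : Module.finrank ℝ F < Module.finrank ℝ V) {U : Set V} (hUo : IsOpen U)
    (hUb : Bornology.IsBounded U) (h0 : 0 ∈ U) (hneg : ∀ x ∈ U, -x ∈ U) {g : V → F}
    (hg : ContinuousOn g (closure U)) (hodd : ∀ x ∈ U, g (-x) = -g x) :
    ∃ x ∈ frontier U, g x = 0 := by
  obtain ⟨n, hn⟩ := Nat.exists_eq_succ_of_ne_zero (Nat.ne_zero_of_lt hdim)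
  let φ : (Fin (n + 1) → ℝ) ≃L[ℝ] V := ContinuousLinearEquiv.ofFinrankEq (by simp [hn])
  obtain ⟨ι, hι⟩ := (finrank_le_iff_exists_linearMap (R := ℝ) (M := F) (M' := Fin n → ℝ)).1
    (by rw [Module.finrank_fin_fun]; lia)
  have hmaps : Set.MapsTo φ (closure (φ ⁻¹' U)) (closure U) := by
    rw [← φ.preimage_closure]
    exact Set.mapsTo_preimage φ (closure U)
  obtain ⟨x, hx, hgx⟩ := exists_mem_frontier_eq_zero_pi (U := φ ⁻¹' U) (g := fun x => ι (g (φ x)))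
    (hUo.preimage φ.continuous) (φ.antilipschitz.isBounded_preimage hUb) (by simpa)
    (fun x hx => by simpa using hneg _ hx)
    (ι.continuous_of_finiteDimensional.comp_continuousOn (hg.comp φ.continuous.continuousOn hmaps))
    fun x hx => by simp only [map_neg, hodd _ hx]
  refine ⟨φ x, ?_, hι (hgx.trans (map_zero ι).symm)⟩
  exact Set.ext_iff.1 (φ.toHomeomorph.preimage_frontier U) x |>.2 hx

end Borsuk

section Linking

open Metric

variable {V X F : Type*} [NormedAddCommGroup V] [NormedSpace ℝ V] [FiniteDimensional ℝ V]
  [NormedAddCommGroup X] [NormedSpace ℝ X] [NormedAddCommGroup F] [NormedSpace ℝ F]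
  [FiniteDimensional ℝ F]

theorem exists_norm_eq_and_map_eq_zero (L : X →L[ℝ] F)
    (hdim : Module.finrank ℝ F < Module.finrank ℝ V) {r ρ : ℝ} (hr : 0 < r) (hρ : 0 < ρ)
    {γ : closedBall (0 : V) ρ → X} (hγ : Continuous γ) (hodd : ∀ v, γ (-v) = -γ v)
    (hsphere : ∀ v : closedBall (0 : V) ρ, ‖(v : V)‖ = ρ → r < ‖γ v‖) :
    ∃ v, ‖γ v‖ = r ∧ L (γ v) = 0 := by
  let g : V → X := Function.extend Subtype.val γ 0
  have hgγ : ∀ v : closedBall (0 : V) ρ, g v = γ v := Subtype.val_injective.extend_apply γ 0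
  have hg : ContinuousOn g (closedBall 0 ρ) := by
    rw [continuousOn_iff_continuous_domRestrict]
    exact hγ.congr fun v => (hgγ v).symm
  have hgodd : ∀ v ∈ closedBall 0 ρ, g (-v) = -g v := fun v hv => by
    have := hgγ (-⟨v, hv⟩)
    rw [hodd, ← hgγ] at this
    exact this
  have : IsAddTorsionFree X := .of_isTorsionFree ℝ X
  have hg0 : g 0 = 0 := self_eq_neg.1 (by simpa using hgodd 0 (mem_closedBall_self hρ.le))
  let U : Set V := ball 0 ρ ∩ g ⁻¹' ball 0 r
  have hclosure : closure U ⊆ closedBall 0 ρ ∩ g ⁻¹' closedBall 0 r :=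
    closure_minimal (Set.inter_subset_inter ball_subset_closedBall
      (Set.preimage_mono ball_subset_closedBall))
      (hg.preimage_isClosed_of_isClosed isClosed_closedBall isClosed_closedBall)
  have hUo : IsOpen U :=
    (hg.mono ball_subset_closedBall).isOpen_inter_preimage isOpen_ball isOpen_ball
  obtain ⟨v, hv, hLv⟩ := exists_mem_frontier_eq_zero (g := L ∘ g) hdim hUo
    (isBounded_ball.subset Set.inter_subset_left)
    ⟨mem_ball_self hρ, by simpa [hg0]⟩
    (fun v hv => ⟨by simpa using hv.1, by
      simpa [hgodd v (ball_subset_closedBall hv.1)] using hv.2⟩)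
    (L.continuous.comp_continuousOn (hg.mono (hclosure.trans Set.inter_subset_left)))
    fun v hv => by simp [hgodd v (ball_subset_closedBall hv.1)]
  obtain ⟨hvρ, hvr⟩ := hclosure (frontier_subset_closure hv)
  rw [Set.mem_preimage, mem_closedBall_zero_iff] at hvr
  refine ⟨⟨v, hvρ⟩, ?_, hgγ ⟨v, hvρ⟩ ▸ hLv⟩
  rw [← hgγ ⟨v, hvρ⟩]
  refine hvr.antisymm (not_lt.1 fun hlt => (hUo.frontier_eq ▸ hv).2 ⟨?_, by simpa⟩)
  rw [mem_ball_zero_iff]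
  refine (mem_closedBall_zero_iff.1 hvρ).lt_of_ne fun heq => ?_
  exact (hsphere ⟨v, hvρ⟩ heq).not_ge (hgγ ⟨v, hvρ⟩ ▸ hvr)

end Linking

section Ekeland

variable {M : Type*} {φ : M → ℝ} {α : ℝ}

/-- The points below `x` in the Bishop–Phelps order of slope `α` attached to `φ`. -/
def ekelandCone [PseudoMetricSpace M] (φ : M → ℝ) (α : ℝ) (x : M) : Set M :=
  {y | φ y + α * dist x y ≤ φ x}

section Pseudo

variable [PseudoMetricSpace M]

theorem mem_ekelandCone_self (φ : M → ℝ) (α : ℝ) (x : M) : x ∈ ekelandCone φ α x := by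
  simp [ekelandCone]

theorem ekelandCone_subset (hα : 0 ≤ α) {x y : M} (hy : y ∈ ekelandCone φ α x) :
    ekelandCone φ α y ⊆ ekelandCone φ α x := by
  intro z hz
  have := mul_le_mul_of_nonneg_left (dist_triangle x y z) hα
  simp only [ekelandCone, Set.mem_ofPred_eq] at hy hz ⊢
  linarith

theorem isClosed_ekelandCone (hφ : LowerSemicontinuous φ) (α : ℝ) (x : M) :
    IsClosed (ekelandCone φ α x) :=
  (hφ.add (by fun_prop : Continuous fun y => α * dist x y).lowerSemicontinuous).isClosed_preimage _

theorem exists_mem_ekelandCone_forall_dist_le (hα : 0 < α) (hφ : BddBelow (Set.range φ))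
    {ε : ℝ} (hε : 0 < ε) (x : M) :
    ∃ y ∈ ekelandCone φ α x, ∀ z ∈ ekelandCone φ α y, dist y z ≤ ε := by
  have hbdd : BddBelow (φ '' ekelandCone φ α x) := hφ.mono (Set.image_subset_range φ _)
  obtain ⟨_, ⟨y, hy, rfl⟩, hlt⟩ := exists_lt_of_csInf_lt
    ⟨φ x, Set.mem_image_of_mem φ (mem_ekelandCone_self φ α x)⟩
    (lt_add_of_pos_right (sInf (φ '' ekelandCone φ α x)) (mul_pos hα hε))
  refine ⟨y, hy, fun z hz => le_of_mul_le_mul_left ?_ hα⟩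
  have hinf := csInf_le hbdd (Set.mem_image_of_mem φ (ekelandCone_subset hα.le hy hz))
  have hyz : φ z + α * dist y z ≤ φ y := hz
  linarith

end Pseudo

theorem exists_ekeland [MetricSpace M] [CompleteSpace M] (hα : 0 < α)
    (hφ : LowerSemicontinuous φ) (hbdd : BddBelow (Set.range φ)) (x₀ : M) :
    ∃ x, φ x + α * dist x₀ x ≤ φ x₀ ∧ ∀ y ≠ x, φ x < φ y + α * dist x y := by
  choose f hmem hdist using fun (n : ℕ) (x : M) =>
    exists_mem_ekelandCone_forall_dist_le hα hbdd (ε := (1 / 2) ^ n) (by positivity) x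
  let x : ℕ → M := fun n => Nat.rec x₀ f n
  have hanti : Antitone fun n => ekelandCone φ α (x n) :=
    antitone_nat_of_succ_le fun n => ekelandCone_subset hα.le (hmem n (x n))
  have hball : ∀ n, ekelandCone φ α (x (n + 1)) ⊆ Metric.closedBall (x (n + 1)) ((1 / 2) ^ n) :=
    fun n y hy => (dist_comm _ _).trans_le (hdist n (x n) y hy)
  have hzero : Tendsto (fun n : ℕ => 2 * (1 / 2 : ℝ) ^ n) atTop (𝓝 0) := by
    simpa using (tendsto_pow_atTop_nhds_zero_of_lt_one (r := (1 / 2 : ℝ)) (by norm_num)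
      (by norm_num)).const_mul 2
  obtain ⟨z, hz⟩ := Metric.nonempty_iInter_of_nonempty_biInter
    (s := fun n => ekelandCone φ α (x (n + 1)))
    (fun n => isClosed_ekelandCone hφ α _) (fun n => Metric.isBounded_closedBall.subset (hball n))
    (fun N => ⟨x (N + 1), Set.mem_iInter₂.2 fun n hn =>
      hanti (Nat.succ_le_succ hn) (mem_ekelandCone_self φ α _)⟩)
    (squeeze_zero (fun n => Metric.diam_nonneg) (fun n => (Metric.diam_mono (hball n)
      Metric.isBounded_closedBall).trans (Metric.diam_closedBall (by positivity))) hzero)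
  rw [Set.mem_iInter] at hz
  refine ⟨z, hanti zero_le_one (hz 0), fun y hy => not_le.1 fun hyz => hy ?_⟩
  refine dist_le_zero.1 (ge_of_tendsto' hzero fun n => ?_)
  have hyn := hball n (ekelandCone_subset hα.le (hz n) hyz)
  linarith [dist_triangle_right y z (x (n + 1)), Metric.mem_closedBall.1 hyn,
    Metric.mem_closedBall.1 (hball n (hz n))]

end Ekeland

/-! ### Deformations along an odd pseudo-gradient field -/

section PseudoGradient

variable {T X : Type*} [TopologicalSpace T] [NormedAddCommGroup X] [NormedSpace ℝ X]

theorem exists_norm_le_one_lt_apply {f : X →L[ℝ] ℝ} {δ : ℝ} (hδ : δ < ‖f‖) :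
    ∃ v, ‖v‖ ≤ 1 ∧ δ < f v := by
  obtain ⟨v, hv, hlt⟩ := f.exists_lt_apply_of_lt_opNorm hδ
  rcases lt_abs.1 hlt with h | h
  · exact ⟨v, hv.le, h⟩
  · exact ⟨-v, by rw [norm_neg]; exact hv.le, by rwa [map_neg]⟩

theorem exists_continuous_lt_apply [NormalSpace T] [ParacompactSpace T] {f : T → X →L[ℝ] ℝ}
    (hf : Continuous f) {A : Set T} (hA : IsClosed A) {δ : ℝ} (hδ : ∀ u ∈ A, δ < ‖f u‖) :
    ∃ V : T → X, Continuous V ∧ (∀ u, ‖V u‖ ≤ 1) ∧ ∀ u ∈ A, δ < f u (V u) := by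
  let t : T → Set X := fun u => {v | ‖v‖ ≤ 1} ∩ {v | u ∈ A → δ < f u v}
  have hconvex : ∀ u, Convex ℝ (t u) := fun u => by
    refine Convex.inter (by simpa [Metric.closedBall] using convex_closedBall (0 : X) 1) ?_
    exact fun v hv w hw p q hp hq hpq hu =>
      convex_halfSpace_gt (f u).isBoundedLinearMap.toIsLinearMap δ (hv hu) (hw hu) hp hq hpq
  have hlocal : ∀ u, ∃ v, ∀ᶠ w in 𝓝 u, v ∈ t w := fun u => by
    by_cases hu : u ∈ A
    · obtain ⟨v, hv, hlt⟩ := exists_norm_le_one_lt_apply (hδ u hu)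
      have hfv : Continuous fun w => f w v := by fun_prop
      exact ⟨v, (hfv.continuousAt.eventually_const_lt hlt).mono fun w hw => ⟨hv, fun _ => hw⟩⟩
    · exact ⟨0, eventually_of_mem (hA.isOpen_compl.mem_nhds hu)
        fun w hw => ⟨by simp, fun h => absurd h hw⟩⟩
  obtain ⟨V, hV⟩ := exists_continuous_forall_mem_convex_of_local_const hconvex hlocal
  exact ⟨V, V.continuous, fun u => (hV u).1, fun u => (hV u).2⟩

theorem exists_continuous_odd_lt_apply [NormalSpace T] [ParacompactSpace T] [InvolutiveNeg T]
    [ContinuousNeg T] {f : T → X →L[ℝ] ℝ} (hf : Continuous f) (hodd : ∀ u, f (-u) = -f u)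
    {A : Set T} (hA : IsClosed A) (hneg : ∀ u ∈ A, -u ∈ A) {δ : ℝ} (hδ : ∀ u ∈ A, δ < ‖f u‖) :
    ∃ V : T → X, Continuous V ∧ (∀ u, V (-u) = -V u) ∧ (∀ u, ‖V u‖ ≤ 1) ∧
      ∀ u ∈ A, δ < f u (V u) := by
  obtain ⟨V, hV, hV1, hVA⟩ := exists_continuous_lt_apply hf hA hδ
  refine ⟨fun u => (1 / 2 : ℝ) • (V u - V (-u)), by fun_prop, fun u => ?_, fun u => ?_,
    fun u hu => ?_⟩
  · simp only [neg_neg, ← smul_neg, neg_sub]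
  · rw [norm_smul, Real.norm_of_nonneg (by norm_num)]
    linarith [norm_sub_le (V u) (V (-u)), hV1 u, hV1 (-u)]
  · have hVneg := hVA (-u) (hneg u hu)
    rw [hodd, neg_apply] at hVneg
    rw [map_smul, map_sub, smul_eq_mul]
    linarith [hVA u hu]

variable {E : X → ℝ} {E' : X → X →L[ℝ] ℝ}

theorem exists_odd_pseudoGradient (hE : Continuous E) (hE' : Continuous E')
    (heven : ∀ u, E (-u) = E u) (hodd : ∀ u, E' (-u) = -E' u) {a b d δ : ℝ} (hab : a < b)
    (hδ : 0 ≤ δ) (hbound : ∀ u, a ≤ E u → E u ≤ d → δ < ‖E' u‖) :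
    ∃ V : X → X, Continuous V ∧ (∀ u, V (-u) = -V u) ∧ (∀ u, ‖V u‖ ≤ 1) ∧
      (∀ u, E u ≤ a → V u = 0) ∧ (∀ u, E u ≤ d → 0 ≤ E' u (V u)) ∧
      ∀ u, b ≤ E u → E u ≤ d → δ < E' u (V u) := by
  obtain ⟨V, hV, hVodd, hV1, hVA⟩ := exists_continuous_odd_lt_apply hE' hodd
    (A := E ⁻¹' Set.Icc a d) (isClosed_Icc.preimage hE)
    (fun u hu => by rwa [Set.mem_preimage, heven]) fun u hu => hbound u hu.1 hu.2
  let χ : X → ℝ := fun u => Real.smoothTransition ((E u - a) / (b - a))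
  have hχ : Continuous χ := Real.smoothTransition.continuous.comp (by fun_prop)
  have hχa : ∀ u, E u ≤ a → χ u = 0 := fun u hu => Real.smoothTransition.zero_of_nonpos
    (div_nonpos_of_nonpos_of_nonneg (sub_nonpos.2 hu) (sub_nonneg.2 hab.le))
  have hχb : ∀ u, b ≤ E u → χ u = 1 := fun u hu => Real.smoothTransition.one_of_one_le
    ((one_le_div (sub_pos.2 hab)).2 (sub_le_sub_right hu a))
  refine ⟨fun u => χ u • V u, hχ.smul hV, fun u => ?_, fun u => ?_, fun u hu => ?_,
    fun u hu => ?_, fun u hbu hud => ?_⟩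
  · simp only [χ, heven, hVodd, smul_neg]
  · rw [norm_smul, Real.norm_of_nonneg (Real.smoothTransition.nonneg _)]
    exact mul_le_one₀ (Real.smoothTransition.le_one _) (norm_nonneg _) (hV1 u)
  · simp only [hχa u hu, zero_smul]
  · rw [map_smul, smul_eq_mul]
    rcases le_total (E u) a with hua | hau
    · rw [hχa u hua, zero_mul]
    · exact mul_nonneg (Real.smoothTransition.nonneg _) (hδ.trans (hVA u ⟨hau, hu⟩).le)
  · simpa only [hχb u hbu, one_smul] using hVA u ⟨hab.le.trans hbu, hud⟩

end PseudoGradient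

section Descent

variable {K X : Type*} [NormedAddCommGroup X] [NormedSpace ℝ X] {E : X → ℝ}
  {E' : X → X →L[ℝ] ℝ}

theorem map_neg_of_even_of_hasFDerivAt (hE : ∀ u, HasFDerivAt E (E' u) u)
    (heven : ∀ u, E (-u) = E u) (u : X) : E' (-u) = -E' u := by
  have hcomp := (hE (-u)).comp u (hasFDerivAt_id u).neg
  rw [show E ∘ Neg.neg = E from funext heven] at hcomp
  rw [← hcomp.unique (hE u)]
  ext
  simp

theorem apply_sub_smul_le (hE : ∀ u, HasFDerivAt E (E' u) u) {u v : X} {t κ : ℝ} (ht : 0 ≤ t)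
    (hκ : ∀ s ∈ Set.Ioo 0 t, κ ≤ E' (u - s • v) v) : E (u - t • v) ≤ E u - t * κ := by
  have hderiv : ∀ s : ℝ, HasDerivAt (fun s : ℝ => E (u - s • v)) (E' (u - s • v) (-v)) s := by
    intro s
    have hline : HasDerivAt (fun s : ℝ => u - s • v) (-v) s := by
      simpa using ((hasDerivAt_id s).smul_const v).const_sub u
    exact (hE _).comp_hasDerivAt s hline
  have hmean := Convex.image_sub_le_mul_sub_of_deriv_le (convex_Icc 0 t)
    (fun s _ => (hderiv s).continuousAt.continuousWithinAt)
    (fun s _ => (hderiv s).differentiableAt.differentiableWithinAt) (C := -κ)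
    (fun s hs => ?_) 0 (Set.left_mem_Icc.2 ht) t (Set.right_mem_Icc.2 ht) ht
  · simp only [zero_smul, sub_zero] at hmean
    linarith
  · rw [interior_Icc] at hs
    rw [(hderiv s).deriv, map_neg]
    exact neg_le_neg (hκ s hs)

theorem eventually_forall_apply_sub_smul_le [TopologicalSpace K] [CompactSpace K]
    (hE : ∀ u, HasFDerivAt E (E' u) u) (hE' : Continuous E') {γ v : K → X} (hγ : Continuous γ)
    (hv : Continuous v) {κ : ℝ} (hκ : 0 < κ) :
    ∀ᶠ t in 𝓝[>] (0 : ℝ), ∀ x, E (γ x - t • v x) ≤ E (γ x) - t * (E' (γ x) (v x) - κ) := by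
  have hcont : Continuous fun z : ℝ × K =>
      E' (γ z.2 - z.1 • v z.2) (v z.2) - E' (γ z.2) (v z.2) := by fun_prop
  have hev : ∀ᶠ s in 𝓝 (0 : ℝ), ∀ x ∈ Set.univ,
      -κ < E' (γ x - s • v x) (v x) - E' (γ x) (v x) :=
    isCompact_univ.eventually_forall_of_forall_eventually fun x _ =>
      hcont.continuousAt.eventually_const_lt (by simpa using hκ)
  obtain ⟨t₀, ht₀, hball⟩ := Metric.eventually_nhds_iff.1 hev
  filter_upwards [Ioo_mem_nhdsGT ht₀] with t ht x
  refine apply_sub_smul_le hE ht.1.le fun s hs => ?_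
  have hs₀ : dist s 0 < t₀ := by
    rw [Real.dist_eq, sub_zero, abs_of_pos hs.1]
    exact hs.2.trans ht.2
  linarith [hball hs₀ x (Set.mem_univ x)]

end Descent

/-! ### The odd minimax principle -/

section Minimax

variable {K X : Type*} [TopologicalSpace K] [NormedAddCommGroup X] {E : X → ℝ} {B : Set K}
  {γ₀ : C(K, X)}

/-- The class of odd continuous maps that agree with `γ₀` on `B`. -/
def oddExtensions [Neg K] (B : Set K) (γ₀ : C(K, X)) : Set C(K, X) :=
  {γ | (∀ x, γ (-x) = -γ x) ∧ Set.EqOn γ γ₀ B}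

/-- The supremum of `E` along `γ`; it is attained and not a junk value when `K` is compact and
nonempty and `E` is continuous. -/
noncomputable def peak (E : X → ℝ) (γ : C(K, X)) : ℝ :=
  ⨆ x, E (γ x)

theorem isClosed_oddExtensions [Neg K] (B : Set K) (γ₀ : C(K, X)) :
    IsClosed (oddExtensions B γ₀) := by
  simp only [oddExtensions, Set.EqOn, Set.ofPred_and, Set.ofPred_forall]
  refine (isClosed_iInter fun x => ?_).inter (isClosed_iInter fun x => isClosed_iInter fun _ => ?_)
  · exact isClosed_eq (by fun_prop) (by fun_prop)
  · exact isClosed_eq (by fun_prop) (by fun_prop)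

variable [CompactSpace K]

theorem bddAbove_range_comp (hE : Continuous E) (γ : C(K, X)) :
    BddAbove (Set.range fun x => E (γ x)) :=
  (isCompact_range (hE.comp γ.continuous)).bddAbove

theorem le_peak (hE : Continuous E) (γ : C(K, X)) (x : K) : E (γ x) ≤ peak E γ :=
  le_ciSup (bddAbove_range_comp hE γ) x

theorem lowerSemicontinuous_peak (hE : Continuous E) :
    LowerSemicontinuous (peak E : C(K, X) → ℝ) :=
  lowerSemicontinuous_ciSup (bddAbove_range_comp hE) fun x =>
    (by fun_prop : Continuous fun γ : C(K, X) => E (γ x)).lowerSemicontinuous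

variable [NormedSpace ℝ X] [Nonempty K] {E' : X → X →L[ℝ] ℝ}

theorem dist_le_and_peak_le_of_sub_smul (hE : Continuous E) {γ γ' : C(K, X)} {V : X → X}
    {b d t α δ : ℝ} (hγ' : ∀ x, γ' x = γ x - t • V (γ x)) (ht : 0 ≤ t) (hV1 : ∀ u, ‖V u‖ ≤ 1)
    (hVd : ∀ u, E u ≤ d → 0 ≤ E' u (V u)) (hVb : ∀ u, b ≤ E u → E u ≤ d → δ < E' u (V u))
    (hd : peak E γ ≤ d) (htb : t * δ ≤ peak E γ - b)
    (hstep : ∀ x, E (γ' x) ≤ E (γ x) - t * (E' (γ x) (V (γ x)) - (δ - α))) :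
    dist γ γ' ≤ t ∧ peak E γ' ≤ peak E γ - t * α := by
  refine ⟨(ContinuousMap.dist_le ht).2 fun x => ?_, ciSup_le fun x => ?_⟩
  · rw [hγ', dist_eq_norm, sub_sub_cancel, norm_smul, Real.norm_of_nonneg ht]
    exact mul_le_of_le_one_right ht (hV1 _)
  · have hx := le_peak hE γ x
    rcases le_total b (E (γ x)) with hb | hb
    · have := mul_le_mul_of_nonneg_left (hVb _ hb (hx.trans hd)).le ht
      linarith [hstep x]
    · have := mul_nonneg ht (hVd _ (hx.trans hd))
      linarith [hstep x]

theorem exists_mem_oddExtensions_peak_add_dist_le [Neg K] (hE : ∀ u, HasFDerivAt E (E' u) u)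
    (hE' : Continuous E') (heven : ∀ u, E (-u) = E u) {a b d α δ : ℝ} (hab : a < b) (hα : 0 < α)
    (hαδ : α < δ) (hbound : ∀ u, a ≤ E u → E u ≤ d → δ < ‖E' u‖) (hB : ∀ x ∈ B, E (γ₀ x) ≤ a)
    {γ : C(K, X)} (hγ : γ ∈ oddExtensions B γ₀) (hb : b < peak E γ) (hd : peak E γ ≤ d) :
    ∃ γ' ∈ oddExtensions B γ₀, γ' ≠ γ ∧ peak E γ' + α * dist γ γ' ≤ peak E γ := by
  have hEc : Continuous E := continuous_iff_continuousAt.2 fun u => (hE u).continuousAt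
  have hδ : 0 < δ := hα.trans hαδ
  obtain ⟨V, hV, hVodd, hV1, hVa, hVd, hVb⟩ := exists_odd_pseudoGradient hEc hE' heven
    (map_neg_of_even_of_hasFDerivAt hE heven) hab hδ.le hbound
  obtain ⟨t, hstep, ht, htδ⟩ := ((eventually_forall_apply_sub_smul_le hE hE' γ.continuous
    (hV.comp γ.continuous) (sub_pos.2 hαδ)).and
      (Ioo_mem_nhdsGT (div_pos (sub_pos.2 hb) hδ))).exists
  let γ' : C(K, X) := ⟨fun x => γ x - t • V (γ x), by fun_prop⟩
  obtain ⟨hdist, hpeak⟩ := dist_le_and_peak_le_of_sub_smul hEc (γ' := γ') (fun x => rfl) ht.le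
    hV1 hVd hVb hd ((lt_div_iff₀ hδ).1 htδ).le hstep
  have htα := mul_pos ht hα
  refine ⟨γ', ⟨fun x => ?_, fun x hx => ?_⟩, fun h => ?_, ?_⟩
  · change γ (-x) - t • V (γ (-x)) = -(γ x - t • V (γ x))
    rw [hγ.1, hVodd, smul_neg, neg_sub_neg, neg_sub]
  · change γ x - t • V (γ x) = γ₀ x
    rw [hγ.2 hx, hVa _ (hB x hx), smul_zero, sub_zero]
  · rw [h] at hpeak
    linarith
  · linarith [mul_le_mul_of_nonneg_left hdist hα.le]

theorem exists_abs_sub_le_and_norm_le_of_isGLB [Neg K] [CompleteSpace X]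
    (hE : ∀ u, HasFDerivAt E (E' u) u) (hE' : Continuous E') (heven : ∀ u, E (-u) = E u)
    {a c : ℝ} (hac : a < c) (hB : ∀ x ∈ B, E (γ₀ x) ≤ a)
    (hc : IsGLB (peak E '' oddExtensions B γ₀) c) {ε : ℝ} (hε : 0 < ε) :
    ∃ u, |E u - c| ≤ ε ∧ ‖E' u‖ ≤ ε := by
  by_contra! hbound
  have hEc : Continuous E := continuous_iff_continuousAt.2 fun u => (hE u).continuousAt
  obtain ⟨b, hab, hbc⟩ := exists_between (max_lt hac (sub_lt_self c hε))
  have hcle : ∀ γ ∈ oddExtensions B γ₀, c ≤ peak E γ := fun γ hγ =>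
    hc.1 (Set.mem_image_of_mem _ hγ)
  obtain ⟨_, ⟨γ₁, hγ₁, rfl⟩, -, hlt⟩ := hc.exists_between (lt_add_of_pos_right c hε)
  have := (isClosed_oddExtensions B γ₀).completeSpace_coe
  obtain ⟨γ, hle, hmin⟩ := exists_ekeland (φ := fun γ : oddExtensions B γ₀ => peak E γ.1)
    (half_pos hε) ((lowerSemicontinuous_peak hEc).comp continuous_subtype_val)
    ⟨c, Set.forall_mem_range.2 fun γ => hcle γ γ.2⟩ ⟨γ₁, hγ₁⟩
  have hd : peak E γ.1 ≤ c + ε := by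
    have : 0 ≤ ε / 2 * dist (⟨γ₁, hγ₁⟩ : oddExtensions B γ₀) γ := by positivity
    linarith
  obtain ⟨γ', hγ', hne', hpeak⟩ := exists_mem_oddExtensions_peak_add_dist_le hE hE' heven hab
    (half_pos hε) (half_lt_self hε)
    (fun u hau hud => hbound u (abs_le.2 ⟨by linarith [(le_max_right _ _).trans hau],
      by linarith⟩)) (fun x hx => (hB x hx).trans (le_max_left _ _)) γ.2
    (hbc.trans_le (hcle γ γ.2)) hd
  exact (hmin ⟨γ', hγ'⟩ (by simpa [Subtype.ext_iff] using hne')).not_ge hpeak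

end Minimax

section PalaisSmale

variable {X : Type*} [NormedAddCommGroup X] [NormedSpace ℝ X] {E : X → ℝ}
  {E' : X → X →L[ℝ] ℝ} {c : ℝ}

/-- The Palais–Smale condition at the level `c` for a functional `E` with derivative `E'`. -/
def PalaisSmaleAt (E : X → ℝ) (E' : X → X →L[ℝ] ℝ) (c : ℝ) : Prop :=
  ∀ u : ℕ → X, Tendsto (fun m => E (u m)) atTop (𝓝 c) →
    Tendsto (fun m => ‖E' (u m)‖) atTop (𝓝 0) →
    ∃ (v : X) (σ : ℕ → ℕ), StrictMono σ ∧ Tendsto (u ∘ σ) atTop (𝓝 v)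

theorem PalaisSmaleAt.exists_critical_point (h : PalaisSmaleAt E E' c) (hE : Continuous E)
    (hE' : Continuous E') (happrox : ∀ ε > 0, ∃ u, |E u - c| ≤ ε ∧ ‖E' u‖ ≤ ε) :
    ∃ u, E' u = 0 ∧ E u = c := by
  choose u hEu hE'u using fun m : ℕ => happrox (1 / ((m : ℝ) + 1)) Nat.one_div_pos_of_nat
  have hEc : Tendsto (fun m => E (u m)) atTop (𝓝 c) :=
    tendsto_iff_dist_tendsto_zero.2
      (squeeze_zero (fun _ => dist_nonneg) hEu tendsto_one_div_add_atTop_nhds_zero_nat)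
  have hE'0 : Tendsto (fun m => ‖E' (u m)‖) atTop (𝓝 0) :=
    squeeze_zero (fun _ => norm_nonneg _) hE'u tendsto_one_div_add_atTop_nhds_zero_nat
  obtain ⟨v, σ, hσ, hv⟩ := h u hEc hE'0
  refine ⟨v, norm_eq_zero.1 ?_, ?_⟩
  · exact tendsto_nhds_unique ((hE'.norm.tendsto v).comp hv) (hE'0.comp hσ.tendsto_atTop)
  · exact tendsto_nhds_unique ((hE.tendsto v).comp hv) (hEc.comp hσ.tendsto_atTop)

end PalaisSmale

section LinkedCriticalPoint

open Metric

variable {X F : Type*} [NormedAddCommGroup X] [NormedSpace ℝ X] [CompleteSpace X]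
  [NormedAddCommGroup F] [NormedSpace ℝ F] [FiniteDimensional ℝ F]

theorem exists_critical_point_of_linking {E : X → ℝ} {E' : X → X →L[ℝ] ℝ}
    (hE : ∀ u, HasFDerivAt E (E' u) u) (hE' : Continuous E') (heven : ∀ u, E (-u) = E u)
    (Y : Submodule ℝ X) [FiniteDimensional ℝ Y] (L : X →L[ℝ] F)
    (hdim : Module.finrank ℝ F < Module.finrank ℝ Y) {r ρ a b : ℝ} (hr : 0 < r) (hrρ : r < ρ)
    (hab : a < b) (hL : ∀ u, L u = 0 → ‖u‖ = r → b ≤ E u) (hY : ∀ u ∈ Y, ‖u‖ = ρ → E u ≤ a)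
    (hPS : ∀ c ≥ b, PalaisSmaleAt E E' c) : ∃ u, E' u = 0 ∧ b ≤ E u := by
  have hEc : Continuous E := continuous_iff_continuousAt.2 fun u => (hE u).continuousAt
  let K := closedBall (0 : Y) ρ
  have : CompactSpace K := isCompact_iff_compactSpace.1 (isCompact_closedBall 0 ρ)
  have : Nonempty K := ⟨⟨0, mem_closedBall_self (hr.trans hrρ).le⟩⟩
  let γ₀ : C(K, X) := ⟨fun v => ((v : Y) : X), by fun_prop⟩
  let B : Set K := {v | ‖(v : Y)‖ = ρ}
  let Γ : Set C(K, X) := oddExtensions B γ₀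
  have hB : ∀ v ∈ B, E (γ₀ v) ≤ a := fun v hv => hY _ (v : Y).2 hv
  have hΓ : Γ.Nonempty := ⟨γ₀, fun v => rfl, fun v _ => rfl⟩
  have hpeak : b ∈ lowerBounds (peak E '' Γ) := by
    rintro _ ⟨γ, hγ, rfl⟩
    obtain ⟨v, hv, hLv⟩ := exists_norm_eq_and_map_eq_zero L hdim hr (hr.trans hrρ) γ.continuous
      hγ.1 fun v hv => by rw [hγ.2 hv]; exact hrρ.trans_eq hv.symm
    exact (hL _ hLv hv).trans (le_peak hEc γ v)
  have hc := isGLB_csInf (hΓ.image (peak E)) ⟨b, hpeak⟩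
  have hbc := (le_isGLB_iff hc).2 hpeak
  obtain ⟨u, hu, hEu⟩ := (hPS _ hbc).exists_critical_point hEc hE' fun ε hε =>
    exists_abs_sub_le_and_norm_le_of_isGLB hE hE' heven (hab.trans_le hbc) hB hc hε
  exact ⟨u, hu, hbc.trans_eq hEu.symm⟩

end LinkedCriticalPoint

/-! ### Biorthogonal systems and the Fountain Theorem -/

section Biorthogonal

variable {X : Type*} [NormedAddCommGroup X] [NormedSpace ℝ X] {e : ℕ → X}
  {estar : ℕ → X →L[ℝ] ℝ}

theorem sub_sum_smul_mem_span (hbiorth : ∀ i j, estar i (e j) = if i = j then (1 : ℝ) else 0)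
    (k : ℕ) {u : X} (hu : u ∈ Submodule.span ℝ (Set.range e)) :
    u - ∑ j ∈ Finset.range k, estar j u • e j ∈ Submodule.span ℝ (e '' {j | k ≤ j}) := by
  induction hu using Submodule.span_induction with
  | mem _ hx =>
    obtain ⟨i, rfl⟩ := hx
    simp only [hbiorth, ite_smul, one_smul, zero_smul, Finset.sum_ite_eq', Finset.mem_range]
    split_ifs with hi
    · simp
    · rw [sub_zero]
      exact Submodule.subset_span ⟨i, not_lt.1 hi, rfl⟩
  | zero => simp
  | add x y _ _ hx hy =>
    simpa only [map_add, add_smul, Finset.sum_add_distrib, add_sub_add_comm] using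
      Submodule.add_mem _ hx hy
  | smul c x _ hx =>
    simpa only [map_smul, smul_eq_mul, mul_smul, ← Finset.smul_sum, ← smul_sub] using
      Submodule.smul_mem _ c hx

theorem mem_closure_span_of_forall_lt_eq_zero
    (hdense : Dense (Submodule.span ℝ (Set.range e) : Set X))
    (hbiorth : ∀ i j, estar i (e j) = if i = j then (1 : ℝ) else 0) {k : ℕ} {u : X}
    (hu : ∀ j < k, estar j u = 0) :
    u ∈ closure (Submodule.span ℝ (e '' {j | k ≤ j}) : Set X) := by
  have hsum : ∑ j ∈ Finset.range k, estar j u • e j = 0 :=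
    Finset.sum_eq_zero fun j hj => by rw [hu j (Finset.mem_range.1 hj), zero_smul]
  have hcont : Continuous fun w => w - ∑ j ∈ Finset.range k, estar j w • e j := by fun_prop
  simpa only [hsum, sub_zero] using
    map_mem_closure hcont (hdense u) fun w => sub_sum_smul_mem_span hbiorth k

theorem finrank_span_image_setOf_le
    (hbiorth : ∀ i j, estar i (e j) = if i = j then (1 : ℝ) else 0) (k : ℕ) :
    Module.finrank ℝ (Submodule.span ℝ (e '' {j | j ≤ k})) = k + 1 := by
  have hli : LinearIndependent ℝ e :=
    .of_pairwise_dual_eq_zero_one e (fun j => (estar j : X →ₗ[ℝ] ℝ))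
      (fun i j hij => by simp [hbiorth, hij]) fun i => by simp [hbiorth]
  rw [Set.image_eq_range,
    finrank_span_eq_card (b := fun j : {j | j ≤ k} => e j) (hli.comp _ Subtype.val_injective),
    ← Nat.card_eq_fintype_card]
  exact Set.ncard_Iic_nat k

end Biorthogonal

theorem fountain_theorem_general
    {X : Type*} [NormedAddCommGroup X] [NormedSpace ℝ X] [CompleteSpace X]
    (e : ℕ → X) (estar : ℕ → (X →L[ℝ] ℝ))
    (hdense : Dense (Submodule.span ℝ (Set.range e) : Set X))
    (hbiorth : ∀ i j, estar i (e j) = if i = j then (1 : ℝ) else 0)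
    (E : X → ℝ) (E' : X → (X →L[ℝ] ℝ))
    (hE : ∀ u, HasFDerivAt E (E' u) u) (hE'cont : Continuous E')
    (heven : ∀ u, E (-u) = E u)
    (r ρ : ℕ → ℝ) (hr : ∀ k, 0 < r k) (hrρ : ∀ k, r k < ρ k)
    (hA2 : ∀ M : ℝ, ∃ k : ℕ, ∀ u : X,
      u ∈ closure (Submodule.span ℝ (e '' {j | k ≤ j}) : Set X) → ‖u‖ = r k → M ≤ E u)
    (hA3 : ∀ k : ℕ, ∀ u : X,
      u ∈ Submodule.span ℝ (e '' {j | j ≤ k}) → ‖u‖ = ρ k → E u ≤ 0)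
    (hPS : ∀ c > 0, PalaisSmaleAt E E' c) :
    ∃ u : ℕ → X, (∀ k, E' (u k) = 0) ∧ Tendsto (fun k => E (u k)) atTop atTop := by
  have hcritical : ∀ M > 0, ∃ u, E' u = 0 ∧ M ≤ E u := by
    intro M hM
    obtain ⟨k, hk⟩ := hA2 M
    have : FiniteDimensional ℝ (Submodule.span ℝ (e '' {j | j ≤ k})) :=
      .span_of_finite ℝ ((Set.finite_le_nat k).image e)
    exact exists_critical_point_of_linking hE hE'cont heven _
      (ContinuousLinearMap.pi fun j : Fin k => estar j)
      (by rw [finrank_span_image_setOf_le hbiorth, Module.finrank_fin_fun]; exact k.lt_succ_self)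
      (hr k) (hrρ k) hM
      (fun u hu => hk u <| mem_closure_span_of_forall_lt_eq_zero hdense hbiorth fun j hj =>
        congrFun hu ⟨j, hj⟩)
      (hA3 k) fun c hc => hPS c (hM.trans_le hc)
  choose u hu hEu using fun m : ℕ => hcritical (m + 1) m.cast_add_one_pos
  exact ⟨u, hu, tendsto_atTop_mono hEu
    (tendsto_atTop_add_const_right _ 1 tendsto_natCast_atTop_atTop)⟩

/-- Fountain Theorem: Let `X` be a real reflexive separable Banach space with a
biorthogonal system `(e_j, e_j*)` whose spans are dense in `X` and `X*` respectively, let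
`Y_k = span{e_j : j ≤ k}` and `Z_k = closure (span{e_j : j ≥ k})`. Let `E : X → ℝ` be `C¹`
and even. If there exist `ρ_k > r_k > 0` such that
`(A₂)` `inf{E u : u ∈ Z_k, ‖u‖ = r_k} → +∞`,
`(A₃)` `max{E u : u ∈ Y_k, ‖u‖ = ρ_k} ≤ 0`, and
`(A₄)` `E` satisfies the Palais–Smale condition,
then `E` has a sequence of critical points `(u_k)` with `E (u_k) → +∞`. -/
theorem fountain_theorem
    {X : Type*} [NormedAddCommGroup X] [NormedSpace ℝ X] [CompleteSpace X]
    [TopologicalSpace.SeparableSpace X]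
    (hreflexive : Function.Surjective (NormedSpace.inclusionInDoubleDual ℝ X))
    (e : ℕ → X) (estar : ℕ → (X →L[ℝ] ℝ))
    (hdense : Dense (Submodule.span ℝ (Set.range e) : Set X))
    (hdense' : Dense (Submodule.span ℝ (Set.range estar) : Set (X →L[ℝ] ℝ)))
    (hbiorth : ∀ i j, estar i (e j) = if i = j then (1 : ℝ) else 0)
    (E : X → ℝ) (E' : X → (X →L[ℝ] ℝ))
    (hE : ∀ u, HasFDerivAt E (E' u) u) (hE'cont : Continuous E')
    (heven : ∀ u, E (-u) = E u)
    (r ρ : ℕ → ℝ) (hr : ∀ k, 0 < r k) (hrρ : ∀ k, r k < ρ k)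
    -- (A₂): inf{E u : u ∈ Z_k, ‖u‖ = r_k} → +∞ as k → +∞
    (hA2 : ∀ M : ℝ, ∃ K : ℕ, ∀ k ≥ K, ∀ u : X,
      u ∈ closure (Submodule.span ℝ (e '' {j | k ≤ j}) : Set X) → ‖u‖ = r k → M ≤ E u)
    -- (A₃): max{E u : u ∈ Y_k, ‖u‖ = ρ_k} ≤ 0
    (hA3 : ∀ k : ℕ, ∀ u : X,
      u ∈ Submodule.span ℝ (e '' {j | j ≤ k}) → ‖u‖ = ρ k → E u ≤ 0)
    -- (A₄): Palais–Smale condition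
    (hPS : ∀ u : ℕ → X, (∃ C : ℝ, ∀ m, |E (u m)| ≤ C) →
      Tendsto (fun m => ‖E' (u m)‖) atTop (𝓝 0) →
      ∃ (v : X) (σ : ℕ → ℕ), StrictMono σ ∧ Tendsto (u ∘ σ) atTop (𝓝 v)) :
    ∃ u : ℕ → X, (∀ k, E' (u k) = 0) ∧ Tendsto (fun k => E (u k)) atTop atTop :=
  fountain_theorem_general e estar hdense hbiorth E E' hE hE'cont heven r ρ hr hrρ
    (fun M => (hA2 M).imp fun k hk => hk k le_rfl) hA3 fun _ _ u hu =>
      hPS u (isBounded_iff_forall_norm_le.1 (Metric.isBounded_range_of_tendsto _ hu) |>.imp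
        fun _ hC m => hC _ (Set.mem_range_self m))
end

section
/- (Dual Fountain Theorem) Let X be a real Banach space with a biorthogonal system (e_j, e_j*) as in the context, Y_k = span{e_1,…,e_k} and Z_k = closure(span{e_j : j ≥ k}). Let E : X → ℝ be continuously Fréchet differentiable and even. Suppose there is k₀ > 0 such that for each k ≥ k₀ there exist ρ_k > r_k > 0 with: (B₁) inf{E(u) : u ∈ Z_k, ‖u‖ = ρ_k} ≥ 0; (B₂) b_k := max{E(u) : u ∈ Y_k, ‖u‖ = r_k} < 0; (B₃) d_k := inf{E(u) : u ∈ Z_k, ‖u‖ ≤ ρ_k} → 0 as k → +∞; (B₄) E satisfies the (PS)_c* condition with respect to (Y_n) for every c ∈ [d_{k₀}, 0). Then E has a sequence of critical points whose critical values are negative and converge to 0. -/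
open Filter Topology

/-!
Restrict `E` to the Galerkin space `Y_n`, `n ≥ k`. Unless `E` has an almost critical point there
with value in `[d_k, b_k / 2]`, flowing along an odd pseudo-gradient gives an odd map `η` which
pushes the ball `{u ∈ Z_k ∩ Y_n : ‖u‖ ≤ ρ_k}` strictly above the level `b_k` and fixes its
boundary sphere. But `e_k` lies in `Y_k ∩ Z_k`, so the dimensions add up to more than `dim Y_n`
and, by the Borsuk–Ulam theorem, `η` sends some point of the ball to the sphere
`{u ∈ Y_k : ‖u‖ = r_k}`, where `E ≤ b_k`. Now `(PS)_c^*` turns the almost critical points into a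
critical point with value in `[d_k, b_k / 2]`, and these intervals shrink to `0`.

The Borsuk–Ulam theorem is needed on the boundary of a bounded symmetric neighbourhood `U` of
`0`. If an odd map to `ℝ ^ m` had no zero on `∂U`, the signs of its components would cover `∂U`
by `m` pairs of sets which are disjoint from their antipodes. Slicing a cubical approximation of
`∂U` by a flag of half planes gives chains `C 0, …, C m` modulo 2 with
`∂ C (i + 1) = C i + ν (C i)`, `ν` the antipodal map, and `C 0` of odd augmentation. Excising
one pair from the chains shortens the sequence by one and preserves this parity; after `m`
excisions nothing is left to carry an odd augmentation.
-/

namespace DualFountain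

section AntipodalTower

variable {V : Type*} [AddCommGroup V] [Module (ZMod 2) V] {bd ν : Module.End (ZMod 2) V}

/-- Chains `C 0, …, C m` for a boundary operator `bd` and an involution `ν`, each symmetrized chain
being the boundary of the next: the shape of the hemispheres of a sphere under the antipodal
map. -/
def IsAntipodalTower (bd ν : Module.End (ZMod 2) V) (m : ℕ) (C : ℕ → V) : Prop :=
  ∀ i < m, bd (C (i + 1)) = C i + ν (C i)

/-- Lowers an antipodal tower by one step. For `T` the restriction to a set of cells, it is
supported where neither `T` nor its antipode restricts, which is how a covering set gets removed. -/
def excise (bd ν T : Module.End (ZMod 2) V) (C : ℕ → V) (i : ℕ) : V :=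
  (bd * T + T * bd) (C (i + 1)) + (ν * (1 + T + ν * T * ν)) (C i)

theorem isAntipodalTower_excise (hbd : bd * bd = 0) (hν : ν * ν = 1) (hcomm : bd * ν = ν * bd)
    (T : Module.End (ZMod 2) V) {m : ℕ} {C : ℕ → V} (hC : IsAntipodalTower bd ν (m + 1) C) :
    IsAntipodalTower bd ν m (excise bd ν T C) := by
  intro i hi
  have hνν (v : V) : ν (ν v) = v := LinearMap.congr_fun hν v
  have hbdbd (v : V) : bd (bd v) = 0 := LinearMap.congr_fun hbd v
  have hbdν (v : V) : bd (ν v) = ν (bd v) := LinearMap.congr_fun hcomm v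
  simp only [excise, LinearMap.add_apply, Module.End.mul_apply, Module.End.one_apply, map_add,
    hbdbd, hbdν, hC (i + 1) (by omega), hC i (by omega), hνν, zero_add]
  abel_nf
  simp [two_smul, ZModModule.add_self]

theorem augmentation_excise_zero {ε : V →ₗ[ZMod 2] ZMod 2} (hεbd : ∀ v, ε (bd v) = 0)
    (hεν : ∀ v, ε (ν v) = ε v) (T : Module.End (ZMod 2) V) {m : ℕ} {C : ℕ → V}
    (hC : IsAntipodalTower bd ν (m + 1) C) : ε (excise bd ν T C 0) = ε (C 0) := by
  simp only [excise, LinearMap.add_apply, Module.End.mul_apply, Module.End.one_apply, map_add,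
    hεbd, hεν, hC 0 (by omega), zero_add]
  grind

end AntipodalTower

section CubicalChains

/-- A cell of the cubical decomposition of `ℝ ^ d` with vertices in `(2ℤ) ^ d`, given by its centre:
an even coordinate stands for a point, an odd one for the edge between its two even neighbours. -/
abbrev Cell (d : ℕ) : Type := Fin d → ℤ

/-- Cubical chains modulo 2. -/
abbrev Chain (d : ℕ) : Type := Cell d →₀ ZMod 2

variable {d : ℕ}

/-- The codimension-one face relation: `y` thickens one point coordinate of `x` to an adjacent
edge. -/
def IsFacet (x y : Cell d) : Prop :=
  ∃ i, Even (x i) ∧ (y = x + Pi.single i 1 ∨ y = x - Pi.single i 1)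

theorem IsFacet.neg {x y : Cell d} (h : IsFacet x y) : IsFacet (-x) (-y) := by
  obtain ⟨i, hx, rfl | rfl⟩ := h
  · exact ⟨i, by simpa using hx, Or.inr (by abel)⟩
  · exact ⟨i, by simpa using hx, Or.inl (by abel)⟩

open Classical in
/-- The part of the cubical boundary coming from the two faces in direction `i`. -/
noncomputable def partialBoundary (i : Fin d) : Module.End (ZMod 2) (Chain d) :=
  Finsupp.linearCombination (ZMod 2) fun x =>
    if Odd (x i) then
      Finsupp.single (x + Pi.single i 1) 1 + Finsupp.single (x - Pi.single i 1) 1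
    else 0

/-- The cubical boundary operator modulo 2. -/
noncomputable def boundary (d : ℕ) : Module.End (ZMod 2) (Chain d) := ∑ i, partialBoundary i

open Classical in
theorem partialBoundary_apply (i : Fin d) (c : Chain d) (x : Cell d) :
    partialBoundary i c x =
      if Even (x i) then c (x + Pi.single i 1) + c (x - Pi.single i 1) else 0 := by
  induction c using Finsupp.induction_linear with
  | zero => simp
  | add c c' hc hc' =>
    rw [map_add, Finsupp.add_apply, hc, hc']
    split_ifs
    · exact add_add_add_comm _ _ _ _
    · exact add_zero 0
  | single y a =>
    have hadd : y + Pi.single i 1 = x ↔ y = x - Pi.single i 1 := eq_sub_iff_add_eq.symm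
    have hsub : y - Pi.single i 1 = x ↔ y = x + Pi.single i 1 := sub_eq_iff_eq_add
    have hodd (h : y = x - Pi.single i 1 ∨ y = x + Pi.single i 1) : Odd (y i) ↔ Even (x i) := by
      obtain rfl | rfl := h <;> simp [parity_simps]
    simp only [partialBoundary, Finsupp.linearCombination_single, Finsupp.smul_apply, smul_eq_mul,
      apply_ite (fun c : Chain d => c x), Finsupp.add_apply, Finsupp.single_apply, hadd, hsub,
      Finsupp.zero_apply]
    grind

theorem partialBoundary_mul_self (i : Fin d) : partialBoundary i * partialBoundary i = 0 := by
  refine LinearMap.ext fun c => Finsupp.ext fun x => ?_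
  simp +contextual [partialBoundary_apply, parity_simps, ← Int.not_even_iff_odd]

theorem partialBoundary_comm (i j : Fin d) :
    partialBoundary i * partialBoundary j = partialBoundary j * partialBoundary i := by
  obtain rfl | hij := eq_or_ne i j
  · rfl
  refine LinearMap.ext fun c => Finsupp.ext fun x => ?_
  simp only [Module.End.mul_apply, partialBoundary_apply, Pi.add_apply, Pi.sub_apply,
    Pi.single_eq_of_ne hij, Pi.single_eq_of_ne hij.symm, add_zero, sub_zero,
    add_right_comm x, sub_right_comm x, add_sub_right_comm x]
  split_ifs <;> abel

theorem boundary_mul_self : boundary d * boundary d = 0 := by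
  rw [boundary, Finset.sum_mul_sum, ← Finset.sum_product']
  refine Finset.sum_involution (fun p _ => p.swap) (fun p _ => ?_) (fun p _ hp hswap => hp ?_)
    (fun _ _ => by simp) (fun _ _ => Prod.swap_swap _)
  · rw [Prod.fst_swap, Prod.snd_swap, partialBoundary_comm]
    exact ZModModule.add_self (G := Module.End (ZMod 2) (Chain d)) _
  · rw [← congrArg Prod.fst hswap, Prod.fst_swap, partialBoundary_mul_self]

open Classical in
theorem boundary_apply (c : Chain d) (x : Cell d) :
    boundary d c x =
      ∑ i, if Even (x i) then c (x + Pi.single i 1) + c (x - Pi.single i 1) else 0 := by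
  simp only [boundary, LinearMap.sum_apply, Finsupp.finsetSum_apply, partialBoundary_apply]

/-- The antipodal map on chains. -/
noncomputable def antipode (d : ℕ) : Module.End (ZMod 2) (Chain d) :=
  Finsupp.lmapDomain (ZMod 2) (ZMod 2) Neg.neg

theorem antipode_apply (c : Chain d) (x : Cell d) : antipode d c x = c (-x) := by
  nth_rw 1 [← neg_neg x]
  exact Finsupp.mapDomain_apply neg_injective c (-x)

theorem antipode_mul_self : antipode d * antipode d = 1 := by
  refine LinearMap.ext fun c => Finsupp.ext fun x => ?_
  simp only [Module.End.mul_apply, antipode_apply, neg_neg, Module.End.one_apply]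

theorem boundary_mul_antipode : boundary d * antipode d = antipode d * boundary d := by
  refine LinearMap.ext fun c => Finsupp.ext fun x => ?_
  simp only [Module.End.mul_apply, antipode_apply, boundary_apply, Pi.neg_apply, even_neg]
  refine Finset.sum_congr rfl fun i _ => ?_
  rw [add_comm, neg_add', neg_sub', sub_neg_eq_add]

/-- The sum of all coefficients of a chain. Unlike for the usual augmentation, cells of positive
dimension are counted as well; this still kills boundaries, because faces come in pairs. -/
noncomputable def augmentation (d : ℕ) : Chain d →ₗ[ZMod 2] ZMod 2 :=
  Finsupp.linearCombination (ZMod 2) fun _ => 1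

theorem augmentation_boundary (c : Chain d) : augmentation d (boundary d c) = 0 := by
  suffices augmentation d ∘ₗ boundary d = 0 from LinearMap.congr_fun this c
  ext x
  simp only [boundary, partialBoundary, augmentation, LinearMap.comp_apply, LinearMap.sum_apply,
    map_sum, Finsupp.lsingle_apply, Finsupp.linearCombination_single, one_smul]
  refine Finset.sum_eq_zero fun i _ => ?_
  split_ifs <;> simp [CharTwo.add_self_eq_zero]

theorem augmentation_antipode (c : Chain d) : augmentation d (antipode d c) = augmentation d c :=
  Finsupp.linearCombination_mapDomain (ZMod 2) Neg.neg c

open Classical in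
/-- The restriction of chains to a set of cells. -/
noncomputable def restriction (B : Set (Cell d)) : Module.End (ZMod 2) (Chain d) :=
  (Finsupp.supported (ZMod 2) (ZMod 2) B).subtype ∘ₗ Finsupp.restrictDom (ZMod 2) (ZMod 2) B

open Classical in
theorem restriction_apply (B : Set (Cell d)) (c : Chain d) (x : Cell d) :
    restriction B c x = if x ∈ B then c x else 0 := by
  simp [restriction, Finsupp.filter_apply]

theorem exists_isFacet_of_boundary_ne_zero {c : Chain d} {x : Cell d} (h : boundary d c x ≠ 0) :
    ∃ y, IsFacet x y ∧ c y ≠ 0 := by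
  contrapose! h
  rw [boundary_apply]
  refine Finset.sum_eq_zero fun i _ => ite_eq_right_iff.mpr fun hi => ?_
  rw [h _ ⟨i, hi, .inl rfl⟩, h _ ⟨i, hi, .inr rfl⟩, add_zero]

theorem exists_isFacet_of_anticommutator_ne_zero {B : Set (Cell d)}
    (hB : ∀ ⦃x y⦄, IsFacet x y → x ∈ B → y ∈ B) {c : Chain d} {x : Cell d}
    (h : (boundary d * restriction B + restriction B * boundary d) c x ≠ 0) :
    x ∉ B ∧ ∃ y ∈ B, IsFacet x y ∧ c y ≠ 0 := by
  simp only [LinearMap.add_apply, Module.End.mul_apply, Finsupp.add_apply] at h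
  have hx : x ∉ B := fun hx => by
    rw [restriction_apply, if_pos hx, ← Finsupp.add_apply, ← map_add] at h
    obtain ⟨y, hxy, hy⟩ := exists_isFacet_of_boundary_ne_zero h
    rw [Finsupp.add_apply, restriction_apply, if_pos (hB hxy hx)] at hy
    exact hy (CharTwo.add_self_eq_zero _)
  rw [restriction_apply B (boundary d c), if_neg hx, add_zero] at h
  obtain ⟨y, hxy, hy⟩ := exists_isFacet_of_boundary_ne_zero h
  rw [restriction_apply] at hy
  have hyB : y ∈ B := by_contra fun hyB => hy (if_neg hyB)
  rw [if_pos hyB] at hy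
  exact ⟨hx, y, hyB, hxy, hy⟩

theorem notMem_of_excise_ne_zero {A B : Set (Cell d)} (hA : ∀ ⦃x y⦄, IsFacet x y → y ∈ A → x ∈ A)
    (hAneg : ∀ x ∈ A, -x ∈ A) (hB : ∀ ⦃x y⦄, IsFacet x y → x ∈ B → y ∈ B)
    (hBneg : ∀ x ∈ A, x ∈ B → -x ∉ B) {C : ℕ → Chain d} {i : ℕ}
    (hC : ∀ x, C i x ≠ 0 → x ∈ A) (hC' : ∀ x, C (i + 1) x ≠ 0 → x ∈ A) {x : Cell d}
    (hx : excise (boundary d) (antipode d) (restriction B) C i x ≠ 0) :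
    x ∈ A ∧ x ∉ B ∧ -x ∉ B := by
  rw [excise, Finsupp.add_apply] at hx
  by_cases h : (boundary d * restriction B + restriction B * boundary d) (C (i + 1)) x = 0
  · rw [h, zero_add] at hx
    simp only [Module.End.mul_apply, LinearMap.add_apply, Finsupp.add_apply,
      Module.End.one_apply, antipode_apply, restriction_apply, neg_neg] at hx
    have hxA : x ∈ A := by
      rw [← neg_neg x]
      refine hAneg _ (hC _ fun h0 => hx ?_)
      simp [h0]
    have := hBneg x hxA
    by_cases hxB : x ∈ B
    · simp [hxB, this hxB, CharTwo.add_self_eq_zero] at hx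
    · refine ⟨hxA, hxB, fun hxB' => hx ?_⟩
      simp [hxB, hxB', CharTwo.add_self_eq_zero]
  · obtain ⟨hxB, y, hyB, hxy, hy⟩ := exists_isFacet_of_anticommutator_ne_zero hB h
    exact ⟨hA hxy (hC' y hy), hxB, fun hxB' => hBneg y (hC' y hy) hyB (hB hxy.neg hxB')⟩

theorem augmentation_eq_zero_of_antipodal_cover {m : ℕ} {A : Set (Cell d)}
    {B : Fin m → Set (Cell d)}
    (hA : ∀ ⦃x y⦄, IsFacet x y → y ∈ A → x ∈ A) (hAneg : ∀ x ∈ A, -x ∈ A)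
    (hB : ∀ j, ∀ ⦃x y⦄, IsFacet x y → x ∈ B j → y ∈ B j)
    (hBneg : ∀ j, ∀ x ∈ A, x ∈ B j → -x ∉ B j) (hcover : ∀ x ∈ A, ∃ j, x ∈ B j ∨ -x ∈ B j)
    {C : ℕ → Chain d} (hCA : ∀ i ≤ m, ∀ x, C i x ≠ 0 → x ∈ A)
    (hC : IsAntipodalTower (boundary d) (antipode d) m C) : augmentation d (C 0) = 0 := by
  induction m generalizing A C with
  | zero =>
    have hC0 : C 0 = 0 := Finsupp.ext fun x => by
      by_contra hx
      exact (hcover x (hCA 0 le_rfl x hx)).elim fun j _ => j.elim0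
    rw [hC0, map_zero]
  | succ m ih =>
    rw [← augmentation_excise_zero augmentation_boundary augmentation_antipode
      (restriction (B 0)) hC]
    refine ih (A := {x ∈ A | x ∉ B 0 ∧ -x ∉ B 0}) (B := fun j => B j.succ) ?_ ?_
      (fun j => hB j.succ) (fun j x hx => hBneg j.succ x hx.1) ?_ ?_
      (isAntipodalTower_excise boundary_mul_self antipode_mul_self boundary_mul_antipode _ hC)
    · exact fun x y hxy hy => ⟨hA hxy hy.1, fun hx => hy.2.1 (hB 0 hxy hx),
        fun hx => hy.2.2 (hB 0 hxy.neg hx)⟩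
    · exact fun x hx => ⟨hAneg x hx.1, hx.2.2, by rw [neg_neg]; exact hx.2.1⟩
    · rintro x ⟨hxA, hx, hx'⟩
      obtain ⟨j, hj⟩ := hcover x hxA
      obtain rfl | ⟨j, rfl⟩ := j.eq_zero_or_eq_succ
      · exact absurd hj (not_or_intro hx hx')
      · exact ⟨j, hj⟩
    · exact fun i hi x hx => notMem_of_excise_ne_zero hA hAneg (hB 0) (hBneg 0)
        (hCA i (by omega)) (hCA (i + 1) (by omega)) hx

/-- The open `i`-cells of the coordinate plane `ℝ ^ i × {0}`. -/
def coordPlane (d i : ℕ) : Set (Cell d) :=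
  {x | ∀ j : Fin d, (j < i → Odd (x j)) ∧ (i ≤ j → x j = 0)}

/-- The open `(i + 1)`-cells of the half plane `ℝ ^ i × (0, ∞) × {0}`. -/
def halfPlane (d i : ℕ) : Set (Cell d) :=
  {x ∈ coordPlane d (i + 1) | ∀ j : Fin d, j = i → 0 < x j}

theorem neg_mem_coordPlane {i : ℕ} {x : Cell d} : -x ∈ coordPlane d i ↔ x ∈ coordPlane d i := by
  simp [coordPlane]

theorem mem_coordPlane_succ_iff {i : ℕ} (hi : i < d) {x : Cell d} :
    x ∈ coordPlane d (i + 1) ↔ Xor (x ∈ halfPlane d i) (-x ∈ halfPlane d i) := by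
  have hodd (h : x ∈ coordPlane d (i + 1)) : Odd (x ⟨i, hi⟩) := (h ⟨i, hi⟩).1 (by simp)
  have hj (P : Fin d → Prop) : (∀ j : Fin d, j = i → P j) ↔ P ⟨i, hi⟩ :=
    ⟨fun h => h _ rfl, by rintro h j rfl; exact h⟩
  simp only [halfPlane, Set.mem_ofPred_eq, neg_mem_coordPlane, hj, Pi.neg_apply, Xor]
  grind

theorem add_single_mem_halfPlane_iff {i : ℕ} {l : Fin d} (hli : l ≠ i) {x : Cell d}
    (hl : Even (x l)) :
    x + Pi.single l 1 ∈ halfPlane d i ↔ x - Pi.single l 1 ∈ halfPlane d i := by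
  simp only [halfPlane, coordPlane, Set.mem_ofPred_eq, Pi.add_apply, Pi.sub_apply, Pi.single_apply]
  grind

theorem mem_coordPlane_iff {i : Fin d} {x : Cell d} (hi : Even (x i)) :
    x ∈ coordPlane d i ↔
      Xor (x + Pi.single i 1 ∈ halfPlane d i) (x - Pi.single i 1 ∈ halfPlane d i) := by
  simp only [halfPlane, coordPlane, Set.mem_ofPred_eq, Pi.add_apply, Pi.sub_apply, Pi.single_apply,
    Xor]
  grind

open Classical in
/-- The sum of the cells of `U` which lie in `S`. -/
noncomputable def chainOf (U : Finset (Cell d)) (S : Set (Cell d)) : Chain d :=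
  Finsupp.indicator U fun x _ => if x ∈ S then 1 else 0

open Classical in
theorem chainOf_apply_of_mem {U : Finset (Cell d)} {x : Cell d} (hx : x ∈ U) (S : Set (Cell d)) :
    chainOf U S x = if x ∈ S then 1 else 0 :=
  Finsupp.indicator_of_mem hx _

theorem chainOf_apply_of_notMem {U : Finset (Cell d)} {x : Cell d} (hx : x ∉ U)
    (S : Set (Cell d)) : chainOf U S x = 0 :=
  Finsupp.indicator_of_notMem hx _

theorem chainOf_coordPlane_zero {U : Finset (Cell d)} (hU : 0 ∈ U) :
    chainOf U (coordPlane d 0) = Finsupp.single 0 1 := by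
  classical
  ext x
  have hx : x ∈ coordPlane d 0 ↔ 0 = x := by
    simp [coordPlane, funext_iff, eq_comm]
  by_cases hxU : x ∈ U
  · simp only [chainOf_apply_of_mem hxU, hx, Finsupp.single_apply]
  · rw [chainOf_apply_of_notMem hxU, Finsupp.single_eq_of_ne]
    rintro rfl
    exact hxU hU

theorem antipode_chainOf_coordPlane {U : Finset (Cell d)} (hU : ∀ x, -x ∈ U ↔ x ∈ U) (i : ℕ) :
    antipode d (chainOf U (coordPlane d i)) = chainOf U (coordPlane d i) := by
  classical
  ext x
  by_cases hx : x ∈ U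
  · rw [antipode_apply, chainOf_apply_of_mem ((hU x).2 hx), chainOf_apply_of_mem hx]
    exact if_congr neg_mem_coordPlane rfl rfl
  · simp only [antipode_apply, chainOf_apply_of_notMem, hx, hU, not_false_eq_true]

theorem chainOf_coordPlane_succ {U : Finset (Cell d)} (hU : ∀ x, -x ∈ U ↔ x ∈ U) {i : ℕ}
    (hi : i < d) :
    chainOf U (coordPlane d (i + 1)) =
      chainOf U (halfPlane d i) + antipode d (chainOf U (halfPlane d i)) := by
  ext x
  by_cases hx : x ∈ U
  · rw [Finsupp.add_apply, antipode_apply, chainOf_apply_of_mem hx, chainOf_apply_of_mem hx,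
      chainOf_apply_of_mem ((hU x).2 hx)]
    have := mem_coordPlane_succ_iff hi (x := x)
    grind [Xor]
  · simp only [Finsupp.add_apply, antipode_apply, chainOf_apply_of_notMem, hx, hU,
      not_false_eq_true, add_zero]

/-- The boundary of `U`, sliced by the flag of coordinate planes: up to the second term, which
removes the part inside `U`, the `i`-chain is the boundary of the half `(i + 1)`-plane in `U`. -/
noncomputable def boundarySlice (U : Finset (Cell d)) (i : ℕ) : Chain d :=
  boundary d (chainOf U (halfPlane d i)) + chainOf U (coordPlane d i)

theorem isAntipodalTower_boundarySlice {U : Finset (Cell d)} (hU : ∀ x, -x ∈ U ↔ x ∈ U) {m : ℕ}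
    (hm : m ≤ d) : IsAntipodalTower (boundary d) (antipode d) m (boundarySlice U) := by
  intro i hi
  have hbdbd (c : Chain d) : boundary d (boundary d c) = 0 :=
    LinearMap.congr_fun boundary_mul_self c
  have hbdν (c : Chain d) : boundary d (antipode d c) = antipode d (boundary d c) :=
    LinearMap.congr_fun boundary_mul_antipode c
  rw [boundarySlice, boundarySlice, map_add, hbdbd, zero_add, map_add,
    antipode_chainOf_coordPlane hU, add_add_add_comm, ZModModule.add_self, add_zero,
    chainOf_coordPlane_succ hU (by omega), map_add, hbdν]

theorem augmentation_boundarySlice_zero {U : Finset (Cell d)} (hU : 0 ∈ U) :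
    augmentation d (boundarySlice U 0) = 1 := by
  rw [boundarySlice, map_add, augmentation_boundary, zero_add, chainOf_coordPlane_zero hU]
  simp [augmentation]

theorem boundary_chainOf_halfPlane_apply {U : Finset (Cell d)}
    (hU : ∀ ⦃x y⦄, IsFacet x y → x ∈ U → y ∈ U) {x : Cell d} (hx : x ∈ U) (i : Fin d) :
    boundary d (chainOf U (halfPlane d i)) x = chainOf U (coordPlane d i) x := by
  classical
  have hadd {l : Fin d} (hl : Even (x l)) := chainOf_apply_of_mem (hU ⟨l, hl, .inl rfl⟩ hx)
  have hsub {l : Fin d} (hl : Even (x l)) := chainOf_apply_of_mem (hU ⟨l, hl, .inr rfl⟩ hx)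
  rw [boundary_apply, Finset.sum_eq_single i]
  · split_ifs with hi
    · rw [hadd hi, hsub hi, chainOf_apply_of_mem hx]
      have := mem_coordPlane_iff hi
      grind [Xor]
    · rw [chainOf_apply_of_mem hx, if_neg fun h => hi ?_]
      simp [(h i).2 le_rfl]
  · intro l _ hli
    refine ite_eq_right_iff.mpr fun hl => ?_
    simp only [hadd hl, hsub hl, add_single_mem_halfPlane_iff (Fin.val_ne_of_ne hli) hl]
    exact CharTwo.add_self_eq_zero _
  · simp

theorem notMem_of_boundarySlice_ne_zero {U : Finset (Cell d)}
    (hU : ∀ ⦃x y⦄, IsFacet x y → x ∈ U → y ∈ U) {i : ℕ} (hi : i < d) {x : Cell d}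
    (hx : boundarySlice U i x ≠ 0) : x ∉ U ∧ ∃ y ∈ U, IsFacet x y := by
  have hxU : x ∉ U := fun hxU => hx <| by
    rw [boundarySlice, Finsupp.add_apply, boundary_chainOf_halfPlane_apply hU hxU ⟨i, hi⟩]
    exact CharTwo.add_self_eq_zero _
  rw [boundarySlice, Finsupp.add_apply, chainOf_apply_of_notMem hxU, add_zero] at hx
  obtain ⟨y, hxy, hy⟩ := exists_isFacet_of_boundary_ne_zero hx
  exact ⟨hxU, y, by_contra fun hyU => hy (chainOf_apply_of_notMem hyU _), hxy⟩

theorem exists_boundary_cell_notMem_antipodal_cover {m : ℕ} (hm : m < d) {U : Finset (Cell d)}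
    (hU : ∀ ⦃x y⦄, IsFacet x y → x ∈ U → y ∈ U) (hUneg : ∀ x, -x ∈ U ↔ x ∈ U) (hU0 : 0 ∈ U)
    {A : Set (Cell d)} {B : Fin m → Set (Cell d)}
    (hA : ∀ ⦃x y⦄, IsFacet x y → y ∈ A → x ∈ A) (hAneg : ∀ x ∈ A, -x ∈ A)
    (hB : ∀ j, ∀ ⦃x y⦄, IsFacet x y → x ∈ B j → y ∈ B j)
    (hBneg : ∀ j, ∀ x ∈ A, x ∈ B j → -x ∉ B j) (hcover : ∀ x ∈ A, ∃ j, x ∈ B j ∨ -x ∈ B j) :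
    ∃ x ∉ U, (∃ y ∈ U, IsFacet x y) ∧ x ∉ A := by
  by_contra! hUA
  have hsliceA (i : ℕ) (hi : i ≤ m) (x : Cell d) (hx : boundarySlice U i x ≠ 0) : x ∈ A := by
    obtain ⟨hxU, hcoface⟩ := notMem_of_boundarySlice_ne_zero hU (by omega) hx
    exact hUA x hxU hcoface
  exact one_ne_zero <| (augmentation_boundarySlice_zero hU0).symm.trans <|
    augmentation_eq_zero_of_antipodal_cover hA hAneg hB hBneg hcover hsliceA
      (isAntipodalTower_boundarySlice hUneg hm.le)

end CubicalChains

section BorsukUlam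

variable {d : ℕ}

theorem exists_mem_frontier_of_isPreconnected {α : Type*} [TopologicalSpace α] {s t : Set α}
    (hs : IsPreconnected s) {x y : α} (hx : x ∈ s) (hxt : x ∈ t) (hy : y ∈ s) (hyt : y ∉ t) :
    ∃ z ∈ s, z ∈ frontier t := by
  by_contra! hfrontier
  have hcover : s ⊆ interior t ∪ interior tᶜ := fun z hz => by
    rw [← compl_frontier_eq_union_interior]
    exact hfrontier z hz
  have hxt' : x ∈ interior t := (hcover hx).resolve_right fun h => interior_subset h hxt
  have hyt' : y ∈ interior tᶜ := (hcover hy).resolve_left fun h => hyt (interior_subset h)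
  obtain ⟨z, -, hz, hz'⟩ :=
    hs _ _ isOpen_interior isOpen_interior hcover ⟨x, hx, hxt'⟩ ⟨y, hy, hyt'⟩
  exact interior_subset hz' (interior_subset hz)

open Classical in
/-- The closed cell of `ℝ ^ d` described by `x`, for the cubical grid of mesh `2 * h`. -/
noncomputable def cube (h : ℝ) (x : Cell d) : Set (Fin d → ℝ) :=
  Set.univ.pi fun i => Metric.closedBall (h * x i) (if Odd (x i) then h else 0)

variable {h : ℝ} {x y : Cell d}

theorem center_mem_cube (hh : 0 ≤ h) : (fun i => h * x i) ∈ cube h x := fun i _ =>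
  Metric.mem_closedBall_self (by split_ifs <;> order)

theorem neg_mem_cube_iff {p : Fin d → ℝ} : -p ∈ cube h x ↔ p ∈ cube h (-x) := by
  have hdist (a b : ℝ) : dist (-a) b = dist a (-b) := by rw [← dist_neg_neg, neg_neg]
  simp [cube, hdist]

theorem convex_cube : Convex ℝ (cube h x) :=
  convex_pi fun _ _ => convex_closedBall _ _

theorem IsFacet.cube_subset (hh : 0 ≤ h) (hxy : IsFacet x y) : cube h x ⊆ cube h y := by
  obtain ⟨i, hi, hy⟩ := hxy
  refine Set.pi_mono fun j _ => Metric.closedBall_subset_closedBall' ?_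
  obtain rfl | hji := eq_or_ne j i
  · rw [if_neg (Int.not_odd_iff_even.2 hi), zero_add]
    obtain rfl | rfl := hy <;>
      simp [Real.dist_eq, hi.add_one, hi.sub_odd odd_one, ← mul_sub, abs_of_nonneg hh]
  · obtain rfl | rfl := hy <;> simp [hji]

theorem dist_le_of_mem_cube (hh : 0 ≤ h) {p q : Fin d → ℝ} (hp : p ∈ cube h x) (hq : q ∈ cube h x) :
    dist p q ≤ 2 * h := by
  refine (dist_pi_le_iff (by positivity)).2 fun i => (dist_triangle_right _ _ (h * x i)).trans ?_
  have hball : Metric.closedBall (h * x i) (if Odd (x i) then h else 0) ⊆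
      Metric.closedBall (h * x i) h := Metric.closedBall_subset_closedBall (by split_ifs <;> order)
  rw [two_mul]
  exact add_le_add (hball (hp i trivial)) (hball (hq i trivial))

/-- The cells of the grid of mesh `2 * h` which meet `S`. -/
def cellsMeeting (h : ℝ) (S : Set (Fin d → ℝ)) : Set (Cell d) :=
  {x | (cube h x ∩ S).Nonempty}

theorem IsFacet.mem_cellsMeeting (hh : 0 ≤ h) (hxy : IsFacet x y) {S : Set (Fin d → ℝ)}
    (hx : x ∈ cellsMeeting h S) : y ∈ cellsMeeting h S :=
  Set.Nonempty.mono (Set.inter_subset_inter_left S (hxy.cube_subset hh)) hx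

theorem neg_mem_cellsMeeting_iff {S : Set (Fin d → ℝ)} (hS : ∀ p, -p ∈ S ↔ p ∈ S) :
    -x ∈ cellsMeeting h S ↔ x ∈ cellsMeeting h S :=
  (Equiv.neg (Fin d → ℝ)).exists_congr fun p => and_congr neg_mem_cube_iff.symm (hS p).symm

theorem finite_cellsMeeting (hh : 0 < h) {S : Set (Fin d → ℝ)} (hS : Bornology.IsBounded S) :
    (cellsMeeting h S).Finite := by
  obtain ⟨R, hR⟩ := hS.subset_closedBall 0
  obtain ⟨N, hN⟩ := exists_nat_ge ((R + h) / h)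
  refine (Set.finite_Icc (fun _ => -(N : ℤ)) fun _ => (N : ℤ)).subset ?_
  rintro x ⟨p, hp, hpS⟩
  have hx (i : Fin d) : |x i| ≤ (N : ℤ) := by
    have hpi : |p i| ≤ R := (norm_le_pi_norm p i).trans (mem_closedBall_zero_iff.1 (hR hpS))
    have hpx : |p i - h * x i| ≤ h := (hp i trivial).trans (by split_ifs <;> order)
    have hhx : h * |(x i : ℝ)| ≤ R + h := by
      rw [← abs_of_pos hh, ← abs_mul, abs_of_pos hh]
      linarith [abs_sub_abs_le_abs_sub (h * x i : ℝ) (p i), abs_sub_comm (p i) (h * x i)]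
    have : (|x i| : ℝ) ≤ N := ((le_div_iff₀' hh).2 hhx).trans hN
    exact_mod_cast this
  exact ⟨fun i => neg_le_of_abs_le (hx i), fun i => le_of_abs_le (hx i)⟩

theorem exists_forall_dist_lt_of_ne_zero {E F : Type*} [NormedAddCommGroup E] [ProperSpace E]
    [NormedAddCommGroup F] {f : E → F} (hf : Continuous f) {K : Set E} (hK : IsCompact K)
    (hne : ∀ z ∈ K, f z ≠ 0) :
    ∃ R : ℝ, ∃ μ > 0, ∃ δ > 0,
      (∀ p ∈ Metric.closedBall 0 R, ∀ q ∈ Metric.closedBall 0 R, dist p q < δ →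
        dist (f p) (f q) < μ) ∧
      ∀ z ∈ K, ∀ p, dist p z < δ → p ∈ Metric.closedBall 0 R ∧ μ ≤ ‖f p‖ := by
  obtain ⟨R, hR⟩ := hK.isBounded.subset_closedBall 0
  obtain ⟨μ, hμ, hμK⟩ := hK.exists_forall_le' hf.norm.continuousOn fun z hz =>
    norm_pos_iff.2 (hne z hz)
  have huc := (isCompact_closedBall 0 (R + 1)).uniformContinuousOn_of_continuous hf.continuousOn
  obtain ⟨δ, hδ, hδf⟩ := Metric.uniformContinuousOn_iff.1 huc (μ / 2) (half_pos hμ)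
  refine ⟨R + 1, μ / 2, half_pos hμ, min δ 1, lt_min hδ one_pos,
    fun p hp q hq hpq => hδf p hp q hq (hpq.trans_le (min_le_left _ _)), fun z hz p hpz => ?_⟩
  have hz' : z ∈ Metric.closedBall 0 (R + 1) :=
    Metric.closedBall_subset_closedBall (by linarith) (hR hz)
  have hp : p ∈ Metric.closedBall 0 (R + 1) := Metric.mem_closedBall.2 <| by
    linarith [dist_triangle p z 0, hpz.trans_le (min_le_right _ _), Metric.mem_closedBall.1 (hR hz)]
  have hfpz := hδf p hp z hz' (hpz.trans_le (min_le_left _ _))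
  refine ⟨hp, ?_⟩
  linarith [hμK z hz, norm_sub_norm_le (f z) (f p), dist_eq_norm' (f p) (f z)]

theorem exists_dist_lt_frontier_of_isFacet {h δ : ℝ} (hh : 0 ≤ h) (hδ : 2 * h < δ)
    {U : Set (Fin d → ℝ)} {x y : Cell d} (hx : x ∉ cellsMeeting h U) (hxy : IsFacet x y)
    (hy : y ∈ cellsMeeting h U) : ∃ z ∈ frontier U, ∀ p ∈ cube h x, dist p z < δ := by
  obtain ⟨q, hq, hqU⟩ := hy
  have hcenter := center_mem_cube (x := x) hh
  obtain ⟨z, hz, hzU⟩ := exists_mem_frontier_of_isPreconnected convex_cube.isPreconnected hq hqU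
    (hxy.cube_subset hh hcenter) fun hU => hx ⟨_, hcenter, hU⟩
  exact ⟨z, hzU, fun p hp => (dist_le_of_mem_cube hh (hxy.cube_subset hh hp) hz).trans_lt hδ⟩

theorem notMem_cellsMeeting_of_odd {n : ℕ} {f : (Fin d → ℝ) → (Fin n → ℝ)} (hodd : f.Odd)
    {h μ : ℝ} {x : Cell d} (hx : ∀ p ∈ cube h x, ∀ q ∈ cube h x, dist (f p) (f q) < μ) {j : Fin n}
    (hxj : x ∈ cellsMeeting h {p | μ / 2 < f p j}) : -x ∉ cellsMeeting h {p | μ / 2 < f p j} := by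
  obtain ⟨p, hp, hpj : μ / 2 < f p j⟩ := hxj
  rintro ⟨q, hq, hqj : μ / 2 < f q j⟩
  have hdist : dist (f p j) (f (-q) j) < μ :=
    (dist_le_pi_dist _ _ j).trans_lt (hx p hp (-q) (neg_mem_cube_iff.2 hq))
  rw [hodd q, Pi.neg_apply, Real.dist_eq] at hdist
  linarith [le_abs_self (f p j - -f q j)]

theorem exists_mem_cellsMeeting_of_lt_norm {n : ℕ} {f : (Fin d → ℝ) → (Fin n → ℝ)} (hodd : f.Odd)
    {h μ : ℝ} (hμ : 0 ≤ μ) {x : Cell d} {p : Fin d → ℝ} (hp : p ∈ cube h x) (hfp : μ < ‖f p‖) :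
    ∃ j, x ∈ cellsMeeting h {p | μ < f p j} ∨ -x ∈ cellsMeeting h {p | μ < f p j} := by
  obtain ⟨j, hj⟩ : ∃ j, μ < |f p j| := by
    by_contra! hle
    exact hfp.not_ge ((pi_norm_le_iff_of_nonneg hμ).2 hle)
  refine ⟨j, (lt_abs.1 hj).imp (fun hpos => ⟨p, hp, hpos⟩) fun hneg => ?_⟩
  exact ⟨-p, neg_mem_cube_iff.2 (by rwa [neg_neg]), by simpa [hodd p] using hneg⟩

theorem exists_mem_frontier_eq_zero_of_pi {n : ℕ} (hnd : n < d) {U : Set (Fin d → ℝ)}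
    (hUbdd : Bornology.IsBounded U) (hUneg : ∀ p, -p ∈ U ↔ p ∈ U) (hU0 : 0 ∈ U)
    {f : (Fin d → ℝ) → (Fin n → ℝ)} (hf : Continuous f) (hodd : f.Odd) :
    ∃ p ∈ frontier U, f p = 0 := by
  by_contra! hne
  have hcompact : IsCompact (frontier U) :=
    hUbdd.isCompact_closure.of_isClosed_subset isClosed_frontier frontier_subset_closure
  obtain ⟨R, μ, hμ, δ, hδ, huc, hnear⟩ := exists_forall_dist_lt_of_ne_zero hf hcompact hne
  have hh : 0 < δ / 3 := by positivity
  have hU0' : 0 ∈ cellsMeeting (δ / 3) U := ⟨0, fun i _ => by simp, hU0⟩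
  obtain ⟨x, hxU, ⟨y, hyU, hxy⟩, hxA⟩ := exists_boundary_cell_notMem_antipodal_cover hnd
    (U := (finite_cellsMeeting hh hUbdd).toFinset)
    (A := {x | cube (δ / 3) x ⊆ {p ∈ Metric.closedBall 0 R | μ ≤ ‖f p‖}})
    (B := fun j => cellsMeeting (δ / 3) {p | μ / 2 < f p j})
    (fun x y hxy hx => by
      simp only [Set.Finite.mem_toFinset] at hx ⊢
      exact hxy.mem_cellsMeeting hh.le hx)
    (fun x => by simp only [Set.Finite.mem_toFinset, neg_mem_cellsMeeting_iff hUneg])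
    ((Set.Finite.mem_toFinset _).2 hU0')
    (fun x y hxy hy => (hxy.cube_subset hh.le).trans hy)
    (fun x hx p hp => by simpa [hodd p] using hx (neg_mem_cube_iff.2 hp))
    (fun j x y hxy => hxy.mem_cellsMeeting hh.le)
    (fun j x hx => notMem_cellsMeeting_of_odd hodd fun p hp q hq =>
      huc p (hx hp).1 q (hx hq).1 ((dist_le_of_mem_cube hh.le hp hq).trans_lt (by linarith)))
    (fun x hx => exists_mem_cellsMeeting_of_lt_norm hodd (half_pos hμ).le (center_mem_cube hh.le)
      ((half_lt_self hμ).trans_le (hx (center_mem_cube hh.le)).2))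
  simp only [Set.Finite.mem_toFinset] at hxU hyU
  obtain ⟨z, hz, hzx⟩ :=
    exists_dist_lt_frontier_of_isFacet hh.le (by linarith : 2 * (δ / 3) < δ) hxU hxy hyU
  exact hxA fun p hp => hnear z hz p (hzx p hp)

theorem exists_mem_frontier_eq_zero {V : Type*} [NormedAddCommGroup V] [NormedSpace ℝ V]
    [FiniteDimensional ℝ V] {n : ℕ} (hn : n < Module.finrank ℝ V) {U : Set V}
    (hUbdd : Bornology.IsBounded U) (hUneg : ∀ v, -v ∈ U ↔ v ∈ U) (hU0 : 0 ∈ U)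
    {f : V → (Fin n → ℝ)} (hf : Continuous f) (hodd : f.Odd) : ∃ v ∈ frontier U, f v = 0 := by
  let φ := (Module.finBasis ℝ V).equivFunL
  have hbdd : Bornology.IsBounded (φ.symm ⁻¹' U) := by
    rw [← φ.image_eq_preimage_symm]
    exact φ.lipschitz.isBounded_image hUbdd
  obtain ⟨p, hp, hfp⟩ := exists_mem_frontier_eq_zero_of_pi hn hbdd (f := f ∘ φ.symm)
    (fun p => by simp [hUneg]) (by simpa using hU0) (hf.comp φ.symm.continuous)
    (fun p => by simp [hodd (φ.symm p)])
  rw [← φ.symm.coe_toHomeomorph, ← φ.symm.toHomeomorph.preimage_frontier] at hp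
  exact ⟨φ.symm p, hp, hfp⟩

theorem exists_mem_map_mem_of_finrank_lt {W : Type*} [NormedAddCommGroup W] [NormedSpace ℝ W]
    [FiniteDimensional ℝ W] {Y Z : Submodule ℝ W}
    (hYZ : Module.finrank ℝ W < Module.finrank ℝ Y + Module.finrank ℝ Z) {η : W → W}
    (hη : Continuous η) (hodd : η.Odd) {r ρ : ℝ} (hr : 0 < r) (hrρ : r < ρ)
    (hfix : ∀ u ∈ Z, ‖u‖ = ρ → η u = u) :
    ∃ u ∈ Z, ‖u‖ ≤ ρ ∧ η u ∈ Y ∧ ‖η u‖ = r := by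
  have := IsAddTorsionFree.of_isTorsionFree ℝ W
  let U : Set Z := {u | ‖u‖ < ρ ∧ ‖η u‖ < r}
  let φ := (Module.finBasis ℝ (W ⧸ Y)).equivFun.toLinearMap ∘ₗ Y.mkQ
  have hφ (w : W) : φ w = 0 ↔ w ∈ Y := by simp [φ]
  have hdim : Module.finrank ℝ (W ⧸ Y) < Module.finrank ℝ Z := by
    have := Y.finrank_quotient_add_finrank
    omega
  have hηZ : Continuous fun u : Z => η u := hη.comp continuous_subtype_val
  have hUopen : IsOpen U :=
    (isOpen_lt continuous_norm continuous_const).inter (isOpen_lt hηZ.norm continuous_const)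
  obtain ⟨u, huU, hu⟩ := exists_mem_frontier_eq_zero hdim (U := U) (f := fun u => φ (η u))
    (Metric.isBounded_ball.subset fun u hu => mem_ball_zero_iff.2 hu.1)
    (fun u => by simp [U, hodd (u : W)]) (by simp [U, hodd.map_zero, hr, hr.trans hrρ])
    (φ.continuous_of_finiteDimensional.comp hηZ) (fun u => by simp [hodd (u : W)])
  have hUclosure : closure U ⊆ {u : Z | ‖u‖ ≤ ρ} ∩ {u : Z | ‖η u‖ ≤ r} :=
    closure_minimal (fun v hv => ⟨hv.1.le, hv.2.le⟩)
      ((isClosed_le continuous_norm continuous_const).inter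
        (isClosed_le hηZ.norm continuous_const))
  have hle : ‖u‖ ≤ ρ ∧ ‖η u‖ ≤ r := hUclosure (frontier_subset_closure huU)
  have hlt (h : ‖η u‖ < r) : ρ ≤ ‖u‖ := by
    by_contra! h'
    exact (hUopen.inter_frontier_eq ▸ ⟨⟨h', h⟩, huU⟩ : u ∈ (∅ : Set Z))
  refine ⟨u, u.2, hle.1, (hφ _).1 hu, hle.2.antisymm <| not_lt.1 fun h => ?_⟩
  have hnorm : ‖(u : W)‖ = ρ := hle.1.antisymm (hlt h)
  rw [hfix u u.2 hnorm, hnorm] at h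
  exact h.not_gt hrρ

end BorsukUlam

section Deformation

variable {W : Type*} [NormedAddCommGroup W] [NormedSpace ℝ W] {F : W → ℝ} {F' : W → W →L[ℝ] ℝ}

theorem odd_of_hasFDerivAt_of_even (hF : ∀ x, HasFDerivAt F (F' x) x) (heven : F.Even) :
    F'.Odd := fun x => by
  have hcomp : HasFDerivAt (F ∘ Neg.neg) (-F' (-x)) x := by
    simpa using (hF (-x)).comp x (hasFDerivAt_id x).neg
  have hFneg : F ∘ Neg.neg = F := funext heven
  rw [hFneg] at hcomp
  rw [(hF x).unique hcomp, neg_neg]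

theorem exists_mem_closedBall_lt_of_lt_norm {f : W →L[ℝ] ℝ} {κ : ℝ} (hκ : κ < ‖f‖) :
    ∃ v, ‖v‖ ≤ 1 ∧ κ < f v := by
  obtain ⟨v, hv, hfv⟩ := f.exists_lt_apply_of_lt_opNorm hκ
  obtain h | h := lt_abs.1 hfv
  · exact ⟨v, hv.le, h⟩
  · exact ⟨-v, by rw [norm_neg]; exact hv.le, by rwa [map_neg]⟩

theorem exists_pseudoGradient (hF : Continuous F) (hF' : Continuous F') {a b κ : ℝ}
    (hκ : ∀ x, F x ∈ Set.Icc a b → κ < ‖F' x‖) :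
    ∃ w : W → W, Continuous w ∧ (∀ x, ‖w x‖ ≤ 1) ∧ ∀ x, F x ∈ Set.Icc a b → κ < F' x (w x) := by
  let t (x : W) : Set W := {v | ‖v‖ ≤ 1} ∩ {v | F x ∈ Set.Icc a b → κ < F' x v}
  have htconvex (x : W) : Convex ℝ (t x) := by
    refine Convex.inter (by simpa [Metric.closedBall] using convex_closedBall (0 : W) 1) ?_
    by_cases hx : F x ∈ Set.Icc a b
    · simpa [hx] using convex_halfSpace_gt (F' x).isLinear κ
    · simpa [hx] using convex_univ
  have htlocal (x : W) : ∃ v, ∀ᶠ y in 𝓝 x, v ∈ t y := by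
    by_cases hx : F x ∈ Set.Icc a b
    · obtain ⟨v, hv, hκv⟩ := exists_mem_closedBall_lt_of_lt_norm (hκ x hx)
      have hcont : ContinuousAt (fun y => F' y v) x := (hF'.clm_apply continuous_const).continuousAt
      exact ⟨v, (hcont.eventually_const_lt hκv).mono fun y hy => ⟨hv, fun _ => hy⟩⟩
    · have hclosed : IsClosed {y | F y ∈ Set.Icc a b} := isClosed_Icc.preimage hF
      refine ⟨0, ?_⟩
      filter_upwards [hclosed.isOpen_compl.mem_nhds hx] with y hy
      exact ⟨by simp, fun h => (hy h).elim⟩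
  obtain ⟨w, hw⟩ := exists_continuous_forall_mem_convex_of_local_const htconvex htlocal
  exact ⟨w, w.continuous, fun x => (hw x).1, fun x => (hw x).2⟩

theorem exists_odd_pseudoGradient (hF : ∀ x, HasFDerivAt F (F' x) x) (hF' : Continuous F')
    (heven : F.Even) {a b κ : ℝ} (hκ : ∀ x, F x ∈ Set.Icc a b → κ < ‖F' x‖) :
    ∃ w : W → W, Continuous w ∧ w.Odd ∧ (∀ x, ‖w x‖ ≤ 1) ∧
      ∀ x, F x ∈ Set.Icc a b → κ < F' x (w x) := by
  have hFcont : Continuous F := continuous_iff_continuousAt.2 fun x => (hF x).continuousAt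
  obtain ⟨v, hvcont, hv, hκv⟩ := exists_pseudoGradient hFcont hF' hκ
  refine ⟨fun x => (2⁻¹ : ℝ) • (v x - v (-x)), by fun_prop, fun x => ?_, fun x => ?_,
    fun x hx => ?_⟩
  · simp only [neg_neg, ← smul_neg, neg_sub]
  · rw [norm_smul, Real.norm_of_nonneg (by norm_num)]
    linarith [norm_sub_le (v x) (v (-x)), hv x, hv (-x)]
  · have hx' := hκv (-x) (by rwa [heven])
    rw [odd_of_hasFDerivAt_of_even hF heven, neg_apply] at hx'
    rw [map_smul, map_sub, smul_eq_mul]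
    linarith [hκv x hx]

theorem exists_forall_ascent [ProperSpace W] (hF : ∀ x, HasFDerivAt F (F' x) x)
    (hF' : Continuous F') {w : W → W} (hw : ∀ x, ‖w x‖ ≤ 1) {κ : ℝ} (hκ : 0 < κ) (R : ℝ) :
    ∃ s > 0, ∀ x ∈ Metric.closedBall 0 R, κ ≤ F' x (w x) → ∀ τ ∈ Set.Icc 0 s,
      κ / 2 * τ ≤ F (x + τ • w x) - F x := by
  have huc := (isCompact_closedBall (0 : W) (R + 1)).uniformContinuousOn_of_continuous
    hF'.continuousOn
  obtain ⟨δ, hδ, hδF'⟩ := Metric.uniformContinuousOn_iff.1 huc (κ / 2) (half_pos hκ)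
  refine ⟨min (δ / 2) 1, by positivity, fun x hx hxw τ hτ => ?_⟩
  have hball : Metric.closedBall x τ ⊆ Metric.closedBall 0 (R + 1) :=
    Metric.closedBall_subset_closedBall' <| by
      linarith [Metric.mem_closedBall.1 hx, hτ.2.trans (min_le_right _ _)]
  have hx' : x ∈ Metric.closedBall x τ := Metric.mem_closedBall_self hτ.1
  have hstep : ‖τ • w x‖ ≤ τ := by
    rw [norm_smul, Real.norm_of_nonneg hτ.1]
    exact mul_le_of_le_one_right hτ.1 (hw x)
  have hF'near (y : W) (hy : y ∈ Metric.closedBall x τ) : ‖F' y - F' x‖ ≤ κ / 2 := by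
    rw [← dist_eq_norm]
    refine (hδF' y (hball hy) x (hball hx') ((Metric.mem_closedBall.1 hy).trans_lt ?_)).le
    linarith [hτ.2.trans (min_le_left _ _)]
  have hmean := (convex_closedBall x τ).norm_image_sub_le_of_norm_hasFDerivWithin_le'
    (fun y _ => (hF y).hasFDerivWithinAt) hF'near hx'
    (show x + τ • w x ∈ _ by simpa [dist_eq_norm] using hstep)
  rw [add_sub_cancel_left, map_smul, smul_eq_mul, Real.norm_eq_abs] at hmean
  linarith [neg_le_of_abs_le hmean, mul_le_mul_of_nonneg_left hxw hτ.1,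
    mul_le_mul_of_nonneg_left hstep (half_pos hκ).le]

theorem exists_iterate_ascent {α : Type*} {F : α → ℝ} {σ : α → α} {S : Set α}
    (hS : Set.MapsTo σ S S) {b c : ℝ} (hc : 0 < c) (hmono : ∀ x ∈ S, F x ≤ F (σ x))
    (hstep : ∀ x ∈ S, F x ≤ b → F x + c ≤ F (σ x)) (a : ℝ) :
    ∃ N, ∀ x ∈ S, a ≤ F x → b ≤ F (σ^[N] x) := by
  have hmin (x : α) (hx : x ∈ S) (hax : a ≤ F x) (j : ℕ) : min b (a + j * c) ≤ F (σ^[j] x) := by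
    induction j with
    | zero => simp [hax]
    | succ j ih =>
      have hj : σ^[j] x ∈ S := hS.iterate j hx
      rw [Function.iterate_succ_apply']
      obtain hb | hb := le_total (F (σ^[j] x)) b
      · push_cast
        have := hstep _ hj hb
        grind
      · exact (min_le_left _ _).trans (hb.trans (hmono _ hj))
  obtain ⟨N, hN⟩ := exists_nat_ge ((b - a) / c)
  refine ⟨N, fun x hx hax => ?_⟩
  have hNb : b ≤ a + N * c := by linarith [(div_le_iff₀ hc).1 hN]
  exact min_eq_left hNb ▸ hmin x hx hax N

theorem exists_odd_ascent [ProperSpace W] (hF : ∀ x, HasFDerivAt F (F' x) x) (hF' : Continuous F')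
    (heven : F.Even) {a b b' κ : ℝ} (hbb' : b < b') (hκ : 0 < κ)
    (hFκ : ∀ x, F x ∈ Set.Icc a b' → κ < ‖F' x‖) (R : ℝ) :
    ∃ σ : W → W, Continuous σ ∧ σ.Odd ∧ (∀ x, b' ≤ F x → σ x = x) ∧
      (∀ x ∈ Metric.closedBall 0 R, F x ∈ Set.Icc a b' → κ / 2 * ‖σ x - x‖ ≤ F (σ x) - F x) ∧
      ∃ c > 0, ∀ x ∈ Metric.closedBall 0 R, F x ∈ Set.Icc a b → F x + c ≤ F (σ x) := by
  obtain ⟨w, hwcont, hwodd, hw, hκw⟩ := exists_odd_pseudoGradient hF hF' heven hFκ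
  obtain ⟨s, hs, hascent⟩ := exists_forall_ascent hF hF' hw hκ R
  have hFcont : Continuous F := continuous_iff_continuousAt.2 fun x => (hF x).continuousAt
  let χ (t : ℝ) : ℝ := max 0 (min 1 ((b' - t) / (b' - b)))
  have hχ (t : ℝ) : s * χ t ∈ Set.Icc 0 s :=
    ⟨by positivity, mul_le_of_le_one_right hs.le (max_le zero_le_one (min_le_left _ _))⟩
  have hχb' {t : ℝ} (ht : b' ≤ t) : χ t = 0 :=
    max_eq_left <| (min_le_right _ _).trans <|
      div_nonpos_of_nonpos_of_nonneg (by linarith) (by linarith)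
  have hχb {t : ℝ} (ht : t ≤ b) : χ t = 1 := by
    have : 1 ≤ (b' - t) / (b' - b) := (one_le_div (by linarith)).2 (by linarith)
    simp [χ, this]
  refine ⟨fun x => x + (s * χ (F x)) • w x, by fun_prop, fun x => ?_, fun x hx => ?_,
    fun x hx hFx => ?_, κ / 2 * s, by positivity, fun x hx hFx => ?_⟩
  · simp only [heven x, hwodd x, smul_neg, neg_add]
  · simp only [hχb' hx, mul_zero, zero_smul, add_zero]
  · refine le_trans ?_ (hascent x hx (hκw x hFx).le _ (hχ _))
    rw [add_sub_cancel_left, norm_smul, Real.norm_of_nonneg (hχ _).1]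
    exact mul_le_mul_of_nonneg_left (mul_le_of_le_one_right (hχ _).1 (hw x)) (half_pos hκ).le
  · have hFx' : F x ∈ Set.Icc a b' := ⟨hFx.1, hFx.2.trans hbb'.le⟩
    have := hascent x hx (hκw x hFx').le _ (hχ (F x))
    simp only [hχb hFx.2, mul_one] at this ⊢
    linarith

theorem exists_odd_deformation [ProperSpace W] (hF : ∀ x, HasFDerivAt F (F' x) x)
    (hF' : Continuous F') (heven : F.Even) {a b b' κ : ℝ} (hbb' : b < b') (hκ : 0 < κ)
    (hFκ : ∀ x, F x ∈ Set.Icc a b' → κ < ‖F' x‖) (R : ℝ) :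
    ∃ η : W → W, Continuous η ∧ η.Odd ∧ (∀ x, b' ≤ F x → η x = x) ∧
      ∀ x, ‖x‖ ≤ R → a ≤ F x → b ≤ F (η x) := by
  obtain ⟨σ, hσcont, hσodd, hσfix, hσmove, c, hc, hσc⟩ :=
    exists_odd_ascent hF hF' heven hbb' hκ hFκ (R + 2 / κ * (b' - a))
  let S : Set W := {x | b' ≤ F x ∨ a ≤ F x ∧ κ / 2 * ‖x‖ ≤ κ / 2 * R + (F x - a)}
  have hSball {x : W} (hx : x ∈ S) (hxb' : ¬b' ≤ F x) :
      x ∈ Metric.closedBall 0 (R + 2 / κ * (b' - a)) := by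
    rw [mem_closedBall_zero_iff, ← mul_le_mul_iff_right₀ (half_pos hκ)]
    calc κ / 2 * ‖x‖ ≤ κ / 2 * R + (F x - a) := (hx.resolve_left hxb').2
      _ ≤ κ / 2 * R + (b' - a) := by linarith
      _ = κ / 2 * (R + 2 / κ * (b' - a)) := by field_simp
  have hmono (x : W) (hx : x ∈ S) : κ / 2 * ‖σ x - x‖ ≤ F (σ x) - F x := by
    by_cases hxb' : b' ≤ F x
    · simp [hσfix x hxb']
    · exact hσmove x (hSball hx hxb') ⟨(hx.resolve_left hxb').1, le_of_not_ge hxb'⟩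
  have hS : Set.MapsTo σ S S := fun x hx => by
    by_cases hxb' : b' ≤ F x
    · rwa [hσfix x hxb']
    · obtain ⟨hax, hxR⟩ := hx.resolve_left hxb'
      have hσx := hmono x hx
      refine Or.inr ⟨?_, ?_⟩
      · linarith [show 0 ≤ κ / 2 * ‖σ x - x‖ by positivity]
      · linarith [mul_le_mul_of_nonneg_left (norm_le_norm_add_norm_sub' (σ x) x) (half_pos hκ).le]
  obtain ⟨N, hN⟩ := exists_iterate_ascent hS hc
    (fun x hx => sub_nonneg.1 (le_trans (by positivity) (hmono x hx)))
    (fun x hx hxb => hσc x (hSball hx (by linarith))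
      ⟨(hx.resolve_left (by linarith)).1, hxb⟩) a
  refine ⟨σ^[N], hσcont.iterate N, fun x => ?_, fun x hx => ?_, fun x hxR hax => ?_⟩
  · exact (Function.Semiconj.iterate_right (fun y => (hσodd y).symm) N x).symm
  · exact Function.iterate_fixed (hσfix x hx) N
  · refine hN x (Or.inr ⟨hax, ?_⟩) hax
    linarith [mul_le_mul_of_nonneg_left hxR (half_pos hκ).le]

end Deformation

theorem exists_almost_critical_of_finrank_lt {W : Type*} [NormedAddCommGroup W] [NormedSpace ℝ W]
    [FiniteDimensional ℝ W] {F : W → ℝ} {F' : W → W →L[ℝ] ℝ}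
    (hF : ∀ x, HasFDerivAt F (F' x) x) (hF' : Continuous F') (heven : F.Even)
    {Y Z : Submodule ℝ W}
    (hYZ : Module.finrank ℝ W < Module.finrank ℝ Y + Module.finrank ℝ Z)
    {r ρ b b' d κ : ℝ} (hr : 0 < r) (hrρ : r < ρ) (hκ : 0 < κ) (hbb' : b < b') (hb' : b' ≤ 0)
    (hFZ : ∀ u ∈ Z, ‖u‖ = ρ → 0 ≤ F u) (hFY : ∀ u ∈ Y, ‖u‖ = r → F u ≤ b)
    (hFd : ∀ u ∈ Z, ‖u‖ ≤ ρ → d ≤ F u) :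
    ∃ u, F u ∈ Set.Icc d b' ∧ ‖F' u‖ ≤ κ := by
  have := FiniteDimensional.proper ℝ W
  by_contra! hFκ
  obtain ⟨c, hbc, hcb'⟩ := exists_between hbb'
  obtain ⟨η, hηcont, hηodd, hηfix, hηc⟩ := exists_odd_deformation hF hF' heven hcb' hκ hFκ ρ
  obtain ⟨u, huZ, huρ, hηuY, hηur⟩ := exists_mem_map_mem_of_finrank_lt hYZ hηcont hηodd hr hrρ
    fun u hu huρ => hηfix u (hb'.trans (hFZ u hu huρ))
  linarith [hFY (η u) hηuY hηur, hηc u huρ (hFd u huZ huρ)]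

section Galerkin

open Submodule

variable {X : Type*} [NormedAddCommGroup X] [NormedSpace ℝ X] {E : X → ℝ} {E' : X → X →L[ℝ] ℝ}

theorem finrank_sup_lt_finrank_submoduleOf_add {Y Z : Submodule ℝ X} [FiniteDimensional ℝ Y]
    [FiniteDimensional ℝ Z] (hYZ : Y ⊓ Z ≠ ⊥) :
    Module.finrank ℝ ↥(Y ⊔ Z) <
      Module.finrank ℝ (Y.submoduleOf (Y ⊔ Z)) + Module.finrank ℝ (Z.submoduleOf (Y ⊔ Z)) := by
  rw [(submoduleOfEquivOfLe le_sup_left).finrank_eq, (submoduleOfEquivOfLe le_sup_right).finrank_eq,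
    ← finrank_sup_add_finrank_inf_eq]
  exact Nat.lt_add_of_pos_right (one_le_finrank_iff.2 hYZ)

theorem exists_almost_critical_of_inf_ne_bot (hE : ∀ u, HasFDerivAt E (E' u) u)
    (hE' : Continuous E') (heven : E.Even) {Y Z : Submodule ℝ X} [FiniteDimensional ℝ Y]
    [FiniteDimensional ℝ Z] (hYZ : Y ⊓ Z ≠ ⊥) {r ρ b b' d κ : ℝ} (hr : 0 < r) (hrρ : r < ρ)
    (hκ : 0 < κ) (hbb' : b < b') (hb' : b' ≤ 0) (hEZ : ∀ u ∈ Z, ‖u‖ = ρ → 0 ≤ E u)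
    (hEY : ∀ u ∈ Y, ‖u‖ = r → E u ≤ b) (hEd : ∀ u ∈ Z, ‖u‖ ≤ ρ → d ≤ E u) :
    ∃ u ∈ Y ⊔ Z, E u ∈ Set.Icc d b' ∧ ‖(E' u).comp (Y ⊔ Z).subtypeL‖ ≤ κ := by
  obtain ⟨u, hEu, hE'u⟩ := exists_almost_critical_of_finrank_lt
    (F := fun u : ↥(Y ⊔ Z) => E u) (F' := fun u => (E' u).comp (Y ⊔ Z).subtypeL)
    (fun u => (hE u).comp u (Y ⊔ Z).subtypeL.hasFDerivAt) (by fun_prop) (fun u => heven u)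
    (finrank_sup_lt_finrank_submoduleOf_add hYZ) hr hrρ hκ hbb' hb'
    (fun u hu => hEZ u hu) (fun u hu => hEY u hu) (fun u hu => hEd u hu)
  exact ⟨u, u.2, hEu, hE'u⟩

/-- The Palais–Smale condition `(PS)_c^*` for a functional `E` with derivative `E'`, relative to
the Galerkin subspaces `Y n`. The critical value of the limit need not be recorded: it is `c` as
soon as `E` is continuous. -/
def PalaisSmaleStar (E : X → ℝ) (E' : X → X →L[ℝ] ℝ) (Y : ℕ → Submodule ℝ X) (c : ℝ) : Prop :=
  ∀ (nj : ℕ → ℕ) (u : ℕ → X), Tendsto nj atTop atTop → (∀ j, u j ∈ Y (nj j)) →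
    Tendsto (fun j => E (u j)) atTop (𝓝 c) →
    Tendsto (fun j => ‖(E' (u j)).comp (Y (nj j)).subtypeL‖) atTop (𝓝 0) →
    ∃ (v : X) (σ : ℕ → ℕ), StrictMono σ ∧ Tendsto (u ∘ σ) atTop (𝓝 v) ∧ E' v = 0

theorem exists_critical_of_palaisSmaleStar {Y : ℕ → Submodule ℝ X} {a b : ℝ}
    (hPS : ∀ c ∈ Set.Icc a b, PalaisSmaleStar E E' Y c) (hE : Continuous E)
    (happrox : ∀ κ > 0, ∀ᶠ n in atTop,
      ∃ u ∈ Y n, E u ∈ Set.Icc a b ∧ ‖(E' u).comp (Y n).subtypeL‖ ≤ κ) :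
    ∃ v, E' v = 0 ∧ E v ∈ Set.Icc a b := by
  have hseq (j : ℕ) : ∃ n ≥ j, ∃ u ∈ Y n,
      E u ∈ Set.Icc a b ∧ ‖(E' u).comp (Y n).subtypeL‖ ≤ 1 / (j + 1 : ℝ) :=
    ((eventually_ge_atTop j).and (happrox _ (by positivity))).exists
  choose n hn u huY huE hu' using hseq
  obtain ⟨c, hc, φ, hφ, hφc⟩ := isCompact_Icc.tendsto_subseq huE
  have hn' : Tendsto n atTop atTop := tendsto_atTop_mono hn tendsto_id
  have hu'0 : Tendsto (fun j => ‖(E' (u j)).comp (Y (n j)).subtypeL‖) atTop (𝓝 0) :=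
    squeeze_zero (fun j => norm_nonneg (_ : Y (n j) →L[ℝ] ℝ)) hu'
      tendsto_one_div_add_atTop_nhds_zero_nat
  obtain ⟨v, σ, _, hv, hE'v⟩ := hPS c hc (n ∘ φ) (u ∘ φ) (hn'.comp hφ.tendsto_atTop)
    (fun j => huY (φ j)) hφc (hu'0.comp hφ.tendsto_atTop)
  exact ⟨v, hE'v, isClosed_Icc.mem_of_tendsto ((hE.tendsto v).comp hv)
    (Eventually.of_forall fun j => huE _)⟩

theorem span_image_inf_span_image_ne_bot {ι : Type*} {e : ι → X} {k : ι} (hek : e k ≠ 0)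
    {s t : Set ι} (hs : k ∈ s) (ht : k ∈ t) : span ℝ (e '' s) ⊓ span ℝ (e '' t) ≠ ⊥ :=
  (Submodule.ne_bot_iff _).2 ⟨e k, mem_inf.2 ⟨subset_span (Set.mem_image_of_mem e hs),
    subset_span (Set.mem_image_of_mem e ht)⟩, hek⟩

theorem exists_mem_norm_eq_of_ne_bot {Y : Submodule ℝ X} (hY : Y ≠ ⊥) {r : ℝ} (hr : 0 ≤ r) :
    ∃ u ∈ Y, ‖u‖ = r := by
  have := nontrivial_iff_ne_bot.2 hY
  obtain ⟨u, hu⟩ := exists_norm_eq Y hr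
  exact ⟨u, u.2, hu⟩

theorem exists_critical_of_linking (hE : ∀ u, HasFDerivAt E (E' u) u) (hE' : Continuous E')
    (heven : E.Even) {e : ℕ → X} {k : ℕ} (hek : e k ≠ 0) {r ρ b b' d : ℝ} (hr : 0 < r)
    (hrρ : r < ρ) (hbb' : b < b') (hb' : b' ≤ 0)
    (hEZ : ∀ u ∈ span ℝ (e '' {j | k ≤ j}), ‖u‖ = ρ → 0 ≤ E u)
    (hEY : ∀ u ∈ span ℝ (e '' {j | j ≤ k}), ‖u‖ = r → E u ≤ b)
    (hEd : ∀ u ∈ span ℝ (e '' {j | k ≤ j}), ‖u‖ ≤ ρ → d ≤ E u)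
    (hPS : ∀ c ∈ Set.Icc d b', PalaisSmaleStar E E' (fun n => span ℝ (e '' {i | i ≤ n})) c) :
    ∃ v, E' v = 0 ∧ E v ∈ Set.Icc d b' := by
  refine exists_critical_of_palaisSmaleStar hPS
    (continuous_iff_continuousAt.2 fun u => (hE u).continuousAt) fun κ hκ => ?_
  filter_upwards [eventually_ge_atTop k] with n hkn
  have hYZ : span ℝ (e '' {j | j ≤ n}) =
      span ℝ (e '' {j | j ≤ k}) ⊔ span ℝ (e '' Set.Icc k n) := by
    rw [← span_union, ← Set.image_union]
    congr 2
    ext j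
    grind
  have := FiniteDimensional.span_of_finite ℝ ((Set.finite_le_nat k).image e)
  have := FiniteDimensional.span_of_finite ℝ ((Set.finite_Icc k n).image e)
  have hZ : span ℝ (e '' Set.Icc k n) ≤ span ℝ (e '' {j | k ≤ j}) :=
    span_mono (Set.image_mono fun j hj => hj.1)
  have hinf : span ℝ (e '' {j | j ≤ k}) ⊓ span ℝ (e '' Set.Icc k n) ≠ ⊥ :=
    span_image_inf_span_image_ne_bot hek (le_refl k) (Set.left_mem_Icc.2 hkn)
  rw [hYZ]
  exact exists_almost_critical_of_inf_ne_bot hE hE' heven hinf hr hrρ hκ hbb' hb'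
    (fun u hu => hEZ u (hZ hu)) hEY (fun u hu => hEd u (hZ hu))

theorem ne_zero_of_biorthogonal {ι : Type*} [DecidableEq ι] {e : ι → X} {estar : ι → X →L[ℝ] ℝ}
    (h : ∀ i j, estar i (e j) = if i = j then (1 : ℝ) else 0) (k : ι) : e k ≠ 0 := fun hk => by
  simpa [hk] using h k k

end Galerkin

end DualFountain

open DualFountain in
theorem dual_fountain_theorem_general
    {X : Type*} [NormedAddCommGroup X] [NormedSpace ℝ X]
    (e : ℕ → X) (he : ∀ k, e k ≠ 0) (E : X → ℝ) (E' : X → (X →L[ℝ] ℝ))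
    (hE : ∀ u, HasFDerivAt E (E' u) u) (hE'cont : Continuous E') (heven : E.Even)
    (k₀ : ℕ) (r ρ : ℕ → ℝ) (hr : ∀ k ≥ k₀, 0 < r k) (hrρ : ∀ k ≥ k₀, r k < ρ k) (b d : ℕ → ℝ)
    (hB1 : ∀ k ≥ k₀, ∀ u : X,
      u ∈ closure (Submodule.span ℝ (e '' {j | k ≤ j}) : Set X) → ‖u‖ = ρ k → 0 ≤ E u)
    (hb : ∀ k ≥ k₀, IsLUB {y : ℝ | ∃ u : X,
      u ∈ Submodule.span ℝ (e '' {j | j ≤ k}) ∧ ‖u‖ = r k ∧ E u = y} (b k))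
    (hB2 : ∀ k ≥ k₀, b k < 0)
    (hd : ∀ k ≥ k₀, IsGLB {y : ℝ | ∃ u : X,
      u ∈ closure (Submodule.span ℝ (e '' {j | k ≤ j}) : Set X) ∧ ‖u‖ ≤ ρ k ∧ E u = y} (d k))
    (hB3 : Tendsto d atTop (𝓝 0))
    (hB4 : ∀ c : ℝ, d k₀ ≤ c → c < 0 →
      PalaisSmaleStar E E' (fun n => Submodule.span ℝ (e '' {i | i ≤ n})) c) :
    ∃ u : ℕ → X, (∀ k, E' (u k) = 0) ∧ (∀ k, E (u k) < 0) ∧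
      Tendsto (fun k => E (u k)) atTop (𝓝 0) := by
  have hd₀ : d k₀ < 0 := by
    obtain ⟨u, ⟨huY, huZ⟩, hu⟩ := exists_mem_norm_eq_of_ne_bot
      (span_image_inf_span_image_ne_bot (he k₀) (s := {j | j ≤ k₀}) (t := {j | k₀ ≤ j})
        (le_refl k₀) (le_refl k₀)) (hr k₀ le_rfl).le
    calc d k₀ ≤ E u := (hd k₀ le_rfl).1 ⟨u, subset_closure huZ, hu.trans_le (hrρ k₀ le_rfl).le, rfl⟩
      _ ≤ b k₀ := (hb k₀ le_rfl).1 ⟨u, huY, hu, rfl⟩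
      _ < 0 := hB2 k₀ le_rfl
  obtain ⟨k₁, hk₁⟩ := eventually_atTop.1
    ((eventually_ge_atTop k₀).and (hB3.eventually_const_le hd₀))
  have hcrit (k : ℕ) : ∃ u, E' u = 0 ∧ E u ∈ Set.Icc (d (k + k₁)) (b (k + k₁) / 2) := by
    obtain ⟨hk, hdk⟩ := hk₁ (k + k₁) (Nat.le_add_left k₁ k)
    have hbk := hB2 _ hk
    exact exists_critical_of_linking hE hE'cont heven (he _) (hr _ hk) (hrρ _ hk)
      (by linarith) (by linarith) (fun u hu => hB1 _ hk u (subset_closure hu))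
      (fun u hu hur => (hb _ hk).1 ⟨u, hu, hur, rfl⟩)
      (fun u hu huρ => (hd _ hk).1 ⟨u, subset_closure hu, huρ, rfl⟩)
      (fun c hc => hB4 c (hdk.trans hc.1) (by linarith [hc.2]))
  choose u hE'u hEu using hcrit
  have hneg (k : ℕ) : E (u k) < 0 := by linarith [(hEu k).2, hB2 _ (hk₁ (k + k₁) (by simp)).1]
  exact ⟨u, hE'u, hneg, tendsto_of_tendsto_of_tendsto_of_le_of_le
    ((tendsto_add_atTop_iff_nat k₁).2 hB3) tendsto_const_nhds
    (fun k => (hEu k).1) (fun k => (hneg k).le)⟩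

/-- Dual Fountain Theorem: Let `X` be a real reflexive separable Banach space
with a biorthogonal system `(e_j, e_j*)` whose spans are dense in `X` and `X*`, let
`Y_k = span{e_j : j ≤ k}` and `Z_k = closure (span{e_j : j ≥ k})`. Let `E : X → ℝ` be `C¹`
and even. Suppose there is `k₀` such that for each `k ≥ k₀` there are `ρ_k > r_k > 0` with:
`(B₁)` `inf{E u : u ∈ Z_k, ‖u‖ = ρ_k} ≥ 0`;
`(B₂)` `b_k := max{E u : u ∈ Y_k, ‖u‖ = r_k} < 0`;
`(B₃)` `d_k := inf{E u : u ∈ Z_k, ‖u‖ ≤ ρ_k} → 0`;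
`(B₄)` `E` satisfies the `(PS)_c^*` condition w.r.t. `(Y_n)` for every `c ∈ [d_{k₀}, 0)`.
Then `E` has a sequence of critical points whose (negative) critical values converge to `0`. -/
theorem dual_fountain_theorem
    {X : Type*} [NormedAddCommGroup X] [NormedSpace ℝ X] [CompleteSpace X]
    [TopologicalSpace.SeparableSpace X]
    (hreflexive : Function.Surjective (NormedSpace.inclusionInDoubleDual ℝ X))
    (e : ℕ → X) (estar : ℕ → (X →L[ℝ] ℝ))
    (hdense : Dense (Submodule.span ℝ (Set.range e) : Set X))
    (hdense' : Dense (Submodule.span ℝ (Set.range estar) : Set (X →L[ℝ] ℝ)))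
    (hbiorth : ∀ i j, estar i (e j) = if i = j then (1 : ℝ) else 0)
    (E : X → ℝ) (E' : X → (X →L[ℝ] ℝ))
    (hE : ∀ u, HasFDerivAt E (E' u) u) (hE'cont : Continuous E')
    (heven : ∀ u, E (-u) = E u)
    (k₀ : ℕ) (r ρ : ℕ → ℝ) (hr : ∀ k ≥ k₀, 0 < r k) (hrρ : ∀ k ≥ k₀, r k < ρ k)
    (b d : ℕ → ℝ)
    -- (B₁): inf{E u : u ∈ Z_k, ‖u‖ = ρ_k} ≥ 0
    (hB1 : ∀ k ≥ k₀, ∀ u : X,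
      u ∈ closure (Submodule.span ℝ (e '' {j | k ≤ j}) : Set X) → ‖u‖ = ρ k → 0 ≤ E u)
    -- b_k is the maximum of E on {u ∈ Y_k : ‖u‖ = r_k}
    (hb : ∀ k ≥ k₀, IsLUB {y : ℝ | ∃ u : X,
      u ∈ Submodule.span ℝ (e '' {j | j ≤ k}) ∧ ‖u‖ = r k ∧ E u = y} (b k))
    -- (B₂): b_k < 0
    (hB2 : ∀ k ≥ k₀, b k < 0)
    -- d_k is the infimum of E on {u ∈ Z_k : ‖u‖ ≤ ρ_k}
    (hd : ∀ k ≥ k₀, IsGLB {y : ℝ | ∃ u : X,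
      u ∈ closure (Submodule.span ℝ (e '' {j | k ≤ j}) : Set X) ∧ ‖u‖ ≤ ρ k ∧ E u = y} (d k))
    -- (B₃): d_k → 0 as k → +∞
    (hB3 : Tendsto d atTop (𝓝 0))
    -- (B₄): (PS)_c^* condition w.r.t. (Y_n) for every c ∈ [d_{k₀}, 0)
    (hB4 : ∀ c : ℝ, d k₀ ≤ c → c < 0 →
      ∀ (nj : ℕ → ℕ) (u : ℕ → X), Tendsto nj atTop atTop →
        (∀ j, u j ∈ Submodule.span ℝ (e '' {i | i ≤ nj j})) →
        Tendsto (fun j => E (u j)) atTop (𝓝 c) →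
        Tendsto (fun j =>
          ‖(E' (u j)).comp (Submodule.span ℝ (e '' {i | i ≤ nj j})).subtypeL‖)
          atTop (𝓝 0) →
        ∃ (v : X) (σ : ℕ → ℕ), StrictMono σ ∧ Tendsto (u ∘ σ) atTop (𝓝 v) ∧ E' v = 0) :
    ∃ u : ℕ → X, (∀ k, E' (u k) = 0) ∧ (∀ k, E (u k) < 0) ∧
      Tendsto (fun k => E (u k)) atTop (𝓝 0) :=
  dual_fountain_theorem_general e (DualFountain.ne_zero_of_biorthogonal hbiorth) E E' hE hE'cont
    heven k₀ r ρ hr hrρ b d hB1 hb hB2 hd hB3 hB4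
end

section
/- Let κ ≥ 2. For all real numbers x, y, one has (|x|^{κ−2}x − |y|^{κ−2}y)(x − y) ≥ (1/2)^κ |x − y|^κ. -/
/-!
Write `a = ‖x‖`, `b = ‖y‖`, `d = ‖x - y‖`. Polarization turns the pairing of `α • x - β • y` with
`x - y` into `((α + β) * d ^ 2 + (α - β) * (a ^ 2 - b ^ 2)) / 2`. When `α - β` and `a - b` have the
same sign, the quotient of this by `d ^ 2` decreases in `d ≤ a + b`, so the worst case is that of
antipodal vectors, `d = a + b`, where the quotient is `(α * a + β * b) / (a + b)`. For
`α = a ^ (κ - 2)` and `β = b ^ (κ - 2)`, convexity of `t ↦ t ^ (κ - 1)` bounds this below by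
`((a + b) / 2) ^ (κ - 2)`, hence by `(d / 2) ^ (κ - 2)`.
-/

open scoped RealInnerProductSpace

theorem rpow_half_add_mul_add_le {a b s : ℝ} (ha : 0 ≤ a) (hb : 0 ≤ b) (hs : 0 ≤ s) :
    ((a + b) / 2) ^ s * (a + b) ≤ a ^ s * a + b ^ s * b := by
  have midpoint_convex : ((a + b) / 2) ^ (s + 1) ≤ (a ^ (s + 1) + b ^ (s + 1)) / 2 :=
    calc ((a + b) / 2) ^ (s + 1)
        = (1 / 2 * a + 1 / 2 * b) ^ (s + 1) := by ring_nf
      _ ≤ 1 / 2 * a ^ (s + 1) + 1 / 2 * b ^ (s + 1) :=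
          (convexOn_rpow (le_add_of_nonneg_left hs)).2 ha hb one_half_pos.le one_half_pos.le
            (add_halves 1)
      _ = (a ^ (s + 1) + b ^ (s + 1)) / 2 := by ring
  have hs' : s + 1 ≠ 0 := by positivity
  rw [Real.rpow_add_one' (by positivity) hs', Real.rpow_add_one' ha hs',
    Real.rpow_add_one' hb hs'] at midpoint_convex
  linarith

theorem rpow_sub_rpow_mul_sub_nonneg {a b s : ℝ} (ha : 0 ≤ a) (hb : 0 ≤ b) (hs : 0 ≤ s) :
    0 ≤ (a ^ s - b ^ s) * (a - b) :=
  ((Real.monotoneOn_rpow_Ici_of_exponent_nonneg hs).monovaryOn monotoneOn_id).sub_mul_sub_nonneg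
    hb ha

section InnerProductSpace

variable {E : Type*} [NormedAddCommGroup E] [InnerProductSpace ℝ E]

theorem real_inner_smul_sub_smul_sub (α β : ℝ) (x y : E) :
    ⟪α • x - β • y, x - y⟫ =
      ((α + β) * ‖x - y‖ ^ 2 + (α - β) * (‖x‖ ^ 2 - ‖y‖ ^ 2)) / 2 := by
  rw [norm_sub_sq_real]
  simp only [inner_sub_left, inner_sub_right, real_inner_smul_left, real_inner_self_eq_norm_sq,
    real_inner_comm x y]
  ring

theorem mul_norm_sub_sq_le_inner_smul_sub_smul {α β c : ℝ} {x y : E}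
    (hmono : 0 ≤ (α - β) * (‖x‖ - ‖y‖))
    (hc : c * (‖x‖ + ‖y‖) ≤ α * ‖x‖ + β * ‖y‖) :
    c * ‖x - y‖ ^ 2 ≤ ⟪α • x - β • y, x - y⟫ := by
  have hsum : 0 ≤ ‖x‖ + ‖y‖ := by positivity
  have excess_le : (2 * c - (α + β)) * ‖x - y‖ ^ 2 ≤ (α - β) * (‖x‖ ^ 2 - ‖y‖ ^ 2) := by
    rcases le_total (2 * c) (α + β) with hle | hge
    · calc (2 * c - (α + β)) * ‖x - y‖ ^ 2
          ≤ 0 := mul_nonpos_of_nonpos_of_nonneg (sub_nonpos.2 hle) (sq_nonneg _)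
        _ ≤ (α - β) * (‖x‖ - ‖y‖) * (‖x‖ + ‖y‖) := mul_nonneg hmono hsum
        _ = (α - β) * (‖x‖ ^ 2 - ‖y‖ ^ 2) := by ring
    · have hfactor : (2 * c - (α + β)) * (‖x‖ + ‖y‖) ≤ (α - β) * (‖x‖ - ‖y‖) := by linarith
      calc (2 * c - (α + β)) * ‖x - y‖ ^ 2
          ≤ (2 * c - (α + β)) * (‖x‖ + ‖y‖) ^ 2 :=
            mul_le_mul_of_nonneg_left (pow_le_pow_left₀ (norm_nonneg _) (norm_sub_le x y) 2)
              (sub_nonneg.2 hge)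
        _ = (2 * c - (α + β)) * (‖x‖ + ‖y‖) * (‖x‖ + ‖y‖) := by ring
        _ ≤ (α - β) * (‖x‖ - ‖y‖) * (‖x‖ + ‖y‖) := mul_le_mul_of_nonneg_right hfactor hsum
        _ = (α - β) * (‖x‖ ^ 2 - ‖y‖ ^ 2) := by ring
  rw [real_inner_smul_sub_smul_sub]
  linarith

/-- The constant `(1 / 2) ^ (κ - 2)` is optimal: equality holds for `y = -x`. -/
theorem plaplacian_monotonicity_inequality_two_le_general {κ : ℝ} (hκ : 2 ≤ κ) (x y : E) :
    (1 / 2 : ℝ) ^ (κ - 2) * ‖x - y‖ ^ κ ≤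
      ⟪‖x‖ ^ (κ - 2) • x - ‖y‖ ^ (κ - 2) • y, x - y⟫ := by
  have hs : 0 ≤ κ - 2 := sub_nonneg.2 hκ
  have hx := norm_nonneg x
  have hy := norm_nonneg y
  calc (1 / 2 : ℝ) ^ (κ - 2) * ‖x - y‖ ^ κ
      = (1 / 2 : ℝ) ^ (κ - 2) * (‖x - y‖ ^ (κ - 2) * ‖x - y‖ ^ (2 : ℝ)) := by
        rw [← Real.rpow_add_of_nonneg (norm_nonneg _) hs zero_le_two, sub_add_cancel]
    _ = (‖x - y‖ / 2) ^ (κ - 2) * ‖x - y‖ ^ 2 := by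
        rw [← mul_assoc, ← Real.mul_rpow (by norm_num) (norm_nonneg _), Real.rpow_two,
          one_div_mul_eq_div]
    _ ≤ ((‖x‖ + ‖y‖) / 2) ^ (κ - 2) * ‖x - y‖ ^ 2 := by
        gcongr
        exact norm_sub_le x y
    _ ≤ ⟪‖x‖ ^ (κ - 2) • x - ‖y‖ ^ (κ - 2) • y, x - y⟫ :=
        mul_norm_sub_sq_le_inner_smul_sub_smul (rpow_sub_rpow_mul_sub_nonneg hx hy hs)
          (rpow_half_add_mul_add_le hx hy hs)

end InnerProductSpace

/-- For `κ ≥ 2` and all real `x, y`,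
`(|x|^{κ-2}x - |y|^{κ-2}y)(x - y) ≥ (1/2)^κ |x - y|^κ`.
Powers are real powers (`Real.rpow`); `|x| ^ (κ - 2) * x = 0` when `x = 0`. -/
theorem plaplacian_monotonicity_inequality_two_le
    (κ : ℝ) (hκ : 2 ≤ κ) (x y : ℝ) :
    (1 / 2 : ℝ) ^ κ * |x - y| ^ κ ≤
      (|x| ^ (κ - 2) * x - |y| ^ (κ - 2) * y) * (x - y) := by
  calc (1 / 2 : ℝ) ^ κ * |x - y| ^ κ
      ≤ (1 / 2 : ℝ) ^ (κ - 2) * |x - y| ^ κ := by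
        gcongr ?_ * _
        exact Real.rpow_le_rpow_of_exponent_ge (by norm_num) (by norm_num) (by linarith)
    _ ≤ (|x| ^ (κ - 2) * x - |y| ^ (κ - 2) * y) * (x - y) := by
        simpa [mul_comm] using plaplacian_monotonicity_inequality_two_le_general hκ x y
end

section
/- Let M : [0,∞) → ℝ be continuous with M(t) ≥ m₀ for some m₀ > 0 and all t ≥ 0, let 0 < ω < 1, and set M̂(t) = ∫₀ᵗ M(s) ds. Assume M̂(t) ≥ (1−ω) M(t) t for all t > 0. Then the function t ↦ M̂(t)/t^{1/(1−ω)} is nonincreasing on (0,∞); in particular, for every t₀ > 0 and all t ≥ t₀, M̂(t) ≤ (M̂(t₀)/t₀^{1/(1−ω)}) · t^{1/(1−ω)}. -/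
/-!
The derivative of `f t / t ^ p` is `(t f'(t) - p f(t)) / t ^ (p + 1)`, so the quotient decreases as
soon as `t f'(t) ≤ p f(t)`. For `f = M̂`, `f' = M` and `p = 1 / (1 - ω)` this is the hypothesis on
`M`. An almost everywhere inequality is enough when `f` is locally absolutely continuous, as the
primitive of a locally integrable function is.
-/

open MeasureTheory Set

lemma antitoneOn_of_ae_deriv_nonpos {f : ℝ → ℝ} {s : Set ℝ} [hs : s.OrdConnected]
    (hf : ∀ a ∈ s, ∀ b ∈ s, AbsolutelyContinuousOnInterval f a b)
    (hf' : ∀ᵐ t, t ∈ s → deriv f t ≤ 0) : AntitoneOn f s := by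
  intro a ha b hb hab
  have hderiv : ∀ᵐ t, t ∈ Ioc a b → deriv f t ≤ 0 := by
    filter_upwards [hf'] with t ht htab
    exact ht (hs.out ha hb (Ioc_subset_Icc_self htab))
  have hint : ∫ t in a..b, deriv f t ≤ 0 := by
    rw [intervalIntegral.integral_of_le hab]
    exact setIntegral_nonpos_ae measurableSet_Ioc hderiv
  rwa [(hf a ha b hb).integral_deriv_eq_sub, sub_nonpos] at hint

lemma hasDerivAt_div_rpow {f : ℝ → ℝ} {f' t : ℝ} (p : ℝ) (ht : 0 < t)
    (hf : HasDerivAt f f' t) :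
    HasDerivAt (fun x ↦ f x / x ^ p) ((f' * t - p * f t) / t ^ (p + 1)) t := by
  have hpow : t ^ p ≠ 0 := (Real.rpow_pos_of_pos ht p).ne'
  convert! hf.div (Real.hasDerivAt_rpow_const (p := p) (.inl ht.ne')) hpow using 1
  rw [Real.rpow_sub_one ht.ne', Real.rpow_add_one ht.ne']
  field_simp

lemma absolutelyContinuousOnInterval_inv_rpow {a b : ℝ} (p : ℝ) (ha : 0 < a) (hb : 0 < b) :
    AbsolutelyContinuousOnInterval (fun t : ℝ ↦ (t ^ p)⁻¹) a b := by
  refine ContDiffOn.absolutelyContinuousOnInterval fun t ht ↦ ?_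
  have ht₀ : 0 < t := (lt_min ha hb).trans_le ht.1
  exact ((Real.contDiffAt_rpow_const_of_ne ht₀.ne').inv
    (Real.rpow_pos_of_pos ht₀ p).ne').contDiffWithinAt

lemma antitoneOn_div_rpow_of_ae_hasDerivAt {f f' : ℝ → ℝ} {p : ℝ}
    (hf : ∀ a > 0, ∀ b > 0, AbsolutelyContinuousOnInterval f a b)
    (hff' : ∀ᵐ t, 0 < t → HasDerivAt f (f' t) t)
    (hf' : ∀ᵐ t, 0 < t → f' t * t ≤ p * f t) :
    AntitoneOn (fun t ↦ f t / t ^ p) (Ioi 0) := by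
  refine antitoneOn_of_ae_deriv_nonpos (fun a (ha : 0 < a) b (hb : 0 < b) ↦ ?_) ?_
  · simpa only [div_eq_mul_inv] using!
      (hf a ha b hb).mul (absolutelyContinuousOnInterval_inv_rpow p ha hb)
  · filter_upwards [hff', hf'] with t hderiv hle (ht : 0 < t)
    rw [(hasDerivAt_div_rpow p ht (hderiv ht)).deriv]
    exact div_nonpos_of_nonpos_of_nonneg (sub_nonpos.2 (hle ht)) (Real.rpow_nonneg ht.le _)

section Primitive

variable {f : ℝ → ℝ} {a : ℝ}

lemma absolutelyContinuousOnInterval_integral_of_forall_gt {b c : ℝ}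
    (hf : ∀ t > a, IntervalIntegrable f volume a t) (hb : a < b) (hc : a < c) :
    AbsolutelyContinuousOnInterval (fun x ↦ ∫ s in a..x, f s) b c := by
  have hmax := (hf (max b c) (hb.trans_le (le_max_left b c)))
    |>.absolutelyContinuousOnInterval_intervalIntegral left_mem_uIcc
  refine hmax.mono (uIcc_subset_uIcc ?_ ?_)
  · exact mem_uIcc_of_le hb.le (le_max_left b c)
  · exact mem_uIcc_of_le hc.le (le_max_right b c)

lemma ae_hasDerivAt_integral_of_forall_gt (hf : ∀ t > a, IntervalIntegrable f volume a t) :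
    ∀ᵐ t, a < t → HasDerivAt (fun x ↦ ∫ s in a..x, f s) (f t) t := by
  have hderiv (n : ℕ) := (hf (a + (n + 1)) (by linarith)).ae_hasDerivAt_integral
  filter_upwards [ae_all_iff.2 hderiv] with t ht hat
  obtain ⟨n, hn⟩ := exists_nat_ge (t - a)
  exact ht n (mem_uIcc_of_le hat.le (by linarith)) a left_mem_uIcc

end Primitive

theorem primitive_over_power_antitone_general {M : ℝ → ℝ} {p : ℝ}
    (hM : ∀ t > 0, IntervalIntegrable M volume 0 t)
    (hle : ∀ᵐ t, 0 < t → M t * t ≤ p * ∫ s in (0 : ℝ)..t, M s) :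
    AntitoneOn (fun t : ℝ ↦ (∫ s in (0 : ℝ)..t, M s) / t ^ p) (Ioi 0) ∧
      ∀ t₀ > (0 : ℝ), ∀ t ≥ t₀,
        (∫ s in (0 : ℝ)..t, M s) ≤ ((∫ s in (0 : ℝ)..t₀, M s) / t₀ ^ p) * t ^ p := by
  have hanti : AntitoneOn (fun t : ℝ ↦ (∫ s in (0 : ℝ)..t, M s) / t ^ p) (Ioi 0) :=
    antitoneOn_div_rpow_of_ae_hasDerivAt
      (fun _ ha _ hb ↦ absolutelyContinuousOnInterval_integral_of_forall_gt hM ha hb)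
      (ae_hasDerivAt_integral_of_forall_gt hM) hle
  refine ⟨hanti, fun t₀ (ht₀ : 0 < t₀) t htt₀ ↦ ?_⟩
  have ht : 0 < t := ht₀.trans_le htt₀
  exact (div_le_iff₀ (Real.rpow_pos_of_pos ht p)).1 (hanti ht₀ ht htt₀)

/-- Let `M : [0,∞) → ℝ` be continuous with `M(t) ≥ m₀ > 0`, let `0 < ω < 1`
and `M̂(t) = ∫₀ᵗ M(s) ds`. If `M̂(t) ≥ (1-ω) M(t) t` for all `t > 0`, then
`t ↦ M̂(t) / t^{1/(1-ω)}` is nonincreasing on `(0,∞)`; in particular for every `t₀ > 0`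
and all `t ≥ t₀`, `M̂(t) ≤ (M̂(t₀)/t₀^{1/(1-ω)}) t^{1/(1-ω)}`. -/
theorem primitive_over_power_antitone
    (M : ℝ → ℝ) (m₀ ω : ℝ)
    (hMc : ContinuousOn M (Set.Ici 0)) (hm₀ : 0 < m₀)
    (hlow : ∀ t ≥ (0 : ℝ), m₀ ≤ M t)
    (hω₀ : 0 < ω) (hω₁ : ω < 1)
    (hC₁ : ∀ t > (0 : ℝ), (1 - ω) * M t * t ≤ ∫ s in (0 : ℝ)..t, M s) :
    AntitoneOn (fun t : ℝ => (∫ s in (0 : ℝ)..t, M s) / t ^ (1 / (1 - ω))) (Set.Ioi 0) ∧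
      ∀ t₀ > (0 : ℝ), ∀ t ≥ t₀,
        (∫ s in (0 : ℝ)..t, M s) ≤
          ((∫ s in (0 : ℝ)..t₀, M s) / t₀ ^ (1 / (1 - ω))) * t ^ (1 / (1 - ω)) := by
  refine primitive_over_power_antitone_general
    (fun t ht ↦ (hMc.mono (uIcc_of_le ht.le ▸ Icc_subset_Ici_self)).intervalIntegrable)
    (.of_forall fun t ht ↦ ?_)
  rw [one_div_mul_eq_div, le_div_iff₀' (sub_pos.2 hω₁), ← mul_assoc]
  exact hC₁ t ht
end
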